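/- arXiv:1406.1887 — 3 statements merged into one kernel-verified Lean document; each statement's English description precedes it below -/
import Mathlib

section
/- There exists n₀ such that for every n ≥ n₀ and every integer E with 1 ≤ E ≤ n/100, every family F ⊆ 2^[n] with |F| = Σ(n,2) + E contains at least E·f(n) copies of the butterfly. -/
def IsButterfly {n : ℕ} (S : Finset (Finset (Fin n))) : Prop :=
  ∃ A B C D : Finset (Fin n), S = {A, B, C, D} ∧ A ≠ B ∧ C ≠ D ∧
    A ⊂ C ∧ A ⊂ D ∧ B ⊂ C ∧ B ⊂ D

open Classical in
noncomputable def numButterflies {n : ℕ} (F : Finset (Finset (Fin n))) : ℕ :=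
  (F.powerset.filter (fun S => IsButterfly S)).card

def Sigma2 (n : ℕ) : ℕ := n.choose (n / 2) + n.choose (n / 2 + 1)

/-- `f(n) = (⌈n/2⌉+1)·C(⌈n/2⌉,2)`. -/
def fB (n : ℕ) : ℕ := ((n + 1) / 2 + 1) * Nat.choose ((n + 1) / 2) 2

/-!
Let `p B` be the probability that a random maximal chain below `B` meets `F` strictly below `B`, and
`q B` the corresponding probability above `B`. The lowest and the highest member of `F` on a random
maximal chain of the cube give the two LYM inequalities `∑ (1 - p B) / n.choose #B ≤ 1` and
`∑ (1 - q B) / n.choose #B ≤ 1`. With `ℓ = ⌊(n - 1) / 2⌋` they show that the excesses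
`1 - n.choose ℓ / n.choose #B * (2 - p B - q B)` of the members add up to at least
`#F - 2 * n.choose ℓ`.

A butterfly has at most two members lying strictly between two others, and just one if the two
members below or the two members above such a middle are adjacent to it in the cube. Hence twice the
number of butterflies is at least the sum of the weights of the members, where the weight of `B` is
cubic in the numbers of members below and above `B`. If all members have size between `2`
and `n - 2`, then `p B` and `q B` are bounded by these numbers, so that `fB n` times the excess of
`B` is at most half its weight. On levels `ℓ` and `ℓ - 1` this holds only after charges have been
moved along cover relations from levels `ℓ - 1` and `ℓ - 2`, far from the middle the excesses have
nonpositive sum by the LYM inequality, and the middle level of an even cube accounts for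
`Sigma2 n - 2 * n.choose ℓ`.

If some member `C` misses at most one point `x`, then a member of weight zero other than `C` either
has at most one member below it or is a maximal member containing `x`. There are too few of those,
so the total weight, and with it the number of butterflies, is far above `E * fB n`.
-/

open Finset
open scoped BigOperators FinsetFamily

namespace ButterflySupersat

section RandomChains

variable {α : Type*} [DecidableEq α] {F G : Finset (Finset α)} {B V : Finset α}

/-- The probability that a uniformly random maximal chain from `∅` to `B` meets `F` strictly below
`B`. It is computed by deleting a uniformly random element of `B`; the average over `B = ∅` is `0`,
as it should be. -/
noncomputable def hitBelow (F : Finset (Finset α)) (B : Finset α) : ℝ :=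
  𝔼 x ∈ B.attach, if B.erase x ∈ F then 1 else hitBelow F (B.erase x)
termination_by #B
decreasing_by exact card_erase_lt_of_mem x.2

theorem hitBelow_eq_expect (F : Finset (Finset α)) (B : Finset α) :
    hitBelow F B = 𝔼 x ∈ B, if B.erase x ∈ F then 1 else hitBelow F (B.erase x) := by
  rw [hitBelow, expect_eq_sum_div_card, expect_eq_sum_div_card, card_attach,
    sum_attach B fun x ↦ if B.erase x ∈ F then (1 : ℝ) else hitBelow F (B.erase x)]

theorem hitBelow_nonneg (F : Finset (Finset α)) (B : Finset α) : 0 ≤ hitBelow F B := by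
  induction B using Finset.strongInduction with
  | H B ih =>
    rw [hitBelow_eq_expect]
    refine expect_nonneg fun x hx ↦ ?_
    split_ifs
    exacts [zero_le_one, ih _ (erase_ssubset hx)]

theorem hitBelow_le_one (F : Finset (Finset α)) (B : Finset α) : hitBelow F B ≤ 1 := by
  induction B using Finset.strongInduction with
  | H B ih =>
    rw [hitBelow_eq_expect]
    rcases B.eq_empty_or_nonempty with rfl | hB
    · simp
    refine expect_le hB fun x hx ↦ ?_
    split_ifs
    exacts [le_rfl, ih _ (erase_ssubset hx)]

theorem hitBelow_mono (h : ∀ A ⊂ B, A ∈ F → A ∈ G) : hitBelow F B ≤ hitBelow G B := by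
  induction B using Finset.strongInduction with
  | H B ih =>
    rw [hitBelow_eq_expect F, hitBelow_eq_expect G]
    refine expect_le_expect fun x hx ↦ ?_
    have hlt := erase_ssubset hx
    by_cases hF : B.erase x ∈ F
    · rw [if_pos hF, if_pos (h _ hlt hF)]
    · rw [if_neg hF]
      split_ifs
      exacts [hitBelow_le_one F _, ih _ hlt fun A hA ↦ h A (hA.trans hlt)]

theorem hitBelow_congr (h : ∀ A ⊂ B, A ∈ F ↔ A ∈ G) : hitBelow F B = hitBelow G B :=
  (hitBelow_mono fun A hA ↦ (h A hA).1).antisymm (hitBelow_mono fun A hA ↦ (h A hA).2)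

theorem sum_filter_subset_eq (F : Finset (Finset α)) (V : Finset α) (w : Finset α → ℝ) :
    ∑ B ∈ F with B ⊆ V, w B = (∑ B ∈ F with B ⊂ V, w B) + if V ∈ F then w V else 0 := by
  have hsplit : {B ∈ F | B ⊆ V} = {B ∈ F | B ⊂ V} ∪ {B ∈ F | B = V} := by
    ext B
    simp only [mem_filter, mem_union, subset_iff_ssubset_or_eq]
    tauto
  have hdisj : Disjoint {B ∈ F | B ⊂ V} {B ∈ F | B = V} :=
    disjoint_filter.2 fun B _ hB ↦ hB.ne
  rw [hsplit, sum_union hdisj, filter_eq', apply_ite (fun s ↦ ∑ B ∈ s, w B), sum_singleton,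
    sum_empty]

theorem card_sdiff_div_choose {A V : Finset α} (h : A ⊂ V) :
    (#(V \ A) : ℝ) / ((#V - 1).choose #A) / #V = 1 / (#V).choose #A := by
  obtain ⟨k, hk⟩ := Nat.exists_eq_add_of_lt (card_lt_card h).pos
  rw [Nat.zero_add] at hk
  have hlt : #A < k + 1 := hk ▸ card_lt_card h
  have hrec : (k.choose #A : ℝ) * (k + 1) = (k + 1).choose #A * (k + 1 - #A : ℕ) := by
    exact_mod_cast Nat.choose_mul_succ_eq k #A
  have hpos : (0 : ℝ) < k.choose #A := by exact_mod_cast Nat.choose_pos (by omega)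
  have hpos' : (0 : ℝ) < (k + 1).choose #A := by exact_mod_cast Nat.choose_pos hlt.le
  rw [card_sdiff_of_subset h.subset, hk, Nat.add_sub_cancel]
  push_cast
  field_simp
  linarith

/-- The lowest member of `F` on a random maximal chain below `V` is `B` with probability
`(1 - hitBelow F B) / (#V).choose #B`. -/
theorem hitBelow_eq_sum (F : Finset (Finset α)) (V : Finset α) :
    hitBelow F V = ∑ B ∈ F with B ⊂ V, (1 - hitBelow F B) / (#V).choose #B := by
  induction V using Finset.strongInduction with
  | H V ih =>
    have hstep : ∀ x ∈ V, (if V.erase x ∈ F then 1 else hitBelow F (V.erase x)) =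
        ∑ B ∈ F with B ⊂ V, if x ∉ B then (1 - hitBelow F B) / (#V - 1).choose #B else 0 := by
      intro x hx
      have hfilter : {B ∈ F | B ⊂ V ∧ x ∉ B} = {B ∈ F | B ⊆ V.erase x} := by
        refine filter_congr fun B _ ↦ ?_
        rw [subset_erase]
        exact ⟨fun h ↦ ⟨h.1.subset, h.2⟩,
          fun h ↦ ⟨h.1.ssubset_of_ne (by rintro rfl; exact h.2 hx), h.2⟩⟩
      rw [← sum_filter, filter_filter, hfilter, ← card_erase_of_mem hx, sum_filter_subset_eq,
        ← ih _ (erase_ssubset hx), Nat.choose_self]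
      split_ifs <;> simp
    rw [hitBelow_eq_expect, expect_congr rfl hstep, expect_eq_sum_div_card, sum_comm, sum_div]
    refine sum_congr rfl fun B hB ↦ ?_
    rw [← sum_filter, filter_notMem_eq_sdiff, sum_const, nsmul_eq_mul, mul_div_assoc',
      mul_comm, mul_div_assoc, mul_div_assoc, card_sdiff_div_choose (mem_filter.1 hB).2,
      mul_one_div]

theorem hitBelow_le_sum (F : Finset (Finset α)) (V : Finset α) :
    hitBelow F V ≤ ∑ B ∈ F with B ⊂ V, 1 / ((#V).choose #B : ℝ) := by
  rw [hitBelow_eq_sum]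
  gcongr with B
  linarith [hitBelow_nonneg F B]

theorem sum_one_sub_hitBelow_div_choose_le_one (F : Finset (Finset α)) (V : Finset α) :
    ∑ B ∈ F with B ⊆ V, (1 - hitBelow F B) / (#V).choose #B ≤ 1 := by
  rw [sum_filter_subset_eq, ← hitBelow_eq_sum, Nat.choose_self]
  split_ifs
  · simp
  · simpa using hitBelow_le_one F V

end RandomChains

section Neighbours

variable {α : Type*} [DecidableEq α] {F G : Finset (Finset α)} {A B : Finset α}

/-- The members of `F` strictly below `B`. -/
def below (F : Finset (Finset α)) (B : Finset α) : Finset (Finset α) := {A ∈ F | A ⊂ B}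

/-- The members of `F` covered by `B`. -/
def lowerCovers (F : Finset (Finset α)) (B : Finset α) : Finset (Finset α) :=
  {A ∈ F | A ⊂ B ∧ #A + 1 = #B}

/-- The members of `F` strictly above `B`. -/
def above (F : Finset (Finset α)) (B : Finset α) : Finset (Finset α) := {A ∈ F | B ⊂ A}

/-- The members of `F` covering `B`. -/
def upperCovers (F : Finset (Finset α)) (B : Finset α) : Finset (Finset α) :=
  {A ∈ F | B ⊂ A ∧ #B + 1 = #A}

theorem mem_below : A ∈ below F B ↔ A ∈ F ∧ A ⊂ B := mem_filter

theorem mem_lowerCovers : A ∈ lowerCovers F B ↔ A ∈ F ∧ A ⊂ B ∧ #A + 1 = #B := mem_filter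

theorem mem_above : A ∈ above F B ↔ A ∈ F ∧ B ⊂ A := mem_filter

theorem mem_upperCovers : A ∈ upperCovers F B ↔ A ∈ F ∧ B ⊂ A ∧ #B + 1 = #A := mem_filter

theorem lowerCovers_subset_below (F : Finset (Finset α)) (B : Finset α) :
    lowerCovers F B ⊆ below F B :=
  fun _ hA ↦ mem_below.2 ⟨(mem_lowerCovers.1 hA).1, (mem_lowerCovers.1 hA).2.1⟩

theorem upperCovers_subset_above (F : Finset (Finset α)) (B : Finset α) :
    upperCovers F B ⊆ above F B :=
  fun _ hA ↦ mem_above.2 ⟨(mem_upperCovers.1 hA).1, (mem_upperCovers.1 hA).2.1⟩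

/-- The pairs in a `D`-element family plus those in a distinguished `D₁`-element subfamily. -/
def pairCount (D D₁ : ℕ) : ℕ := D.choose 2 + D₁.choose 2

/-- The weight of a set with `D` members of a family below it, `D₁` of them covered by it, and `U`
members above it, `U₁` of them covering it: the number of butterflies in which the set lies strictly
between two others, counted twice when the other two are both covered by it or both cover it. -/
def weight (D D₁ U U₁ : ℕ) : ℕ := U * pairCount D D₁ + D * pairCount U U₁

theorem weight_swap (D D₁ U U₁ : ℕ) : weight U U₁ D D₁ = weight D D₁ U U₁ :=
  add_comm _ _

/-- The weight of `B` in the family `F`. -/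
def centerWeight (F : Finset (Finset α)) (B : Finset α) : ℕ :=
  weight #(below F B) #(lowerCovers F B) #(above F B) #(upperCovers F B)

end Neighbours

section Complements

variable {α : Type*} [DecidableEq α] [Fintype α] (F : Finset (Finset α)) (B : Finset α)

theorem ssubset_compl_comm {A B : Finset α} : A ⊂ Bᶜ ↔ B ⊂ Aᶜ := by
  rw [← compl_lt_compl_iff_lt, compl_compl]

theorem below_compls_compl : below Fᶜˢ Bᶜ = (above F B)ᶜˢ := by
  ext A
  rw [mem_below, mem_compls, mem_compls, mem_above, ssubset_compl_comm]

theorem above_compls_compl : above Fᶜˢ Bᶜ = (below F B)ᶜˢ := by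
  rw [← compls_compls (above Fᶜˢ Bᶜ), ← below_compls_compl, compls_compls, compl_compl]

theorem lowerCovers_compls_compl : lowerCovers Fᶜˢ Bᶜ = (upperCovers F B)ᶜˢ := by
  ext A
  have hcard : #A + 1 = #Bᶜ ↔ #B + 1 = #Aᶜ := by
    have := card_compl_add_card A
    have := card_compl_add_card B
    omega
  rw [mem_lowerCovers, mem_compls, mem_compls, mem_upperCovers, ssubset_compl_comm, hcard]

theorem upperCovers_compls_compl : upperCovers Fᶜˢ Bᶜ = (lowerCovers F B)ᶜˢ := by
  rw [← compls_compls (upperCovers Fᶜˢ Bᶜ), ← lowerCovers_compls_compl, compls_compls, compl_compl]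

theorem centerWeight_compls_compl : centerWeight Fᶜˢ Bᶜ = centerWeight F B := by
  rw [centerWeight, below_compls_compl, lowerCovers_compls_compl, above_compls_compl,
    upperCovers_compls_compl]
  simp only [card_compls]
  exact weight_swap _ _ _ _

theorem sum_compls {M : Type*} [AddCommMonoid M] (g : Finset α → M) :
    ∑ B ∈ Fᶜˢ, g B = ∑ B ∈ F, g Bᶜ :=
  sum_map _ _ _

/-- The probability that a uniformly random maximal chain from `B` to the whole ground set meets
`F` strictly above `B`. -/
noncomputable def hitAbove : ℝ := hitBelow Fᶜˢ Bᶜ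

theorem hitAbove_compls_compl : hitAbove Fᶜˢ Bᶜ = hitBelow F B := by
  rw [hitAbove, compls_compls, compl_compl]

theorem sum_one_sub_hitBelow_le_one :
    ∑ B ∈ F, (1 - hitBelow F B) / (Fintype.card α).choose #B ≤ 1 := by
  simpa using sum_one_sub_hitBelow_div_choose_le_one F univ

theorem sum_one_sub_hitAbove_le_one :
    ∑ B ∈ F, (1 - hitAbove F B) / (Fintype.card α).choose #B ≤ 1 := by
  have h := sum_one_sub_hitBelow_le_one Fᶜˢ
  rw [sum_compls] at h
  simpa only [hitAbove, card_compl, Nat.choose_symm (card_le_univ _)] using h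

end Complements

section Counting

variable {n : ℕ} {F S s t : Finset (Finset (Fin n))} {B : Finset (Fin n)}

/-- The members of `S` lying strictly between two other members. -/
def middles (S : Finset (Finset (Fin n))) : Finset (Finset (Fin n)) :=
  {B ∈ S | (∃ A ∈ S, A ⊂ B) ∧ ∃ C ∈ S, B ⊂ C}

open Classical in
/-- The butterflies in `F`. -/
noncomputable def butterflies (F : Finset (Finset (Fin n))) : Finset (Finset (Finset (Fin n))) :=
  {S ∈ F.powerset | IsButterfly S}

theorem mem_middles : B ∈ middles S ↔ B ∈ S ∧ (∃ A ∈ S, A ⊂ B) ∧ ∃ C ∈ S, B ⊂ C := mem_filter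

theorem mem_butterflies : S ∈ butterflies F ↔ S ⊆ F ∧ IsButterfly S := by
  simp [butterflies]

theorem card_middles_add_two_le (hS : (middles S).Nonempty) : #(middles S) + 2 ≤ #S := by
  obtain ⟨B, hB⟩ := hS
  obtain ⟨hBS, ⟨A, hA, hAB⟩, -⟩ := mem_middles.1 hB
  obtain ⟨A₀, hA₀, hmin⟩ := exists_min_image S card ⟨B, hBS⟩
  obtain ⟨C₀, hC₀, hmax⟩ := exists_max_image S card ⟨B, hBS⟩
  have hlt : #A₀ < #C₀ := (hmin A hA).trans_lt ((card_lt_card hAB).trans_le (hmax B hBS))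
  have hsub : middles S ⊆ (S.erase A₀).erase C₀ := by
    intro M hM
    obtain ⟨hMS, ⟨L, hL, hLM⟩, ⟨U, hU, hMU⟩⟩ := mem_middles.1 hM
    refine mem_erase.2 ⟨?_, mem_erase.2 ⟨?_, hMS⟩⟩
    · rintro rfl
      exact (hmax U hU).not_gt (card_lt_card hMU)
    · rintro rfl
      exact (hmin L hL).not_gt (card_lt_card hLM)
  have hC₀' : C₀ ∈ S.erase A₀ := mem_erase.2 ⟨fun h ↦ hlt.ne (h ▸ rfl), hC₀⟩
  have h := card_le_card hsub
  have h₁ := card_erase_add_one hA₀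
  have h₂ := card_erase_add_one hC₀'
  omega

theorem card_middles_le_two (hS : IsButterfly S) : #(middles S) ≤ 2 := by
  obtain ⟨A, B, C, D, rfl, -⟩ := hS
  rcases (middles {A, B, C, D}).eq_empty_or_nonempty with h | h
  · simp [h]
  · have := card_middles_add_two_le h
    have := card_le_four (a := A) (b := B) (c := C) (d := D)
    omega

/-- The ways to complete a set to a butterfly by a pair from `D'` below and one member of `U` above
it, or by one member of `D` below and a pair from `U'` above it. -/
def wings (D D' U U' : Finset (Finset (Fin n))) :
    Finset (Finset (Finset (Fin n)) × Finset (Finset (Fin n))) :=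
  D'.powersetCard 2 ×ˢ U.powersetCard 1 ∪ D.powersetCard 1 ×ˢ U'.powersetCard 2

theorem card_wings (D D' U U' : Finset (Finset (Fin n))) :
    #(wings D D' U U') = #U * (#D').choose 2 + #D * (#U').choose 2 := by
  rw [wings, card_union_of_disjoint]
  · simp [card_powersetCard, mul_comm]
  · refine disjoint_left.2 fun ⟨s, t⟩ h₁ h₂ ↦ ?_
    simp only [mem_product, mem_powersetCard] at h₁ h₂
    omega

theorem filter_ssubset_insert_union (hs : ∀ A ∈ s, A ⊂ B) (ht : ∀ C ∈ t, B ⊂ C) :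
    {A ∈ insert B (s ∪ t) | A ⊂ B} = s := by
  ext A
  simp only [mem_filter, mem_insert, mem_union]
  constructor
  · rintro ⟨rfl | hA | hA, hAB⟩
    exacts [absurd hAB (ssubset_irrefl _), hA, absurd (hAB.trans (ht A hA)) (ssubset_irrefl _)]
  · exact fun hA ↦ ⟨.inr (.inl hA), hs A hA⟩

theorem filter_ssuperset_insert_union (hs : ∀ A ∈ s, A ⊂ B) (ht : ∀ C ∈ t, B ⊂ C) :
    {C ∈ insert B (s ∪ t) | B ⊂ C} = t := by
  ext C
  simp only [mem_filter, mem_insert, mem_union]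
  constructor
  · rintro ⟨rfl | hC | hC, hBC⟩
    exacts [absurd hBC (ssubset_irrefl _), absurd (hBC.trans (hs C hC)) (ssubset_irrefl _), hC]
  · exact fun hC ↦ ⟨.inr (.inr hC), ht C hC⟩

theorem wings_mono {D D' U U' : Finset (Finset (Fin n))} (hD : D' ⊆ D) (hU : U' ⊆ U) :
    wings D D' U U' ⊆ wings D D U U :=
  union_subset_union (product_subset_product_left (powersetCard_mono hD))
    (product_subset_product_right (powersetCard_mono hU))

theorem wings_subset {D U : Finset (Finset (Fin n))} (h : (s, t) ∈ wings D D U U) :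
    s ⊆ D ∧ t ⊆ U := by
  simp only [wings, mem_union, mem_product, mem_powersetCard] at h
  tauto

theorem ssubset_of_wings (h : (s, t) ∈ wings (below F B) (below F B) (above F B) (above F B)) :
    (∀ A ∈ s, A ⊂ B) ∧ ∀ C ∈ t, B ⊂ C :=
  ⟨fun _ hA ↦ (mem_below.1 ((wings_subset h).1 hA)).2,
    fun _ hC ↦ (mem_above.1 ((wings_subset h).2 hC)).2⟩

theorem card_wings_le {D' U' : Finset (Finset (Fin n))} {𝒮 : Finset (Finset (Finset (Fin n)))}
    (hD : D' ⊆ below F B) (hU : U' ⊆ above F B)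
    (h𝒮 : ∀ s t, (s, t) ∈ wings (below F B) D' (above F B) U' → insert B (s ∪ t) ∈ 𝒮) :
    #(above F B) * (#D').choose 2 + #(below F B) * (#U').choose 2 ≤ #𝒮 := by
  rw [← card_wings]
  refine card_le_card_of_injOn (fun w ↦ insert B (w.1 ∪ w.2)) (fun w hw ↦ h𝒮 w.1 w.2 hw) ?_
  rintro ⟨s, t⟩ hw ⟨s', t'⟩ hw' heq
  obtain ⟨hs, ht⟩ := ssubset_of_wings (wings_mono hD hU hw)
  obtain ⟨hs', ht'⟩ := ssubset_of_wings (wings_mono hD hU hw')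
  refine Prod.ext ?_ ?_
  · simpa only [filter_ssubset_insert_union hs ht, filter_ssubset_insert_union hs' ht'] using
      congrArg (filter (· ⊂ B)) heq
  · simpa only [filter_ssuperset_insert_union hs ht, filter_ssuperset_insert_union hs' ht'] using
      congrArg (filter (B ⊂ ·)) heq

theorem isButterfly_insert_wings
    (h : (s, t) ∈ wings (below F B) (below F B) (above F B) (above F B)) :
    IsButterfly (insert B (s ∪ t)) := by
  obtain ⟨hs, ht⟩ := ssubset_of_wings h
  simp only [wings, mem_union, mem_product, mem_powersetCard] at h
  rcases h with ⟨⟨-, hs₂⟩, -, ht₁⟩ | ⟨⟨-, hs₁⟩, -, ht₂⟩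
  · obtain ⟨A, A', hne, rfl⟩ := card_eq_two.1 hs₂
    obtain ⟨C, rfl⟩ := card_eq_one.1 ht₁
    simp only [mem_insert, mem_singleton, forall_eq_or_imp, forall_eq] at hs ht
    refine ⟨A, A', B, C, ?_, hne, ht.ne, hs.1, hs.1.trans ht, hs.2, hs.2.trans ht⟩
    ext; simp only [mem_insert, mem_union, mem_singleton]; tauto
  · obtain ⟨A, rfl⟩ := card_eq_one.1 hs₁
    obtain ⟨C, C', hne, rfl⟩ := card_eq_two.1 ht₂
    simp only [mem_insert, mem_singleton, forall_eq_or_imp, forall_eq] at hs ht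
    refine ⟨A, B, C, C', ?_, hs.ne, hne, hs.trans ht.1, hs.trans ht.2, ht.1, ht.2⟩
    ext; simp only [mem_insert, mem_union, mem_singleton]; tauto

theorem insert_wings_mem_butterflies (hB : B ∈ F)
    (h : (s, t) ∈ wings (below F B) (below F B) (above F B) (above F B)) :
    insert B (s ∪ t) ∈ butterflies F :=
  mem_butterflies.2 ⟨insert_subset hB (union_subset ((wings_subset h).1.trans (filter_subset _ _))
    ((wings_subset h).2.trans (filter_subset _ _))), isButterfly_insert_wings h⟩

theorem mem_middles_insert_wings
    (h : (s, t) ∈ wings (below F B) (below F B) (above F B) (above F B)) :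
    B ∈ middles (insert B (s ∪ t)) := by
  obtain ⟨hs, ht⟩ := ssubset_of_wings h
  simp only [wings, mem_union, mem_product, mem_powersetCard] at h
  obtain ⟨A, hA⟩ : s.Nonempty := card_pos.1 (by omega)
  obtain ⟨C, hC⟩ : t.Nonempty := card_pos.1 (by omega)
  exact mem_middles.2 ⟨mem_insert_self _ _, ⟨A, by simp [hA], hs A hA⟩, ⟨C, by simp [hC], ht C hC⟩⟩

theorem isAntichain_of_card_eq_one (hs : #s = 1) : IsAntichain (· ⊆ ·) (s : Set (Finset (Fin n))) :=
  Set.Subsingleton.isAntichain (fun A hA A' hA' ↦ card_le_one.1 hs.le A hA A' hA') _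

theorem isAntichain_of_wings_covers
    (h : (s, t) ∈ wings (below F B) (lowerCovers F B) (above F B) (upperCovers F B)) :
    IsAntichain (· ⊆ ·) (s : Set (Finset (Fin n))) ∧
      IsAntichain (· ⊆ ·) (t : Set (Finset (Fin n))) := by
  simp only [wings, mem_union, mem_product, mem_powersetCard] at h
  rcases h with ⟨⟨hs, -⟩, -, ht⟩ | ⟨⟨-, hs⟩, ht, -⟩
  · refine ⟨Set.Sized.isAntichain (r := #B - 1) fun A hA ↦ ?_, isAntichain_of_card_eq_one ht⟩
    have := (mem_lowerCovers.1 (hs hA)).2.2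
    omega
  · exact ⟨isAntichain_of_card_eq_one hs,
      Set.Sized.isAntichain fun C hC ↦ (mem_upperCovers.1 (ht hC)).2.2.symm⟩

theorem middles_insert_wings_covers
    (h : (s, t) ∈ wings (below F B) (lowerCovers F B) (above F B) (upperCovers F B)) :
    middles (insert B (s ∪ t)) = {B} := by
  have hw := wings_mono (lowerCovers_subset_below F B) (upperCovers_subset_above F B) h
  obtain ⟨hs, ht⟩ := ssubset_of_wings hw
  obtain ⟨hs_anti, ht_anti⟩ := isAntichain_of_wings_covers h
  refine eq_singleton_iff_unique_mem.2 ⟨mem_middles_insert_wings hw, fun M hM ↦ ?_⟩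
  obtain ⟨hMS, ⟨A, hA, hAM⟩, ⟨C, hC, hMC⟩⟩ := mem_middles.1 hM
  simp only [mem_insert, mem_union] at hMS hA hC
  rcases hMS with rfl | hMs | hMt
  · rfl
  · have hAB := hAM.trans (hs M hMs)
    rcases hA with rfl | hAs | hAt
    exacts [absurd hAB (ssubset_irrefl _), absurd hAM.subset (hs_anti hAs hMs hAM.ne),
      absurd hAB (ht A hAt).asymm]
  · have hBC := (ht M hMt).trans hMC
    rcases hC with rfl | hCs | hCt
    exacts [absurd hBC (ssubset_irrefl _), absurd hBC (hs C hCs).asymm,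
      absurd hMC.subset (ht_anti hMt hCt hMC.ne)]

theorem centerWeight_le (hB : B ∈ F) :
    centerWeight F B ≤
      #{S ∈ butterflies F | B ∈ middles S} + #{S ∈ butterflies F | middles S = {B}} := by
  have hcovers {s t} (h : (s, t) ∈ wings (below F B) (lowerCovers F B) (above F B)
      (upperCovers F B)) :=
    wings_mono (lowerCovers_subset_below F B) (upperCovers_subset_above F B) h
  have hall := card_wings_le (F := F) (B := B) (𝒮 := {S ∈ butterflies F | B ∈ middles S})
    subset_rfl subset_rfl fun s t h ↦
      mem_filter.2 ⟨insert_wings_mem_butterflies hB h, mem_middles_insert_wings h⟩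
  have hcov := card_wings_le (𝒮 := {S ∈ butterflies F | middles S = {B}})
    (lowerCovers_subset_below F B) (upperCovers_subset_above F B) fun s t h ↦
      mem_filter.2 ⟨insert_wings_mem_butterflies hB (hcovers h), middles_insert_wings_covers h⟩
  unfold centerWeight weight pairCount
  linarith

theorem card_middles_add_card_filter_le_two (hS : IsButterfly S) :
    #{B ∈ F | B ∈ middles S} + #{B ∈ F | middles S = {B}} ≤ 2 := by
  have hmid : #{B ∈ F | B ∈ middles S} ≤ #(middles S) :=
    card_le_card fun B hB ↦ (mem_filter.1 hB).2
  have htwo := card_middles_le_two hS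
  rcases {B ∈ F | middles S = {B}}.eq_empty_or_nonempty with h | ⟨B, hB⟩
  · rw [h, card_empty]
    omega
  · have hone : {B ∈ F | middles S = {B}} ⊆ middles S := fun M hM ↦ by
      simp [(mem_filter.1 hM).2]
    have hcard := card_le_card hone
    have hmid_one : #(middles S) = 1 := by rw [(mem_filter.1 hB).2, card_singleton]
    omega

theorem sum_centerWeight_le (F : Finset (Finset (Fin n))) :
    ∑ B ∈ F, centerWeight F B ≤ 2 * numButterflies F :=
  calc ∑ B ∈ F, centerWeight F B
      ≤ ∑ B ∈ F, (#{S ∈ butterflies F | B ∈ middles S} +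
          #{S ∈ butterflies F | middles S = {B}}) := sum_le_sum fun _ hB ↦ centerWeight_le hB
    _ = ∑ S ∈ butterflies F, (#{B ∈ F | B ∈ middles S} + #{B ∈ F | middles S = {B}}) := by
        rw [sum_add_distrib, sum_add_distrib]
        exact congrArg₂ _ (sum_card_bipartiteAbove_eq_sum_card_bipartiteBelow _)
          (sum_card_bipartiteAbove_eq_sum_card_bipartiteBelow _)
    _ ≤ ∑ S ∈ butterflies F, 2 :=
        sum_le_sum fun S hS ↦ card_middles_add_card_filter_le_two (mem_butterflies.1 hS).2
    _ = 2 * numButterflies F := by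
        rw [sum_const, smul_eq_mul, mul_comm]
        rfl

end Counting

section LocalInequalities

variable {p q d u c f w x y γ : ℝ} {D D₁ U U₁ : ℕ}

theorem cast_pairCount (D D₁ : ℕ) :
    (pairCount D D₁ : ℝ) = ((D : ℝ) * (D - 1) + (D₁ : ℝ) * (D₁ - 1)) / 2 := by
  simp only [pairCount, Nat.cast_add, Nat.cast_choose_two]
  ring

theorem cast_weight (D D₁ U U₁ : ℕ) :
    (weight D D₁ U U₁ : ℝ) = U * pairCount D D₁ + D * pairCount U U₁ := by
  simp [weight]

theorem mul_sub_one_le_pairCount (hx₀ : 0 ≤ x) (hx : x ≤ ((D : ℝ) + D₁) / 2) :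
    x * (x - 1) ≤ pairCount D D₁ := by
  rcases le_total x 1 with hx₁ | hx₁
  · have : (0 : ℝ) ≤ pairCount D D₁ := by positivity
    nlinarith
  · rw [cast_pairCount]
    nlinarith [sq_nonneg ((D : ℝ) - D₁),
      mul_nonneg (sub_nonneg.2 hx) (by linarith : (0 : ℝ) ≤ ((D : ℝ) + D₁) / 2 + x - 1)]

theorem mul_mul_add_sub_two_le_weight (hx₀ : 0 ≤ x) (hy₀ : 0 ≤ y) (hxD : x ≤ D)
    (hx : x * (x - 1) ≤ pairCount D D₁) (hyU : y ≤ U) (hy : y * (y - 1) ≤ pairCount U U₁) :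
    x * y * (x + y - 2) ≤ weight D D₁ U U₁ := by
  rw [cast_weight]
  calc x * y * (x + y - 2) = y * (x * (x - 1)) + x * (y * (y - 1)) := by ring
    _ ≤ y * pairCount D D₁ + x * pairCount U U₁ := by gcongr
    _ ≤ U * pairCount D D₁ + D * pairCount U U₁ := by gcongr

/-- `p` is a possible probability of meeting a family on a random chain below a `d`-element set that
has `D` members of the family strictly below it, `D₁` of them covered by it: a cover is met with
probability `1 / d`, and any other member of size at least two with probability at most
`1 / d.choose 2`. -/
structure HitBound (p d : ℝ) (D D₁ : ℕ) : Prop where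
  nonneg : 0 ≤ p
  le_one : p ≤ 1
  covers_le : D₁ ≤ D
  mul_le : p * d ≤ D₁ + 2 / (d - 1) * ((D : ℝ) - D₁)

theorem HitBound.cast_covers_le (hp : HitBound p d D D₁) : (D₁ : ℝ) ≤ D := by
  exact_mod_cast hp.covers_le

theorem HitBound.mul_le_average (hp : HitBound p d D D₁) (hd : 5 ≤ d) :
    p * d ≤ ((D : ℝ) + D₁) / 2 := by
  have hhalf : 2 / (d - 1) ≤ 1 / 2 := by
    rw [div_le_div_iff₀ (by linarith) (by norm_num)]
    linarith
  nlinarith [hp.mul_le, hp.cast_covers_le]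

theorem HitBound.mul_le_card (hp : HitBound p d D D₁) (hd : 5 ≤ d) : p * d ≤ D := by
  linarith [hp.mul_le_average hd, hp.cast_covers_le]

theorem HitBound.zero_le_mul (hp : HitBound p d D D₁) (hd : 5 ≤ d) : 0 ≤ p * d :=
  mul_nonneg hp.nonneg (by linarith)

theorem HitBound.mul_sub_one_le (hp : HitBound p d D D₁) (hd : 5 ≤ d) :
    p * d * (p * d - 1) ≤ pairCount D D₁ :=
  mul_sub_one_le_pairCount (hp.zero_le_mul hd) (hp.mul_le_average hd)

theorem HitBound.one_le_card (hp : HitBound p d D D₁) (hd : 5 ≤ d) (hp₀ : 0 < p) : (1 : ℝ) ≤ D := by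
  have hpos : (0 : ℝ) < D := (mul_pos hp₀ (by linarith)).trans_le (hp.mul_le_card hd)
  exact_mod_cast hpos

theorem HitBound.overlap_le_weight (hp : HitBound p d D D₁) (hq : HitBound q u U U₁) (hd : 5 ≤ d)
    (hdu : d ≤ u) (hpq : 0 ≤ p + q - 1) :
    d * u * (p + q - 1) * (d * (p + q) - 2) ≤ weight D D₁ U U₁ := by
  have hu : 5 ≤ u := hd.trans hdu
  have hmul : p + q - 1 ≤ p * q := by nlinarith [hp.le_one, hq.le_one]
  have hsum : d * (p + q) - 2 ≤ p * d + q * u - 2 := by nlinarith [hq.nonneg]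
  have hsum₀ : 0 ≤ d * (p + q) - 2 := by nlinarith
  have := hp.nonneg
  have := hq.nonneg
  calc d * u * (p + q - 1) * (d * (p + q) - 2)
      ≤ d * u * (p * q) * (p * d + q * u - 2) := by gcongr
    _ = p * d * (q * u) * (p * d + q * u - 2) := by ring
    _ ≤ weight D D₁ U U₁ :=
        mul_mul_add_sub_two_le_weight (hp.zero_le_mul hd) (hq.zero_le_mul hu) (hp.mul_le_card hd)
          (hp.mul_sub_one_le hd) (hq.mul_le_card hu) (hq.mul_sub_one_le hu)

/-! ### The middle level of an even cube -/

theorem HitBound.exists_one_le_le (hp : HitBound p d D D₁) (hd : 5 ≤ d) (hp₀ : 0 < p) :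
    ∃ x : ℝ, 1 ≤ x ∧ x ≤ d ∧ p * d ≤ x ∧ x ≤ D ∧ x * (x - 1) ≤ pairCount D D₁ := by
  rcases le_total (p * d) 1 with h | h
  · refine ⟨1, le_rfl, by linarith, h, hp.one_le_card hd hp₀, ?_⟩
    rw [sub_self, mul_zero]
    positivity
  · exact ⟨p * d, h, mul_le_of_le_one_left (by linarith) hp.le_one, le_rfl, hp.mul_le_card hd,
      hp.mul_sub_one_le hd⟩

theorem mul_sub_one_mul_add_sub_le {m : ℝ} (hm : 4 ≤ m) (hx₁ : 1 ≤ x) (hxm : x ≤ m) (hy₁ : 1 ≤ y)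
    (hym : y ≤ m) (hxy : m ≤ x + y) :
    m * (m - 1) * (x + y - m) ≤ x * y * (x + y - 2) := by
  rcases le_total (m + 1) (x + y) with h | h
  · have hprod : m * (x + y - m) ≤ x * y := by nlinarith
    calc m * (m - 1) * (x + y - m) = m * (x + y - m) * (m - 1) := by ring
      _ ≤ x * y * (x + y - 2) := by
        refine mul_le_mul hprod (by linarith) (by linarith) (by positivity)
  · have hprod : x + y - 1 ≤ x * y := by nlinarith
    have hfactor : 0 ≤ (m + 1 - (x + y)) * ((m - 1) * (m - 2) - (x + y - m)) :=
      mul_nonneg (by linarith) (by nlinarith)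
    calc m * (m - 1) * (x + y - m) ≤ (x + y - 1) * (x + y - 2) := by linear_combination hfactor
      _ ≤ x * y * (x + y - 2) := mul_le_mul_of_nonneg_right hprod (by linarith)

theorem HitBound.middle_le_weight {m : ℝ} (hp : HitBound p m D D₁) (hq : HitBound q m U U₁)
    (hm : 5 ≤ m) : m ^ 2 * (m - 1) * (p + q - 1) ≤ weight D D₁ U U₁ := by
  have hcoef : 0 ≤ m * (m - 1) := mul_nonneg (by linarith) (by linarith)
  rcases le_or_gt (p + q - 1) 0 with hpq | hpq
  · refine le_trans ?_ (Nat.cast_nonneg _)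
    exact mul_nonpos_of_nonneg_of_nonpos (by nlinarith) hpq
  obtain ⟨x, hx₁, hxm, hpx, hxD, hx⟩ := hp.exists_one_le_le hm (by linarith [hq.le_one])
  obtain ⟨y, hy₁, hym, hqy, hyU, hy⟩ := hq.exists_one_le_le hm (by linarith [hp.le_one])
  have hxy : m * (p + q - 1) ≤ x + y - m := by linarith
  have hxy₀ : 0 ≤ m * (p + q - 1) := mul_nonneg (by linarith) hpq.le
  calc m ^ 2 * (m - 1) * (p + q - 1) = m * (m - 1) * (m * (p + q - 1)) := by ring
    _ ≤ m * (m - 1) * (x + y - m) := by gcongr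
    _ ≤ x * y * (x + y - 2) :=
        mul_sub_one_mul_add_sub_le (by linarith) hx₁ hxm hy₁ hym (by linarith)
    _ ≤ weight D D₁ U U₁ :=
        mul_mul_add_sub_two_le_weight (by linarith) (by linarith) hxD hx hyU hy

/-! ### The two levels below the middle -/

theorem overlap_le_of_four_le_covers (hp : HitBound p d D D₁) (hq : HitBound q u U U₁)
    (hd : 5 ≤ d) (hdu : d ≤ u) (hpq : 0 ≤ p + q - 1) (hγ₀ : 0 ≤ γ)
    (hγ : (c + 2 - d) ^ 2 * u ≤ 32 * γ) (hD₁ : 4 ≤ D₁) :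
    c * d * u * (p + q - 1) ≤ weight D D₁ U U₁ + 2 * γ * D₁ := by
  have hD₁' : (4 : ℝ) ≤ D₁ := by exact_mod_cast hD₁
  have hsquare : 0 ≤ u * ((c + 2 - d) / 2 - d * (p + q - 1)) ^ 2 :=
    mul_nonneg (by linarith) (sq_nonneg _)
  calc c * d * u * (p + q - 1)
      ≤ d * u * (p + q - 1) * (d * (p + q) - 2) + (c + 2 - d) ^ 2 * u / 4 := by
        linear_combination hsquare
    _ ≤ weight D D₁ U U₁ + 2 * γ * D₁ := by
        have := hp.overlap_le_weight hq hd hdu hpq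
        nlinarith

theorem overlap_le_of_card_le_three (hp : HitBound p d D D) (hq : HitBound q u U U₁)
    (hd : 100 ≤ d) (hdu : d ≤ u) (hcu : u - 2 ≤ c)
    (hpq : 0 < p + q - 1) (hγ : (c + 1 - u) * u ≤ 2 * γ) (hD : D ≤ 3) :
    c * d * u * (p + q - 1) ≤ weight D D U U₁ + 2 * γ * D := by
  have hu : 5 ≤ u := by linarith
  have hD₃ : (D : ℝ) ≤ 3 := by exact_mod_cast hD
  have hD₁ := hp.one_le_card (by linarith) (by linarith [hq.le_one])
  have hpd : p * d ≤ D := by simpa using hp.mul_le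
  have hweight : (D : ℝ) * (q * u) * (D + q * u - 2) ≤ weight D D U U₁ :=
    mul_mul_add_sub_two_le_weight (by linarith) (hq.zero_le_mul hu) le_rfl
      (by rw [cast_pairCount]; linarith) (hq.mul_le_card hu) (hq.mul_sub_one_le hu)
  have hleft : c * d * u * (p + q - 1) ≤ c * u * (D - d * (1 - q)) := by
    have hle : d * (p + q - 1) ≤ D - d * (1 - q) := by linarith
    have hcu₀ : 0 ≤ c * u := mul_nonneg (by linarith) (by linarith)
    linarith [mul_le_mul_of_nonneg_left hle hcu₀]
  -- Expand the difference of the two sides in powers of `1 - q`; every coefficient is nonnegative.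
  have hconst : 0 ≤ D * (u * (D - (c + 2 - u)) + 2 * γ) := mul_nonneg (by linarith) (by nlinarith)
  have hlin : 0 ≤ (1 - q) * u * (c * d - D * (2 * u + D - 2)) := by
    have : (D : ℝ) * (2 * u + D - 2) ≤ 3 * (2 * u + 1) := by nlinarith
    exact mul_nonneg (mul_nonneg (by linarith [hq.le_one]) (by linarith)) (by nlinarith)
  have hquad : 0 ≤ D * u * (u * (1 - q) ^ 2) := by positivity
  linear_combination hleft + hweight + hconst + hlin + hquad

theorem overlap_le_of_prob_le_tenth (hp : HitBound p d D D₁) (hq : HitBound q u U U₁)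
    (hd : 201 ≤ d) (hdu : d ≤ u) (hcu : u - 2 ≤ c) (huc : c ≤ u + 3) (hpq : 0 < p + q - 1)
    (hD₁ : D₁ ≤ 3) (hlt : D₁ < D) (hp₁₀ : p ≤ 1 / 10) :
    c * d * u * (p + q - 1) ≤ weight D D₁ U U₁ := by
  have hu : 5 ≤ u := by linarith
  have hD₁' : (D₁ : ℝ) ≤ 3 := by exact_mod_cast hD₁
  have hlt' : (D₁ : ℝ) + 1 ≤ D := by exact_mod_cast hlt
  have hsmall : 2 / (d - 1) ≤ 1 / 100 := by
    rw [div_le_div_iff₀ (by linarith) (by norm_num)]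
    linarith
  have hpD : 1.3 * (p * d) ≤ D := by nlinarith [hp.mul_le]
  have hqu : 9 / 10 * u ≤ q * u := mul_le_mul_of_nonneg_right (by linarith) (by linarith)
  have hmul : p + q - 1 ≤ p * q := by nlinarith [hp.le_one, hq.le_one]
  have hp₀ := hp.zero_le_mul (by linarith)
  have hq₀ := hq.zero_le_mul hu
  have hcdu : 0 ≤ c * d * u := mul_nonneg (mul_nonneg (by linarith) (by linarith)) (by linarith)
  calc c * d * u * (p + q - 1) ≤ c * d * u * (p * q) := by gcongr
    _ = c * (p * d * (q * u)) := by ring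
    _ ≤ 1.3 * (q * u - 1) * (p * d * (q * u)) := by gcongr; linarith
    _ = 1.3 * (p * d) * (q * u * (q * u - 1)) := by ring
    _ ≤ D * (q * u * (q * u - 1)) :=
        mul_le_mul_of_nonneg_right hpD (mul_nonneg hq₀ (by linarith))
    _ ≤ D * pairCount U U₁ := by gcongr; exact hq.mul_sub_one_le hu
    _ ≤ weight D D₁ U U₁ := by
        rw [cast_weight]
        exact le_add_of_nonneg_left (by positivity)

theorem HitBound.sq_div_le_card (hp : HitBound p d D D₁) (hd : 1000 ≤ d) (hD₁ : D₁ ≤ 3)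
    (hp₁₀ : 1 / 10 ≤ p) : d ^ 2 / 40 ≤ D := by
  have hD₁' : (D₁ : ℝ) ≤ 3 := by exact_mod_cast hD₁
  have hpd : d / 10 - 3 ≤ 2 * ((D : ℝ) - D₁) / (d - 1) := by
    rw [mul_div_right_comm]
    nlinarith [hp.mul_le]
  rw [le_div_iff₀ (by linarith)] at hpd
  nlinarith [Nat.cast_nonneg (α := ℝ) D₁]

theorem four_mul_cube_le {t : ℝ} (hd : 100000 ≤ d) (ht : d ^ 2 / 40 ≤ t) :
    4 * d ^ 3 ≤ t * (t - 1) / 2 := by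
  have htsub : d ^ 2 / 80 ≤ t - 1 := by nlinarith
  have hprod : d ^ 2 / 40 * (d ^ 2 / 80) ≤ t * (t - 1) :=
    mul_le_mul ht htsub (by positivity) (by nlinarith)
  have hcube : 0 ≤ d ^ 3 := by positivity
  linarith [mul_le_mul_of_nonneg_left hd hcube]

theorem overlap_le_of_tenth_lt_prob (hp : HitBound p d D D₁) (hq : HitBound q u U U₁)
    (hd : 100000 ≤ d) (hdu : d ≤ u) (hud : u ≤ d + 4) (hcu : u - 2 ≤ c) (huc : c ≤ u + 3)
    (hpq : 0 < p + q - 1) (hD₁ : D₁ ≤ 3) (hp₁₀ : 1 / 10 < p) :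
    c * d * u * (p + q - 1) ≤ weight D D₁ U U₁ := by
  have hU := hq.one_le_card (by linarith) (by linarith [hp.le_one])
  have hcdu : 0 ≤ c * d * u := mul_nonneg (mul_nonneg (by linarith) (by linarith)) (by linarith)
  calc c * d * u * (p + q - 1)
      ≤ c * d * u := mul_le_of_le_one_right hcdu (by linarith [hp.le_one, hq.le_one])
    _ ≤ 2 * d * d * (2 * d) := by gcongr <;> linarith
    _ = 4 * d ^ 3 := by ring
    _ ≤ D * ((D : ℝ) - 1) / 2 := four_mul_cube_le hd (hp.sq_div_le_card (by linarith) hD₁ hp₁₀.le)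
    _ ≤ pairCount D D₁ := by
        rw [pairCount, Nat.cast_add, Nat.cast_choose_two]
        exact le_add_of_nonneg_right (by positivity)
    _ ≤ U * pairCount D D₁ := le_mul_of_one_le_left (by positivity) hU
    _ ≤ weight D D₁ U U₁ := by
        rw [cast_weight]
        exact le_add_of_nonneg_right (by positivity)

theorem overlap_le_weight_add (hp : HitBound p d D D₁) (hq : HitBound q u U U₁)
    (hd : 100000 ≤ d) (hdu : d ≤ u) (hud : u ≤ d + 4) (hcu : u - 2 ≤ c) (huc : c ≤ u + 3)
    (hγ₀ : 0 ≤ γ) (hγ₁ : (c + 1 - u) * u ≤ 2 * γ) (hγ₂ : (c + 2 - d) ^ 2 * u ≤ 32 * γ) :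
    c * d * u * (p + q - 1) ≤ weight D D₁ U U₁ + 2 * γ * D₁ := by
  have hcharge : 0 ≤ 2 * γ * D₁ := by positivity
  rcases le_or_gt (p + q - 1) 0 with hpq | hpq
  · have hcdu : 0 ≤ c * d * u := mul_nonneg (mul_nonneg (by linarith) (by linarith)) (by linarith)
    exact (mul_nonpos_of_nonneg_of_nonpos hcdu hpq).trans (by positivity)
  rcases le_or_gt 4 D₁ with hD₁ | hD₁
  · exact overlap_le_of_four_le_covers hp hq (by linarith) hdu hpq.le hγ₀ hγ₂ hD₁
  replace hD₁ : D₁ ≤ 3 := by omega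
  rcases hp.covers_le.eq_or_lt with rfl | hlt
  · exact overlap_le_of_card_le_three hp hq (by linarith) hdu hcu hpq hγ₁ hD₁
  refine le_trans ?_ (le_add_of_nonneg_right hcharge)
  rcases le_or_gt p (1 / 10) with hp₁₀ | hp₁₀
  · exact overlap_le_of_prob_le_tenth hp hq (by linarith) hdu hcu huc hpq hD₁ hlt hp₁₀
  · exact overlap_le_of_tenth_lt_prob hp hq hd hdu hud hcu huc hpq hD₁ hp₁₀

/-! ### Levels far from the middle -/

section Far

variable {L j g δ : ℝ}

theorem far_quadratic (hL : 1280 ≤ L) (hj : 1 ≤ j) (hjL : 304 * j ≤ L) (hδ₀ : 0 < δ) (hδ₁ : δ ≤ 1)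
    (hg₁ : g ≤ 3 / 4 * (j * (j + 1) / L)) (hg₂ : g ≤ 10 / L) :
    δ - j * (j + 1) / L * (1 - δ) + g ≤ δ * (1 + δ - 19 * j / L) := by
  have hL₀ : 0 < L := by linarith
  set σ := j * (j + 1) / L with hσ
  set η := 19 * j / L with hη
  have hσ₀ : 0 ≤ σ := by positivity
  have hη₁₆ : η ≤ 1 / 16 := by
    rw [hη, div_le_div_iff₀ hL₀ (by norm_num)]
    linarith
  rcases le_or_gt δ (1 / 8) with hδ | hδ
  · have hησ : η ^ 2 / 4 ≤ σ / 8 := by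
      rw [hη, hσ, div_pow, div_div, div_div, div_le_div_iff₀ (by positivity) (by positivity)]
      have : (19 * j) ^ 2 * 8 ≤ j * (j + 1) * (L * 4) := by nlinarith
      nlinarith [mul_le_mul_of_nonneg_right this hL₀.le]
    nlinarith [sq_nonneg (δ - η / 2)]
  · have : 10 / L ≤ 1 / 128 := by
      rw [div_le_div_iff₀ hL₀ (by norm_num)]
      linarith
    nlinarith [mul_nonneg hσ₀ (by linarith : 0 ≤ 1 - δ)]

theorem HitBound.far_le_weight (hp : HitBound p d D D₁) (hq : HitBound q u U U₁) (hd : 5 ≤ d)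
    (hdu : d ≤ u) (hf : 0 ≤ f) (hL : 0 < L) (hj : 1 ≤ j) (hpq : 0 ≤ p + q - 1)
    (hlower : 2 * f * (1 - 8 * j / L) ≤ d * u * d) (hupper : d * u ≤ 2 * f / L) :
    f * ((p + q - 1) * (p + q - 19 * j / L)) ≤ (weight D D₁ U U₁ : ℝ) / 2 := by
  have hjL : 1 / L ≤ j / L := by gcongr
  have hjL₀ : 0 ≤ j / L := by positivity
  have hbracket : 2 * f * (p + q - 19 * j / L) ≤ d * u * (d * (p + q) - 2) := by
    have hcoef : p + q - 19 * j / L ≤ (1 - 8 * j / L) * (p + q) - 2 / L := by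
      rw [mul_div_assoc, mul_div_assoc, ← mul_one_div 2]
      nlinarith [hp.le_one, hq.le_one]
    calc 2 * f * (p + q - 19 * j / L)
        ≤ 2 * f * ((1 - 8 * j / L) * (p + q) - 2 / L) := by gcongr
      _ = 2 * f * (1 - 8 * j / L) * (p + q) - 2 * (2 * f / L) := by ring
      _ ≤ d * u * d * (p + q) - 2 * (d * u) := by
          gcongr
          linarith
      _ = d * u * (d * (p + q) - 2) := by ring
  have := hp.overlap_le_weight hq hd hdu hpq
  have := mul_le_mul_of_nonneg_left hbracket hpq
  linarith

theorem far_excess_le (hp : HitBound p d D D₁) (hq : HitBound q u U U₁) (hd : 5 ≤ d) (hdu : d ≤ u)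
    (hf : 0 ≤ f) (hL : 1280 ≤ L) (hj : 1 ≤ j) (hjL : 304 * j ≤ L)
    (hw : 1 + j * (j + 1) / L ≤ w) (hg₁ : g ≤ 3 / 4 * (j * (j + 1) / L)) (hg₂ : g ≤ 10 / L)
    (hlower : 2 * f * (1 - 8 * j / L) ≤ d * u * d) (hupper : d * u ≤ 2 * f / L) :
    f * (1 - w * (2 - p - q) + g) ≤ (weight D D₁ U U₁ : ℝ) / 2 := by
  have hσ : 0 ≤ j * (j + 1) / L := by positivity
  have hexcess : 1 - w * (2 - p - q) + g ≤
      (p + q - 1) - j * (j + 1) / L * (1 - (p + q - 1)) + g := by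
    nlinarith [hp.le_one, hq.le_one]
  rcases le_or_gt (p + q - 1) 0 with hpq | hpq
  · have : 1 - w * (2 - p - q) + g ≤ 0 := by nlinarith
    exact (mul_nonpos_of_nonneg_of_nonpos hf this).trans (by positivity)
  · refine le_trans ?_ (hp.far_le_weight hq hd hdu hf (by linarith) hj hpq.le hlower hupper)
    gcongr
    refine hexcess.trans ((far_quadratic hL hj hjL hpq ?_ hg₁ hg₂).trans_eq (by ring))
    linarith [hp.le_one, hq.le_one]

end Far

end LocalInequalities

section Discharging

theorem choose_le_choose_of_add_le {n i a : ℕ} (hia : i ≤ a) (hn : a + i ≤ n) :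
    n.choose i ≤ n.choose a := by
  have hmono {b : ℕ} (hib : i ≤ b) (hb : b ≤ n / 2) : n.choose i ≤ n.choose b := by
    induction b, hib using Nat.le_induction with
    | base => exact le_rfl
    | succ k _ ih => exact (ih (by omega)).trans (Nat.choose_le_succ_of_lt_half_left (by omega))
  rcases le_or_gt a (n / 2) with h | h
  · exact hmono hia h
  · rw [← Nat.choose_symm (show a ≤ n by omega)]
    exact hmono (by omega) (by omega)

variable {α : Type*} [DecidableEq α] {F : Finset (Finset α)} {B : Finset α}

theorem hitBelow_le_div_add_div (hF : ∀ A ∈ F, 2 ≤ #A) (B : Finset α) :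
    hitBelow F B ≤ #(lowerCovers F B) / (#B : ℝ) +
      ((#(below F B) : ℝ) - #(lowerCovers F B)) / (#B).choose 2 := by
  have hsub := lowerCovers_subset_below F B
  have hcovers : ∀ A ∈ lowerCovers F B, 1 / ((#B).choose #A : ℝ) ≤ 1 / #B := fun A hA ↦ by
    rw [← (mem_lowerCovers.1 hA).2.2, Nat.choose_succ_self_right]
  have hothers : ∀ A ∈ below F B \ lowerCovers F B,
      1 / ((#B).choose #A : ℝ) ≤ 1 / (#B).choose 2 := fun A hA ↦ by
    obtain ⟨hA, hcov⟩ := mem_sdiff.1 hA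
    obtain ⟨hAF, hAB⟩ := mem_below.1 hA
    have hlt := card_lt_card hAB
    have hne : #A + 1 ≠ #B := fun h ↦ hcov (mem_lowerCovers.2 ⟨hAF, hAB, h⟩)
    have htwo := hF A hAF
    have hpos : 0 < (#B).choose 2 := Nat.choose_pos (by omega)
    have hle := choose_le_choose_of_add_le htwo (show #A + 2 ≤ #B by omega)
    gcongr
  calc hitBelow F B ≤ ∑ A ∈ below F B, 1 / ((#B).choose #A : ℝ) := hitBelow_le_sum F B
    _ = ∑ A ∈ below F B \ lowerCovers F B, 1 / ((#B).choose #A : ℝ) +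
          ∑ A ∈ lowerCovers F B, 1 / ((#B).choose #A : ℝ) := (sum_sdiff hsub).symm
    _ ≤ #(below F B \ lowerCovers F B) • (1 / ((#B).choose 2 : ℝ)) +
          #(lowerCovers F B) • (1 / (#B : ℝ)) :=
        add_le_add (sum_le_card_nsmul _ _ _ hothers) (sum_le_card_nsmul _ _ _ hcovers)
    _ = _ := by
        rw [nsmul_eq_mul, nsmul_eq_mul, cast_card_sdiff hsub]
        ring

theorem hitBound_hitBelow (hF : ∀ A ∈ F, 2 ≤ #A) (hB : 2 ≤ #B) :
    HitBound (hitBelow F B) #B #(below F B) #(lowerCovers F B) where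
  nonneg := hitBelow_nonneg F B
  le_one := hitBelow_le_one F B
  covers_le := card_le_card (lowerCovers_subset_below F B)
  mul_le := by
    have hB' : (2 : ℝ) ≤ #B := by exact_mod_cast hB
    have h₁ : (#B : ℝ) - 1 ≠ 0 := by linarith
    have h₀ : (#B : ℝ) ≠ 0 := by linarith
    refine (mul_le_mul_of_nonneg_right (hitBelow_le_div_add_div hF B) (by positivity)).trans_eq ?_
    rw [Nat.cast_choose_two]
    field_simp

variable [Fintype α]

theorem hitAbove_le_one (F : Finset (Finset α)) (B : Finset α) : hitAbove F B ≤ 1 :=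
  hitBelow_le_one _ _

theorem hitBound_hitAbove (hF : ∀ A ∈ F, 2 ≤ #Aᶜ) (hB : 2 ≤ #Bᶜ) :
    HitBound (hitAbove F B) #Bᶜ #(above F B) #(upperCovers F B) := by
  have hF' : ∀ A ∈ Fᶜˢ, 2 ≤ #A := fun A hA ↦ by
    simpa using hF _ (mem_compls.1 hA)
  simpa only [hitAbove, below_compls_compl, lowerCovers_compls_compl, card_compls] using
    hitBound_hitBelow hF' hB

theorem card_upperCovers_le (F : Finset (Finset α)) (A : Finset α) : #(upperCovers F A) ≤ #Aᶜ := by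
  have hsub : upperCovers F A ⊆ Aᶜ.image (insert · A) := fun B hB ↦ by
    obtain ⟨-, hAB, hcard⟩ := mem_upperCovers.1 hB
    obtain ⟨x, hxB, hxA⟩ := exists_of_ssubset hAB
    refine mem_image.2 ⟨x, mem_compl.2 hxA, eq_of_subset_of_card_le (insert_subset hxB hAB.1) ?_⟩
    rw [card_insert_of_notMem hxA, hcard]
  exact (card_le_card hsub).trans card_image_le

theorem sum_mul_card_lowerCovers_le {γ : ℕ → ℝ} (hγ : ∀ k, 0 ≤ γ k) (F : Finset (Finset α)) :
    ∑ B ∈ F, γ (#B - 1) * #(lowerCovers F B) ≤ ∑ A ∈ F, γ #A * #Aᶜ :=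
  calc ∑ B ∈ F, γ (#B - 1) * #(lowerCovers F B) = ∑ B ∈ F, ∑ _A ∈ lowerCovers F B, γ (#B - 1) := by
        simp only [sum_const, nsmul_eq_mul, mul_comm]
    _ = ∑ B ∈ F, ∑ A ∈ lowerCovers F B, γ #A := by
        refine sum_congr rfl fun B _ ↦ sum_congr rfl fun A hA ↦ ?_
        rw [← (mem_lowerCovers.1 hA).2.2, Nat.add_sub_cancel]
    _ = ∑ A ∈ F, ∑ _B ∈ upperCovers F A, γ #A := by
        refine sum_comm' fun B A ↦ ?_
        rw [mem_lowerCovers, mem_upperCovers]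
        tauto
    _ = ∑ A ∈ F, γ #A * #(upperCovers F A) := by
        simp only [sum_const, nsmul_eq_mul, mul_comm]
    _ ≤ ∑ A ∈ F, γ #A * #Aᶜ := by
        gcongr with A
        exacts [hγ _, card_upperCovers_le F A]

/-- The amount by which `B` exceeds its share of the bound `2 * n.choose ℓ`: by the two LYM
inequalities the excesses of the members of `F` add up to at least `#F - 2 * n.choose ℓ`. -/
noncomputable def excess (F : Finset (Finset α)) (ℓ : ℕ) (B : Finset α) : ℝ :=
  1 - (Fintype.card α).choose ℓ / (Fintype.card α).choose #B * (2 - hitBelow F B - hitAbove F B)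

theorem excess_le (F : Finset (Finset α)) (ℓ : ℕ) (B : Finset α) :
    excess F ℓ B ≤
      1 - (Fintype.card α).choose ℓ * ((1 - hitBelow F B) / (Fintype.card α).choose #B) := by
  have hratio : (0 : ℝ) ≤ (Fintype.card α).choose ℓ / (Fintype.card α).choose #B := by positivity
  rw [excess]
  linear_combination mul_le_mul_of_nonneg_left (hitAbove_le_one F B) hratio

theorem excess_compls_compl (F : Finset (Finset α)) (ℓ : ℕ) (B : Finset α) :
    excess Fᶜˢ ℓ Bᶜ = excess F ℓ B := by
  rw [excess, excess, hitAbove_compls_compl, ← hitAbove, card_compl,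
    Nat.choose_symm (card_le_univ B)]
  ring

theorem card_sub_le_sum_excess (F : Finset (Finset α)) (ℓ : ℕ) :
    (#F : ℝ) - 2 * (Fintype.card α).choose ℓ ≤ ∑ B ∈ F, excess F ℓ B := by
  have hsum : ∑ B ∈ F, excess F ℓ B = #F - (Fintype.card α).choose ℓ *
      (∑ B ∈ F, (1 - hitBelow F B) / (Fintype.card α).choose #B +
        ∑ B ∈ F, (1 - hitAbove F B) / (Fintype.card α).choose #B) := by
    rw [← sum_add_distrib, mul_sum, card_eq_sum_ones, Nat.cast_sum, ← sum_sub_distrib]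
    refine sum_congr rfl fun B _ ↦ ?_
    rw [excess, Nat.cast_one]
    ring
  have hlym := add_le_add (sum_one_sub_hitBelow_le_one F) (sum_one_sub_hitAbove_le_one F)
  have hchoose : (0 : ℝ) ≤ (Fintype.card α).choose ℓ := by positivity
  rw [hsum]
  linear_combination mul_le_mul_of_nonneg_left hlym hchoose

theorem hitBelow_univ_eq_sum (hF : ∀ B ∈ F, #B < Fintype.card α) :
    hitBelow F univ = ∑ B ∈ F, (1 - hitBelow F B) / (Fintype.card α).choose #B := by
  have hproper : {B ∈ F | B ⊂ univ} = F := filter_true_of_mem fun B hB ↦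
    ssubset_univ_iff.2 fun h ↦ (hF B hB).ne (card_eq_iff_eq_univ B |>.2 h)
  rw [hitBelow_eq_sum, hproper, card_univ]

theorem card_level_le {k : ℕ} (hk : k < Fintype.card α) (F : Finset (Finset α)) :
    (#{B ∈ F | #B = k} : ℝ) ≤ hitBelow F univ * (Fintype.card α).choose k := by
  have hlevel : ∀ B ∈ {B ∈ F | #B = k},
      (1 - hitBelow {B ∈ F | #B = k} B) / (Fintype.card α).choose #B =
        1 / (Fintype.card α).choose k := fun B hB ↦ by
    have hnone : {A ∈ {B ∈ F | #B = k} | A ⊂ B} = ∅ := filter_false_of_mem fun A hA hAB ↦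
      (card_lt_card hAB).ne ((mem_filter.1 hA).2.trans (mem_filter.1 hB).2.symm)
    rw [hitBelow_eq_sum, hnone, sum_empty, sub_zero, (mem_filter.1 hB).2]
  have hpos : (0 : ℝ) < (Fintype.card α).choose k := by exact_mod_cast Nat.choose_pos hk.le
  rw [← div_le_iff₀ hpos, div_eq_mul_one_div, ← nsmul_eq_mul, ← sum_const, ← sum_congr rfl hlevel,
    ← hitBelow_univ_eq_sum fun B hB ↦ (mem_filter.1 hB).2.trans_lt hk]
  exact hitBelow_mono fun A _ hA ↦ (mem_filter.1 hA).1

theorem card_le_hitBelow_univ_mul {a : ℕ} (ha : a ≤ Fintype.card α) (hF : ∀ B ∈ F, #B < a) :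
    (#F : ℝ) ≤ hitBelow F univ * ∑ k ∈ range a, (Fintype.card α).choose k := by
  rw [card_eq_sum_card_fiberwise (f := card) (t := range a) fun B hB ↦ by simpa using hF B hB]
  push_cast
  rw [mul_sum]
  exact sum_le_sum fun k hk ↦ card_level_le ((mem_range.1 hk).trans_le ha) F

theorem sum_excess_nonpos {a ℓ : ℕ} (ha : a ≤ Fintype.card α)
    (hlow : ∑ k ∈ range a, (Fintype.card α).choose k ≤ (Fintype.card α).choose ℓ)
    (F : Finset (Finset α)) : ∑ B ∈ F with #B < a, excess F ℓ B ≤ 0 := by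
  set L := {B ∈ F | #B < a}
  have hL : ∀ B ∈ L, #B < a := fun B hB ↦ (mem_filter.1 hB).2
  have hcongr : ∀ B ∈ L, hitBelow F B = hitBelow L B := fun B hB ↦ hitBelow_congr fun A hA ↦
    ⟨fun h ↦ mem_filter.2 ⟨h, (card_lt_card hA).trans (hL B hB)⟩, fun h ↦ (mem_filter.1 h).1⟩
  have hcard : (#L : ℝ) ≤ hitBelow L univ * (Fintype.card α).choose ℓ :=
    (card_le_hitBelow_univ_mul ha hL).trans
      (mul_le_mul_of_nonneg_left (by exact_mod_cast hlow) (hitBelow_nonneg _ _))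
  calc ∑ B ∈ L, excess F ℓ B
      ≤ ∑ B ∈ L, (1 - (Fintype.card α).choose ℓ *
          ((1 - hitBelow F B) / (Fintype.card α).choose #B)) :=
        sum_le_sum fun B _ ↦ excess_le F ℓ B
    _ = ∑ B ∈ L, (1 - (Fintype.card α).choose ℓ *
          ((1 - hitBelow L B) / (Fintype.card α).choose #B)) :=
        sum_congr rfl fun B hB ↦ by rw [hcongr B hB]
    _ = #L - (Fintype.card α).choose ℓ * hitBelow L univ := by
        rw [sum_sub_distrib, ← mul_sum, ← hitBelow_univ_eq_sum fun B hB ↦ (hL B hB).trans_le ha]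
        simp
    _ ≤ 0 := by linarith

theorem sum_excess_le_sum_centerWeight {a ℓ : ℕ} {f : ℝ} {γ : ℕ → ℝ} (haℓ : a ≤ ℓ + 1)
    (ha : a ≤ Fintype.card α) (hf : 0 ≤ f) (hγ₀ : ∀ k, 0 ≤ γ k)
    (hγ : ∀ k, γ k ≠ 0 → a ≤ k ∧ k ≤ ℓ)
    (hlow : ∑ k ∈ range a, (Fintype.card α).choose k ≤ (Fintype.card α).choose ℓ)
    (hlocal : ∀ B ∈ F, a ≤ #B → #B ≤ ℓ → f * excess F ℓ B + γ #B * #Bᶜ ≤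
      (centerWeight F B : ℝ) / 2 + γ (#B - 1) * #(lowerCovers F B)) :
    ∑ B ∈ F with #B ≤ ℓ, f * excess F ℓ B ≤ ∑ B ∈ F with #B ≤ ℓ, (centerWeight F B : ℝ) / 2 := by
  have hsplit (g : Finset α → ℝ) : ∑ B ∈ F with #B ≤ ℓ, g B =
      ∑ B ∈ F with #B < a, g B + ∑ B ∈ F with a ≤ #B ∧ #B ≤ ℓ, g B := by
    rw [← sum_filter_add_sum_filter_not _ (#· < a), filter_filter, filter_filter]
    congr 2 <;> refine filter_congr fun B _ ↦ ?_ <;> omega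
  have hlower : ∑ B ∈ F with #B < a, f * excess F ℓ B ≤ 0 := by
    rw [← mul_sum]
    exact mul_nonpos_of_nonneg_of_nonpos hf (sum_excess_nonpos ha hlow F)
  have hweight : 0 ≤ ∑ B ∈ F with #B < a, (centerWeight F B : ℝ) / 2 :=
    sum_nonneg fun B _ ↦ by positivity
  have hcharge : ∑ B ∈ F with a ≤ #B ∧ #B ≤ ℓ, γ #B * #Bᶜ = ∑ B ∈ F, γ #B * #Bᶜ :=
    sum_filter_of_ne fun B _ h ↦ hγ _ (left_ne_zero_of_mul h)
  have hdischarge : ∑ B ∈ F with a ≤ #B ∧ #B ≤ ℓ, γ (#B - 1) * #(lowerCovers F B) ≤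
      ∑ B ∈ F, γ (#B - 1) * #(lowerCovers F B) :=
    sum_le_sum_of_subset_of_nonneg (filter_subset _ _) fun B _ _ ↦
      mul_nonneg (hγ₀ _) (Nat.cast_nonneg _)
  have hlevels : ∑ B ∈ F with a ≤ #B ∧ #B ≤ ℓ, (f * excess F ℓ B + γ #B * #Bᶜ) ≤
      ∑ B ∈ F with a ≤ #B ∧ #B ≤ ℓ,
        ((centerWeight F B : ℝ) / 2 + γ (#B - 1) * #(lowerCovers F B)) :=
    sum_le_sum fun B hB ↦
      hlocal B (mem_filter.1 hB).1 (mem_filter.1 hB).2.1 (mem_filter.1 hB).2.2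
  rw [sum_add_distrib, sum_add_distrib] at hlevels
  rw [hsplit, hsplit]
  linarith [sum_mul_card_lowerCovers_le hγ₀ F]

end Discharging

section Binomials

variable {n ℓ : ℕ}

theorem mul_choose_le_mul_choose_succ {k a b : ℕ} (h : a * (k + 1) ≤ b * (n - k)) :
    a * n.choose k ≤ b * n.choose (k + 1) := by
  refine Nat.le_of_mul_le_mul_right ?_ k.succ_pos
  calc a * n.choose k * (k + 1) = n.choose k * (a * (k + 1)) := by ring
    _ ≤ n.choose k * (b * (n - k)) := Nat.mul_le_mul_left _ h
    _ = b * (n.choose k * (n - k)) := by ring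
    _ = b * n.choose (k + 1) * (k + 1) := by rw [← Nat.choose_succ_right_eq, mul_assoc]

theorem add_mul_choose_sub_le (hn : 2 * ℓ + 1 ≤ n) {j : ℕ} (hj : j ≤ ℓ) :
    (ℓ + j * (j + 1)) * n.choose (ℓ - j) ≤ ℓ * n.choose ℓ := by
  induction j with
  | zero => simp
  | succ j ih =>
    obtain ⟨i, rfl⟩ := Nat.exists_eq_add_of_le hj
    refine le_trans ?_ (ih (by omega))
    rw [Nat.add_sub_cancel_left, show j + 1 + i - j = i + 1 by omega]
    apply mul_choose_le_mul_choose_succ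
    calc (j + 1 + i + (j + 1) * (j + 1 + 1)) * (i + 1)
        ≤ (j + 1 + i + (j + 1) * (j + 1 + 1)) * (i + 1) + 2 * (j * (j + 1) * (j + 2)) :=
          Nat.le_add_right _ _
      _ = (j + 1 + i + j * (j + 1)) * (i + 2 * j + 3) := by ring
      _ ≤ (j + 1 + i + j * (j + 1)) * (n - i) := Nat.mul_le_mul_left _ (by omega)

theorem one_add_div_le_choose_div_choose (hn : 2 * ℓ + 1 ≤ n) {j : ℕ} (hjℓ : j < ℓ) :
    1 + (j : ℝ) * (j + 1) / ℓ ≤ n.choose ℓ / n.choose (ℓ - j) := by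
  have hℓ : (0 : ℝ) < ℓ := by exact_mod_cast Nat.zero_lt_of_lt hjℓ
  have hpos : (0 : ℝ) < n.choose (ℓ - j) := by exact_mod_cast Nat.choose_pos (by omega)
  have h : ((ℓ : ℝ) + j * (j + 1)) * n.choose (ℓ - j) ≤ ℓ * n.choose ℓ := by
    exact_mod_cast add_mul_choose_sub_le hn hjℓ.le
  rw [le_div_iff₀ hpos]
  field_simp
  exact h

theorem sum_range_choose_le {K a : ℕ} (h : (K + 1) * a ≤ K * (n + 1 - a)) :
    ∑ k ∈ range a, n.choose k ≤ K * n.choose a := by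
  induction a with
  | zero => simp
  | succ a ih =>
    have hstep : (K + 1) * (a + 1) ≤ K * (n - a) := by rwa [Nat.add_sub_add_right] at h
    have hprev : (K + 1) * a ≤ K * (n + 1 - a) :=
      (Nat.mul_le_mul_left _ a.le_succ).trans (hstep.trans (Nat.mul_le_mul_left _ (by omega)))
    rw [sum_range_succ]
    linarith [ih hprev, mul_choose_le_mul_choose_succ hstep]

theorem sum_range_choose_le_choose (hn : 2 * ℓ + 1 ≤ n) (hℓ : 15000000 ≤ ℓ) :
    ∑ k ∈ range (ℓ - ℓ / 304), n.choose k ≤ n.choose ℓ := by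
  have hsum : ∑ k ∈ range (ℓ - ℓ / 304), n.choose k ≤ 152 * n.choose (ℓ - ℓ / 304) :=
    sum_range_choose_le (by omega)
  have hratio := add_mul_choose_sub_le hn (Nat.div_le_self ℓ 304)
  have hfactor : 152 * ℓ ≤ ℓ + ℓ / 304 * (ℓ / 304 + 1) := by
    have hJ : 46208 ≤ ℓ / 304 := by omega
    have hJℓ : ℓ ≤ 304 * (ℓ / 304 + 1) := by omega
    nlinarith
  refine hsum.trans (Nat.le_of_mul_le_mul_left ?_ (show 0 < ℓ by omega))
  calc ℓ * (152 * n.choose (ℓ - ℓ / 304)) = 152 * ℓ * n.choose (ℓ - ℓ / 304) := by ring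
    _ ≤ (ℓ + ℓ / 304 * (ℓ / 304 + 1)) * n.choose (ℓ - ℓ / 304) := Nat.mul_le_mul_right _ hfactor
    _ ≤ ℓ * n.choose ℓ := hratio

theorem cast_fB (hn : 2 * ℓ + 1 ≤ n) (hn' : n ≤ 2 * ℓ + 2) :
    (fB n : ℝ) = (ℓ + 2) * (ℓ + 1) * ℓ / 2 := by
  rw [fB, show (n + 1) / 2 = ℓ + 1 by omega]
  push_cast [Nat.cast_choose_two]
  ring

end Binomials

section Levels

variable {n ℓ : ℕ} {F : Finset (Finset (Fin n))} {B : Finset (Fin n)}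

/-- Every member of the family has at least two elements and misses at least two elements. -/
def IsInner (F : Finset (Finset (Fin n))) : Prop := ∀ A ∈ F, 2 ≤ #A ∧ 2 ≤ #Aᶜ

theorem IsInner.compls (hF : IsInner F) : IsInner Fᶜˢ := fun A hA ↦ by
  simpa only [compl_compl] using (hF _ (mem_compls.1 hA)).symm

theorem IsInner.hitBound_below (hF : IsInner F) (hB : 2 ≤ #B) :
    HitBound (hitBelow F B) #B #(below F B) #(lowerCovers F B) :=
  hitBound_hitBelow (fun A hA ↦ (hF A hA).1) hB

theorem IsInner.hitBound_above (hF : IsInner F) (hB : 2 ≤ #Bᶜ) :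
    HitBound (hitAbove F B) #Bᶜ #(above F B) #(upperCovers F B) :=
  hitBound_hitAbove (fun A hA ↦ (hF A hA).2) hB

theorem excess_fin (F : Finset (Finset (Fin n))) (ℓ : ℕ) (B : Finset (Fin n)) :
    excess F ℓ B = 1 - n.choose ℓ / n.choose #B * (2 - hitBelow F B - hitAbove F B) := by
  rw [excess, Fintype.card_fin]

theorem cast_card_compl (B : Finset (Fin n)) : (#Bᶜ : ℝ) = n - #B := by
  have h : #Bᶜ + #B = n := by rw [card_compl_add_card, Fintype.card_fin]
  rw [eq_sub_iff_add_eq]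
  exact_mod_cast h

theorem fB_mul_excess_le_of_card_eq (hn : 2 * ℓ + 1 ≤ n) (hn' : n ≤ 2 * ℓ + 2)
    (hℓ : 100000 ≤ ℓ) (hF : IsInner F) (hB : #B = ℓ) :
    fB n * excess F ℓ B ≤ (centerWeight F B : ℝ) / 2 + (ℓ + 1) * #(lowerCovers F B) := by
  have hcompl := card_compl_add_card B
  rw [Fintype.card_fin] at hcompl
  have hp := hF.hitBound_below (B := B) (by omega)
  have hq := hF.hitBound_above (B := B) (by omega)
  have hu : (ℓ : ℝ) + 1 ≤ #Bᶜ := by exact_mod_cast (show ℓ + 1 ≤ #Bᶜ by omega)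
  have hu' : (#Bᶜ : ℝ) ≤ ℓ + 2 := by exact_mod_cast (show #Bᶜ ≤ ℓ + 2 by omega)
  have hℓ' : (100000 : ℝ) ≤ ℓ := by exact_mod_cast hℓ
  rw [hB] at hp
  set u : ℝ := (#Bᶜ : ℝ)
  have hu₀ : 0 < u := by linarith
  obtain ⟨c, hc⟩ : ∃ c : ℝ, c * u = (ℓ + 2) * (ℓ + 1) :=
    ⟨(ℓ + 2) * (ℓ + 1) / u, div_mul_cancel₀ _ hu₀.ne'⟩
  have hc_lower : ℓ + 1 ≤ c := by nlinarith
  have hc_upper : c ≤ ℓ + 2 := by nlinarith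
  have hsq : (c + 2 - ℓ) ^ 2 ≤ 16 := by nlinarith
  have hchoose : (n.choose ℓ : ℝ) ≠ 0 := by exact_mod_cast (Nat.choose_pos (by omega)).ne'
  have hoverlap := overlap_le_weight_add (c := c) (γ := ℓ + 1) hp hq hℓ' (by linarith)
    (by linarith) (by linarith) (by linarith) (by linarith) (by nlinarith) (by nlinarith)
  rw [← centerWeight] at hoverlap
  rw [excess_fin, hB, div_self hchoose, cast_fB hn hn']
  linear_combination hoverlap / 2 - ℓ * (hitBelow F B + hitAbove F B - 1) / 2 * hc

theorem choose_div_choose_of_succ_eq {k : ℕ} (hk : k + 1 = ℓ) (hkn : k ≤ n) :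
    (n.choose ℓ : ℝ) / n.choose k = (n - k) / ℓ := by
  subst hk
  have hpos : (n.choose k : ℝ) ≠ 0 := by exact_mod_cast (Nat.choose_pos hkn).ne'
  have h : (n.choose (k + 1) : ℝ) * (k + 1) = n.choose k * (n - k) := by
    rw [← Nat.cast_sub hkn]
    exact_mod_cast Nat.choose_succ_right_eq n k
  push_cast
  rw [div_eq_div_iff hpos (by positivity)]
  linarith

theorem fB_mul_excess_le_of_card_add_one_eq (hn : 2 * ℓ + 1 ≤ n) (hn' : n ≤ 2 * ℓ + 2)
    (hℓ : 100001 ≤ ℓ) (hF : IsInner F) (hB : #B + 1 = ℓ) :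
    fB n * excess F ℓ B + (ℓ + 1) * #Bᶜ ≤
      (centerWeight F B : ℝ) / 2 + 2 * ℓ * #(lowerCovers F B) := by
  have hcompl := card_compl_add_card B
  rw [Fintype.card_fin] at hcompl
  have hp := hF.hitBound_below (B := B) (by omega)
  have hq := hF.hitBound_above (B := B) (by omega)
  have hu : (ℓ : ℝ) + 2 ≤ #Bᶜ := by exact_mod_cast (show ℓ + 2 ≤ #Bᶜ by omega)
  have hu' : (#Bᶜ : ℝ) ≤ ℓ + 3 := by exact_mod_cast (show #Bᶜ ≤ ℓ + 3 by omega)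
  have hℓ' : (100001 : ℝ) ≤ ℓ := by exact_mod_cast hℓ
  have hd : (#B : ℝ) = ℓ - 1 := by rw [← hB]; push_cast; ring
  rw [hd] at hp
  have hratio := choose_div_choose_of_succ_eq hB (show #B ≤ n by omega)
  rw [← cast_card_compl] at hratio
  set u : ℝ := (#Bᶜ : ℝ)
  obtain ⟨c, hc⟩ : ∃ c : ℝ, c * (ℓ - 1) = (ℓ + 2) * (ℓ + 1) :=
    ⟨(ℓ + 2) * (ℓ + 1) / (ℓ - 1), div_mul_cancel₀ _ (by linarith)⟩
  have hc_lower : ℓ + 4 ≤ c := by nlinarith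
  have hc_upper : c ≤ ℓ + 5 := by nlinarith
  have hoverlap := overlap_le_weight_add (c := c) (γ := 2 * ℓ) hp hq (by linarith) (by linarith)
    (by linarith) (by linarith) (by linarith) (by linarith) (by nlinarith) (by nlinarith)
  rw [← centerWeight] at hoverlap
  have hbase : 0 ≤ (ℓ + 1) * ℓ * (u - (ℓ + 2)) / 2 := by
    have := sub_nonneg.2 hu
    positivity
  have hℓu : (ℓ : ℝ) * (u / ℓ) = u := mul_div_cancel₀ _ (by linarith)
  rw [excess_fin, hratio, cast_fB hn hn']
  linear_combination hoverlap / 2 + hbase - u * (hitBelow F B + hitAbove F B - 1) / 2 * hc -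
    (ℓ + 2) * (ℓ + 1) / 2 * (2 - hitBelow F B - hitAbove F B) * hℓu

theorem mul_sub_eight_mul_le {L j : ℝ} (hj : 1 ≤ j) (hjL : j ≤ L) :
    (L + 2) * (L + 1) * (L - 8 * j) ≤ (L - j) ^ 2 * (L + 1 + j) := by
  have h₁ : 0 ≤ (j - 1) * L * (L + 1) :=
    mul_nonneg (mul_nonneg (by linarith) (by linarith)) (by linarith)
  have h₂ : 0 ≤ j * L * (L - j) :=
    mul_nonneg (mul_nonneg (by linarith) (by linarith)) (by linarith)
  have hL : 0 ≤ L := by linarith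
  have h₃ : 0 ≤ 4 * j * L ^ 2 + 20 * j * L + 16 * j + j ^ 2 + j ^ 3 := by positivity
  linear_combination 2 * h₁ + h₂ + h₃

theorem fB_mul_excess_add_le (hn : 2 * ℓ + 1 ≤ n) (hn' : n ≤ 2 * ℓ + 2) (hℓ : 1280 ≤ ℓ)
    (hF : IsInner F) {j : ℕ} (hB : #B + j = ℓ) (hj : 1 ≤ j) (hjℓ : 304 * j ≤ ℓ) {g : ℝ}
    (hg₁ : g ≤ 3 / 4 * (j * (j + 1) / ℓ)) (hg₂ : g ≤ 10 / ℓ) :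
    fB n * (excess F ℓ B + g) ≤ (centerWeight F B : ℝ) / 2 := by
  have hcompl := card_compl_add_card B
  rw [Fintype.card_fin] at hcompl
  have hp := hF.hitBound_below (B := B) (by omega)
  have hq := hF.hitBound_above (B := B) (by omega)
  have hu : (ℓ : ℝ) + 1 + j ≤ #Bᶜ := by exact_mod_cast (show ℓ + 1 + j ≤ #Bᶜ by omega)
  have hu' : (#Bᶜ : ℝ) ≤ ℓ + 2 + j := by exact_mod_cast (show #Bᶜ ≤ ℓ + 2 + j by omega)
  have hℓ' : (1280 : ℝ) ≤ ℓ := by exact_mod_cast hℓ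
  have hj' : (1 : ℝ) ≤ j := by exact_mod_cast hj
  have hjℓ' : 304 * (j : ℝ) ≤ ℓ := by exact_mod_cast hjℓ
  have hd : (#B : ℝ) = ℓ - j := by rw [← hB]; push_cast; ring
  have hw := one_add_div_le_choose_div_choose hn (show j < ℓ by omega)
  rw [show ℓ - j = #B by omega] at hw
  rw [hd] at hp
  have hℓ₀ : (ℓ : ℝ) ≠ 0 := by linarith
  have hfB := cast_fB hn hn'
  have hlower : 2 * fB n * (1 - 8 * j / ℓ) ≤ ((ℓ : ℝ) - j) * #Bᶜ * (ℓ - j) := by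
    have hcube := mul_sub_eight_mul_le hj' (show (j : ℝ) ≤ ℓ by linarith)
    have hmono := mul_le_mul_of_nonneg_left hu (sq_nonneg ((ℓ : ℝ) - j))
    calc 2 * (fB n : ℝ) * (1 - 8 * j / ℓ) = (ℓ + 2) * (ℓ + 1) * (ℓ - 8 * j) := by
          rw [hfB]; field_simp
      _ ≤ ((ℓ : ℝ) - j) * #Bᶜ * (ℓ - j) := by linarith
  have hupper : ((ℓ : ℝ) - j) * #Bᶜ ≤ 2 * fB n / ℓ := by
    rw [hfB, show 2 * (((ℓ : ℝ) + 2) * (ℓ + 1) * ℓ / 2) / ℓ = (ℓ + 2) * (ℓ + 1) by field_simp]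
    nlinarith
  rw [excess_fin]
  exact far_excess_le hp hq (by linarith) (by linarith) (Nat.cast_nonneg (fB n)) hℓ' hj' hjℓ' hw
    hg₁ hg₂ hlower hupper

end Levels

section InnerFamilies

variable {n ℓ : ℕ} {F : Finset (Finset (Fin n))} {B : Finset (Fin n)}

theorem fB_mul_excess_add_le_of_card_add_two_eq (hn : 2 * ℓ + 1 ≤ n) (hn' : n ≤ 2 * ℓ + 2)
    (hℓ : 1280 ≤ ℓ) (hF : IsInner F) (hB : #B + 2 = ℓ) :
    fB n * excess F ℓ B + 2 * ℓ * #Bᶜ ≤ (centerWeight F B : ℝ) / 2 := by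
  have hcompl := card_compl_add_card B
  rw [Fintype.card_fin] at hcompl
  have hu : (#Bᶜ : ℝ) ≤ ℓ + 4 := by exact_mod_cast (show #Bᶜ ≤ ℓ + 4 by omega)
  have hℓ' : (1280 : ℝ) ≤ ℓ := by exact_mod_cast hℓ
  have hfB := cast_fB hn hn'
  have hfB₀ : (0 : ℝ) < fB n := by rw [hfB]; positivity
  have hg : 2 * ℓ * #Bᶜ / (fB n : ℝ) ≤ 9 / 2 / ℓ := by
    rw [div_le_div_iff₀ hfB₀ (by linarith), hfB]
    have : (ℓ : ℝ) * #Bᶜ ≤ 9 / 8 * ((ℓ + 2) * (ℓ + 1)) := by nlinarith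
    linear_combination 2 * (ℓ : ℝ) * this
  have hg₁ : 2 * ℓ * #Bᶜ / (fB n : ℝ) ≤ 3 / 4 * ((2 : ℕ) * ((2 : ℕ) + 1) / ℓ) :=
    hg.trans_eq (by push_cast; ring)
  have hg₂ : 2 * ℓ * #Bᶜ / (fB n : ℝ) ≤ 10 / ℓ := hg.trans (by gcongr; norm_num)
  have h := fB_mul_excess_add_le hn hn' hℓ hF hB (by norm_num) (by omega) hg₁ hg₂
  rwa [mul_add, mul_div_cancel₀ _ hfB₀.ne'] at h

/-- The charge that a member of size `k` sends along each of its upper covers. The local inequality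
between excess and weight fails for members of size `ℓ` and `ℓ - 1` with few lower covers, and the
values are chosen to cover the deficit there while the members of size `ℓ - 2` can still pay. -/
def charge (ℓ k : ℕ) : ℝ := if k + 1 = ℓ then ℓ + 1 else if k + 2 = ℓ then 2 * ℓ else 0

theorem charge_nonneg (ℓ k : ℕ) : 0 ≤ charge ℓ k := by
  unfold charge
  split_ifs <;> positivity

theorem charge_of_succ_eq {k : ℕ} (hk : k + 1 = ℓ) : charge ℓ k = ℓ + 1 := if_pos hk

theorem charge_of_add_two_eq {k : ℕ} (hk : k + 2 = ℓ) : charge ℓ k = 2 * ℓ := by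
  rw [charge, if_neg (by omega), if_pos hk]

theorem charge_eq_zero {k : ℕ} (h₁ : k + 1 ≠ ℓ) (h₂ : k + 2 ≠ ℓ) : charge ℓ k = 0 := by
  rw [charge, if_neg h₁, if_neg h₂]

theorem fB_mul_excess_add_charge_le (hn : 2 * ℓ + 1 ≤ n) (hn' : n ≤ 2 * ℓ + 2)
    (hℓ : 100001 ≤ ℓ) (hF : IsInner F) (hB : ℓ - ℓ / 304 ≤ #B) (hB' : #B ≤ ℓ) :
    fB n * excess F ℓ B + charge ℓ #B * #Bᶜ ≤
      (centerWeight F B : ℝ) / 2 + charge ℓ (#B - 1) * #(lowerCovers F B) := by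
  obtain ⟨j, hj⟩ := Nat.exists_eq_add_of_le hB'
  match j, hj with
  | 0, hj =>
    rw [charge_eq_zero (by omega) (by omega), charge_of_succ_eq (by omega), zero_mul, add_zero]
    exact fB_mul_excess_le_of_card_eq hn hn' (by omega) hF hj.symm
  | 1, hj =>
    rw [charge_of_succ_eq hj.symm, charge_of_add_two_eq (by omega)]
    exact fB_mul_excess_le_of_card_add_one_eq hn hn' hℓ hF hj.symm
  | 2, hj =>
    rw [charge_of_add_two_eq hj.symm, charge_eq_zero (by omega) (by omega), zero_mul, add_zero]
    exact fB_mul_excess_add_le_of_card_add_two_eq hn hn' (by omega) hF hj.symm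
  | j + 3, hj =>
    rw [charge_eq_zero (by omega) (by omega), charge_eq_zero (by omega) (by omega), zero_mul,
      zero_mul, add_zero, add_zero]
    simpa using fB_mul_excess_add_le (g := 0) hn hn' (by omega) hF hj.symm (by omega) (by omega)
      (by positivity) (by positivity)

theorem sum_lower_half_le (hn : 2 * ℓ + 1 ≤ n) (hn' : n ≤ 2 * ℓ + 2) (hℓ : 15000000 ≤ ℓ)
    (hF : IsInner F) : ∑ B ∈ F with #B ≤ ℓ, fB n * excess F ℓ B ≤
      ∑ B ∈ F with #B ≤ ℓ, (centerWeight F B : ℝ) / 2 := by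
  refine sum_excess_le_sum_centerWeight (a := ℓ - ℓ / 304) (by omega)
    (by rw [Fintype.card_fin]; omega) (Nat.cast_nonneg _) (charge_nonneg ℓ) (fun k hk ↦ ?_)
    (by simpa using sum_range_choose_le_choose hn hℓ)
    fun B _ hB hB' ↦ fB_mul_excess_add_charge_le hn hn' (by omega) hF hB hB'
  by_contra hk'
  exact hk (charge_eq_zero (by omega) (by omega))

theorem sum_filter_compls (F : Finset (Finset (Fin n))) (ℓ : ℕ) (g : Finset (Fin n) → ℝ) :
    ∑ B ∈ Fᶜˢ with #B ≤ ℓ, g B = ∑ B ∈ F with #Bᶜ ≤ ℓ, g Bᶜ := by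
  rw [sum_filter, sum_filter, sum_compls]

theorem sum_upper_half_le (hn : 2 * ℓ + 1 ≤ n) (hn' : n ≤ 2 * ℓ + 2) (hℓ : 15000000 ≤ ℓ)
    (hF : IsInner F) : ∑ B ∈ F with #Bᶜ ≤ ℓ, fB n * excess F ℓ B ≤
      ∑ B ∈ F with #Bᶜ ≤ ℓ, (centerWeight F B : ℝ) / 2 := by
  simpa only [sum_filter_compls, excess_compls_compl, centerWeight_compls_compl] using
    sum_lower_half_le hn hn' hℓ hF.compls

theorem fB_mul_excess_le_of_middle (hn' : n ≤ 2 * ℓ + 2) (hℓ : 4 ≤ ℓ) (hF : IsInner F)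
    (hB : ℓ < #B) (hB' : ℓ < #Bᶜ) :
    fB n * excess F ℓ B ≤ (centerWeight F B : ℝ) / 2 + fB n * (1 / (ℓ + 2)) := by
  have hcompl := card_compl_add_card B
  rw [Fintype.card_fin] at hcompl
  obtain rfl : n = 2 * ℓ + 2 := by omega
  have hcard : #B = ℓ + 1 := by omega
  have hcardc : #Bᶜ = ℓ + 1 := by omega
  have hp := hF.hitBound_below (B := B) (by omega)
  have hq := hF.hitBound_above (B := B) (by omega)
  rw [hcard] at hp
  rw [hcardc] at hq
  have hfive : (5 : ℝ) ≤ (ℓ + 1 : ℕ) := by exact_mod_cast (show 5 ≤ ℓ + 1 by omega)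
  have hweight := hp.middle_le_weight hq hfive
  rw [← centerWeight] at hweight
  have hstep := choose_div_choose_of_succ_eq (n := 2 * ℓ + 2) (k := ℓ) rfl (by omega)
  have hratio : ((2 * ℓ + 2).choose ℓ : ℝ) / (2 * ℓ + 2).choose (ℓ + 1) = (ℓ + 1) / (ℓ + 2) := by
    rw [← inv_div, hstep, inv_div]
    push_cast
    ring
  rw [excess_fin, hcard, hratio, cast_fB (by omega) le_rfl]
  push_cast at hweight
  field_simp
  linear_combination hweight

theorem card_middle_le (hn : 2 * ℓ + 1 ≤ n) (hn' : n ≤ 2 * ℓ + 2) (F : Finset (Finset (Fin n))) :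
    #{B ∈ F | ℓ < #B ∧ ℓ < #Bᶜ} * (1 / (ℓ + 2) : ℝ) ≤ Sigma2 n - 2 * n.choose ℓ := by
  have hcompl (B : Finset (Fin n)) : #Bᶜ + #B = n := by rw [card_compl_add_card, Fintype.card_fin]
  obtain rfl | rfl : n = 2 * ℓ + 1 ∨ n = 2 * ℓ + 2 := by omega
  · have hempty : {B ∈ F | ℓ < #B ∧ ℓ < #Bᶜ} = ∅ := filter_false_of_mem fun B _ hB ↦ by
      have := hcompl B
      omega
    have hsigma : Sigma2 (2 * ℓ + 1) = 2 * (2 * ℓ + 1).choose ℓ := by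
      rw [Sigma2, show (2 * ℓ + 1) / 2 = ℓ by omega, Nat.choose_symm_half, ← two_mul]
    rw [hempty, hsigma]
    simp
  · have hsub : {B ∈ F | ℓ < #B ∧ ℓ < #Bᶜ} ⊆ powersetCard (ℓ + 1) univ := fun B hB ↦ by
      have := hcompl B
      have := (mem_filter.1 hB).2
      exact mem_powersetCard_univ.2 (by omega)
    have hcard : (#{B ∈ F | ℓ < #B ∧ ℓ < #Bᶜ} : ℝ) ≤ (2 * ℓ + 2).choose (ℓ + 1) := by
      simpa using card_le_card hsub
    have hsigma : Sigma2 (2 * ℓ + 2) = (2 * ℓ + 2).choose (ℓ + 1) + (2 * ℓ + 2).choose ℓ := by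
      rw [Sigma2, show (2 * ℓ + 2) / 2 = ℓ + 1 by omega,
        ← Nat.choose_symm_of_eq_add (show 2 * ℓ + 2 = ℓ + (ℓ + 1 + 1) by ring)]
    have hstep : ((2 * ℓ + 2).choose (ℓ + 1) : ℝ) * (ℓ + 1) = (2 * ℓ + 2).choose ℓ * (ℓ + 2) := by
      have h := Nat.choose_succ_right_eq (2 * ℓ + 2) ℓ
      rw [show 2 * ℓ + 2 - ℓ = ℓ + 2 by omega] at h
      exact_mod_cast h
    rw [hsigma, mul_one_div, div_le_iff₀ (by positivity)]
    push_cast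
    linarith

theorem sum_eq_lower_add_upper_add_middle (hn : 2 * ℓ + 1 ≤ n) (F : Finset (Finset (Fin n)))
    (g : Finset (Fin n) → ℝ) :
    ∑ B ∈ F, g B = ∑ B ∈ F with #B ≤ ℓ, g B + ∑ B ∈ F with #Bᶜ ≤ ℓ, g B +
      ∑ B ∈ F with ℓ < #B ∧ ℓ < #Bᶜ, g B := by
  have hupper : {B ∈ F | ¬ #B ≤ ℓ ∧ #Bᶜ ≤ ℓ} = {B ∈ F | #Bᶜ ≤ ℓ} := filter_congr fun B _ ↦ by
    have h := card_compl_add_card B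
    rw [Fintype.card_fin] at h
    omega
  rw [← sum_filter_add_sum_filter_not F (#· ≤ ℓ),
    ← sum_filter_add_sum_filter_not {B ∈ F | ¬ #B ≤ ℓ} (#·ᶜ ≤ ℓ), filter_filter, filter_filter,
    hupper]
  simp only [not_le, add_assoc]

theorem mul_fB_le_numButterflies_of_isInner {E : ℕ} (hn : 2 * ℓ + 1 ≤ n) (hn' : n ≤ 2 * ℓ + 2)
    (hℓ : 15000000 ≤ ℓ) (hF : IsInner F) (hcard : Sigma2 n + E ≤ #F) :
    E * fB n ≤ numButterflies F := by
  have hmiddle : ∑ B ∈ F with ℓ < #B ∧ ℓ < #Bᶜ, fB n * excess F ℓ B ≤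
      ∑ B ∈ F with ℓ < #B ∧ ℓ < #Bᶜ, (centerWeight F B : ℝ) / 2 +
        fB n * (Sigma2 n - 2 * n.choose ℓ) := by
    refine (sum_le_sum fun B hB ↦ fB_mul_excess_le_of_middle hn' (by omega) hF
      (mem_filter.1 hB).2.1 (mem_filter.1 hB).2.2).trans ?_
    rw [sum_add_distrib, sum_const, nsmul_eq_mul, mul_left_comm]
    gcongr
    exact card_middle_le hn hn' F
  have hexcess : fB n * (#F - 2 * n.choose ℓ : ℝ) ≤ ∑ B ∈ F, fB n * excess F ℓ B := by
    rw [← mul_sum]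
    gcongr
    simpa using card_sub_le_sum_excess F ℓ
  have hcard' : (Sigma2 n + E : ℝ) ≤ #F := by exact_mod_cast hcard
  have hbutterflies : ∑ B ∈ F, (centerWeight F B : ℝ) / 2 ≤ numButterflies F := by
    rw [← sum_div, div_le_iff₀ two_pos, mul_comm]
    exact_mod_cast sum_centerWeight_le F
  have hreal : (E * fB n : ℝ) ≤ numButterflies F := by
    rw [sum_eq_lower_add_upper_add_middle hn] at hexcess hbutterflies
    have hscaled := mul_le_mul_of_nonneg_left hcard' (Nat.cast_nonneg (α := ℝ) (fB n))
    linear_combination hscaled + hexcess + hmiddle + hbutterflies +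
      sum_lower_half_le hn hn' hℓ hF + sum_upper_half_le hn hn' hℓ hF
  exact_mod_cast hreal

end InnerFamilies

section Exclusion

theorem card_filter_card_lt_le {α : Type*} {G : Finset (Finset α)} {V : Finset α} {m : ℕ}
    (hV : ∀ B ∈ G, B ⊆ V) :
    #{B ∈ G | #B < m} ≤ ∑ k ∈ range m, (#V).choose k := by
  classical
  have hsub : {B ∈ G | #B < m} ⊆ (range m).biUnion (powersetCard · V) := fun B hB ↦ by
    obtain ⟨hBG, hBm⟩ := mem_filter.1 hB
    exact mem_biUnion.2 ⟨#B, mem_range.2 hBm, mem_powersetCard.2 ⟨hV B hBG, rfl⟩⟩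
  refine (card_le_card hsub).trans (card_biUnion_le.trans_eq ?_)
  simp only [card_powersetCard]

variable {α : Type*} [DecidableEq α] {F G : Finset (Finset α)} {V C : Finset α}

theorem hitBelow_le_card_below_div (hF : ∀ A ∈ F, 1 ≤ #A) (B : Finset α) :
    hitBelow F B ≤ #(below F B) / #B := by
  have hterm : ∀ A ∈ below F B, 1 / ((#B).choose #A : ℝ) ≤ 1 / #B := fun A hA ↦ by
    obtain ⟨hAF, hAB⟩ := mem_below.1 hA
    have hlt := card_lt_card hAB
    have hpos : 0 < #B := by omega
    have hle := choose_le_choose_of_add_le (hF A hAF) hlt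
    rw [Nat.choose_one_right] at hle
    gcongr
  calc hitBelow F B ≤ ∑ A ∈ below F B, 1 / ((#B).choose #A : ℝ) := hitBelow_le_sum F B
    _ ≤ #(below F B) • (1 / (#B : ℝ)) := sum_le_card_nsmul _ _ _ hterm
    _ = #(below F B) / #B := by rw [nsmul_eq_mul, mul_one_div]

theorem card_below_filter_le (F : Finset (Finset α)) (P : Finset α → Prop) [DecidablePred P]
    (B : Finset α) : #(below {A ∈ F | P A} B) ≤ #(below F B) :=
  card_le_card (filter_subset_filter _ (filter_subset _ _))

theorem one_sub_one_div_mul_card_le {m : ℕ} (hm : 1 ≤ m) (hV : ∀ B ∈ G, B ⊆ V)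
    (hGm : ∀ B ∈ G, m ≤ #B) (hG : ∀ B ∈ G, #(below G B) ≤ 1) :
    (1 - 1 / m : ℝ) * #G ≤ (#V).choose (#V / 2) := by
  have hpos : (0 : ℝ) < (#V).choose (#V / 2) := by
    exact_mod_cast Nat.choose_pos (Nat.div_le_self _ _)
  have hterm : ∀ B ∈ G, (1 - 1 / m : ℝ) / (#V).choose (#V / 2) ≤
      (1 - hitBelow G B) / (#V).choose #B := fun B hB ↦ by
    have hm' : (0 : ℝ) < m := by exact_mod_cast hm
    have hhit : hitBelow G B ≤ 1 / m :=
      (hitBelow_le_card_below_div (fun A hA ↦ hm.trans (hGm A hA)) B).trans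
        (div_le_div₀ zero_le_one (by exact_mod_cast hG B hB) hm' (by exact_mod_cast hGm B hB))
    refine div_le_div₀ (by linarith [hitBelow_le_one G B]) (by linarith) ?_ ?_
    · exact_mod_cast Nat.choose_pos (card_le_card (hV B hB))
    · exact_mod_cast Nat.choose_le_middle _ _
  have hlym := sum_one_sub_hitBelow_div_choose_le_one G V
  rw [filter_true_of_mem hV] at hlym
  have hsum := (card_nsmul_le_sum _ _ _ hterm).trans hlym
  rwa [nsmul_eq_mul, mul_div_assoc', div_le_one hpos, mul_comm] at hsum

theorem card_le_of_card_below_le_one (hVcard : 10000 ≤ #V) (hV : ∀ B ∈ G, B ⊆ V)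
    (hG : ∀ B ∈ G, #(below G B) ≤ 1) : (#G : ℝ) ≤ 63 / 50 * (#V).choose (#V / 2) := by
  have hlarge : (1 - 1 / (5 : ℕ) : ℝ) * #{B ∈ G | ¬ #B < 5} ≤ (#V).choose (#V / 2) :=
    one_sub_one_div_mul_card_le (by norm_num) (fun B hB ↦ hV B (mem_filter.1 hB).1)
      (fun B hB ↦ not_lt.1 (mem_filter.1 hB).2)
      fun B hB ↦ (card_below_filter_le G _ B).trans (hG B (mem_filter.1 hB).1)
  have hsmall : 1000 * #{B ∈ G | #B < 5} ≤ (#V).choose (#V / 2) :=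
    calc 1000 * #{B ∈ G | #B < 5} ≤ 1000 * (1 * (#V).choose 5) := by
          gcongr
          exact (card_filter_card_lt_le hV).trans (sum_range_choose_le (by omega))
      _ ≤ 1 * (#V).choose 6 := by
          rw [one_mul]
          exact mul_choose_le_mul_choose_succ (by omega)
      _ ≤ (#V).choose (#V / 2) := by
          rw [one_mul]
          exact Nat.choose_le_middle _ _
  have hsmall' : (1000 : ℝ) * #{B ∈ G | #B < 5} ≤ (#V).choose (#V / 2) := by
    exact_mod_cast hsmall
  have hsplit : (#{B ∈ G | #B < 5} : ℝ) + #{B ∈ G | ¬ #B < 5} = #G := by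
    exact_mod_cast card_filter_add_card_filter_not (s := G) (#· < 5)
  push_cast at hlarge
  linarith

theorem centerWeight_pos {B : Finset α} (hbelow : 2 ≤ #(below F B))
    (habove : (above F B).Nonempty) : 0 < centerWeight F B :=
  Nat.add_pos_left (Nat.mul_pos habove.card_pos (Nat.add_pos_left (Nat.choose_pos hbelow) _)) _

variable [Fintype α] {x : α}

theorem card_le_sum_centerWeight_add (hC : C ∈ F) (hx : Cᶜ ⊆ {x}) :
    #F ≤ ∑ B ∈ F, centerWeight F B + 1 + #{B ∈ F | #(below F B) ≤ 1} +
      #{B ∈ F | x ∈ B ∧ above F B = ∅} := by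
  have hcover : F ⊆ {B ∈ F | 0 < centerWeight F B} ∪ {C} ∪ {B ∈ F | #(below F B) ≤ 1} ∪
      {B ∈ F | x ∈ B ∧ above F B = ∅} := fun B hB ↦ by
    simp only [mem_union, mem_filter, mem_singleton, hB, true_and]
    by_contra! ⟨⟨⟨hweight, hBC⟩, hbelow⟩, hmax⟩
    have habove : above F B = ∅ := by
      by_contra! habove
      exact hweight.not_gt (centerWeight_pos hbelow habove)
    have hxB : x ∉ B := fun hxB ↦ (hmax hxB).ne_empty habove
    have hsub : B ⊆ C := fun y hy ↦ by
      by_contra hyC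
      exact hxB (mem_singleton.1 (hx (mem_compl.2 hyC)) ▸ hy)
    exact notMem_empty C (habove ▸ mem_above.2 ⟨hC, hsub.ssubset_of_ne hBC⟩)
  have hweight : #{B ∈ F | 0 < centerWeight F B} ≤ ∑ B ∈ F, centerWeight F B := by
    rw [card_filter]
    refine sum_le_sum fun B _ ↦ ?_
    split_ifs with h
    exacts [h, Nat.zero_le _]
  calc #F ≤ _ := card_le_card hcover
    _ ≤ #{B ∈ F | 0 < centerWeight F B} + #{C} + #{B ∈ F | #(below F B) ≤ 1} +
          #{B ∈ F | x ∈ B ∧ above F B = ∅} :=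
        (card_union_le _ _).trans (add_le_add_left ((card_union_le _ _).trans
          (add_le_add_left (card_union_le _ _) _)) _)
    _ ≤ _ := by
        rw [card_singleton]
        gcongr

theorem card_maximal_mem_le (hα : 10001 ≤ Fintype.card α) (F : Finset (Finset α)) (x : α) :
    (#{B ∈ F | x ∈ B ∧ above F B = ∅} : ℝ) ≤
      63 / 50 * (Fintype.card α - 1).choose ((Fintype.card α - 1) / 2) := by
  set T := {B ∈ F | x ∈ B ∧ above F B = ∅}
  have hcard : #(univ.erase x) = Fintype.card α - 1 := by
    rw [card_erase_of_mem (mem_univ x), card_univ]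
  rw [← hcard, ← card_compls]
  refine card_le_of_card_below_le_one (by omega) (fun B hB ↦ ?_) fun B hB ↦ ?_
  · have hxB := (mem_filter.1 (mem_compls.1 hB)).2.1
    exact subset_erase.2 ⟨subset_univ B, mem_compl.1 hxB⟩
  · have hmax := (mem_filter.1 (mem_compls.1 hB)).2.2
    have hempty : above T Bᶜ = ∅ :=
      subset_empty.1 (hmax ▸ filter_subset_filter _ (filter_subset _ _))
    rw [← compl_compl B, below_compls_compl, hempty]
    simp

theorem hundred_mul_choose_pred_half_le {n : ℕ} (hn : 1000 ≤ n) :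
    100 * (n - 1).choose ((n - 1) / 2) ≤ 51 * n.choose (n / 2) := by
  obtain ⟨k, rfl⟩ := Nat.exists_eq_add_of_lt (show 0 < n by omega)
  rw [Nat.zero_add, Nat.add_sub_cancel]
  refine Nat.le_of_mul_le_mul_right ?_ k.succ_pos
  calc 100 * k.choose (k / 2) * (k + 1)
      = (k + 1).choose (k / 2) * (100 * (k + 1 - k / 2)) := by
        rw [mul_assoc, Nat.choose_mul_succ_eq]
        ring
    _ ≤ (k + 1).choose ((k + 1) / 2) * (51 * (k + 1)) :=
        Nat.mul_le_mul (Nat.choose_le_middle _ _) (by omega)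
    _ = 51 * (k + 1).choose ((k + 1) / 2) * (k + 1) := by ring

theorem mul_choose_half_le_sigma2 {n : ℕ} (hn : 1000 ≤ n) :
    199 * n.choose (n / 2) ≤ 100 * Sigma2 n := by
  have h : 99 * n.choose (n / 2) ≤ 100 * n.choose (n / 2 + 1) :=
    mul_choose_le_mul_choose_succ (by omega)
  rw [Sigma2]
  omega

theorem two_le_card_compl_of_sum_centerWeight_le {n : ℕ} {F : Finset (Finset (Fin n))}
    (hn : 10001 ≤ n) (hcard : Sigma2 n ≤ #F)
    (hfew : 50 * (∑ B ∈ F, centerWeight F B + 1) ≤ n.choose (n / 2))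
    {C : Finset (Fin n)} (hC : C ∈ F) : 2 ≤ #Cᶜ := by
  by_contra! hsmall
  have : Nonempty (Fin n) := ⟨⟨0, by omega⟩⟩
  obtain ⟨x, hx⟩ := card_le_one_iff_subset_singleton.1 (Nat.lt_succ_iff.1 hsmall)
  have hsplit : (#F : ℝ) ≤ (∑ B ∈ F, centerWeight F B + 1 : ℕ) + #{B ∈ F | #(below F B) ≤ 1} +
      #{B ∈ F | x ∈ B ∧ above F B = ∅} := by
    exact_mod_cast card_le_sum_centerWeight_add hC hx
  have hbelow := card_le_of_card_below_le_one (G := {B ∈ F | #(below F B) ≤ 1}) (V := univ)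
    (by simpa using by omega) (fun B _ ↦ subset_univ B)
    fun B hB ↦ (card_below_filter_le F _ B).trans (mem_filter.1 hB).2
  have hmax := card_maximal_mem_le (by simpa using hn) F x
  simp only [card_univ, Fintype.card_fin] at hbelow hmax
  have hpred : (100 : ℝ) * (n - 1).choose ((n - 1) / 2) ≤ 51 * n.choose (n / 2) := by
    exact_mod_cast hundred_mul_choose_pred_half_le (by omega)
  have hsigma : (199 : ℝ) * n.choose (n / 2) ≤ 100 * Sigma2 n := by
    exact_mod_cast mul_choose_half_le_sigma2 (by omega)
  have hcard' : (Sigma2 n : ℝ) ≤ #F := by exact_mod_cast hcard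
  have hfew' : (50 : ℝ) * (∑ B ∈ F, centerWeight F B + 1 : ℕ) ≤ n.choose (n / 2) := by
    exact_mod_cast hfew
  have hpos : (0 : ℝ) < n.choose (n / 2) := by exact_mod_cast Nat.choose_pos (n.div_le_self 2)
  linarith

theorem isInner_of_sum_centerWeight_le {n : ℕ} {F : Finset (Finset (Fin n))}
    (hn : 10001 ≤ n) (hcard : Sigma2 n ≤ #F)
    (hfew : 50 * (∑ B ∈ F, centerWeight F B + 1) ≤ n.choose (n / 2)) : IsInner F := by
  refine fun A hA ↦ ⟨?_, two_le_card_compl_of_sum_centerWeight_le hn hcard hfew hA⟩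
  have hfew' : 50 * (∑ B ∈ Fᶜˢ, centerWeight Fᶜˢ B + 1) ≤ n.choose (n / 2) := by
    simpa only [sum_compls, centerWeight_compls_compl] using hfew
  have hA' : Aᶜ ∈ Fᶜˢ := by rwa [mem_compls, compl_compl]
  simpa using two_le_card_compl_of_sum_centerWeight_le hn (by rwa [card_compls]) hfew' hA'

end Exclusion

theorem two_pow_le_mul_choose_half (n : ℕ) : 2 ^ n ≤ (n + 1) * n.choose (n / 2) := by
  rw [← Nat.sum_range_choose]
  simpa using sum_le_card_nsmul (range (n + 1)) n.choose _ fun k _ ↦ Nat.choose_le_middle k n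

theorem fB_le_pow {n : ℕ} (hn : 3 ≤ n) : fB n ≤ n ^ 3 :=
  calc fB n ≤ n * n ^ 2 := Nat.mul_le_mul (by omega)
        ((Nat.choose_le_pow _ 2).trans (Nat.pow_le_pow_left (by omega) 2))
    _ = n ^ 3 := by ring

theorem hundred_mul_fB_le_choose_half {n E : ℕ} (hn : 1000 ≤ n) (hE : E * n ^ 5 ≤ 2 ^ n) :
    100 * (E * fB n) ≤ n.choose (n / 2) := by
  refine Nat.le_of_mul_le_mul_left ?_ n.succ_pos
  calc (n + 1) * (100 * (E * fB n)) = E * (fB n * (100 * (n + 1))) := by ring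
    _ ≤ E * (n ^ 3 * n ^ 2) := by
        gcongr
        · exact fB_le_pow (by omega)
        · nlinarith
    _ = E * n ^ 5 := by ring
    _ ≤ (n + 1) * n.choose (n / 2) := hE.trans (two_pow_le_mul_choose_half n)

theorem pow_six_le_two_pow {n : ℕ} (hn : 30 ≤ n) : n ^ 6 ≤ 2 ^ n := by
  induction n, hn using Nat.le_induction with
  | base => norm_num
  | succ n hn ih =>
    have hstep : (10 * (n + 1)) ^ 6 ≤ (11 * n) ^ 6 := Nat.pow_le_pow_left (by omega) 6
    rw [mul_pow, mul_pow] at hstep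
    rw [pow_succ 2]
    omega

theorem mul_pow_five_le_two_pow {n E : ℕ} (hn : 30 ≤ n) (hE : E ≤ n) : E * n ^ 5 ≤ 2 ^ n :=
  calc E * n ^ 5 ≤ n * n ^ 5 := Nat.mul_le_mul_right _ hE
    _ = n ^ 6 := by ring
    _ ≤ 2 ^ n := pow_six_le_two_pow hn

end ButterflySupersat

open ButterflySupersat in
theorem supersat_butterfly_exact_general {n E : ℕ} (hn : 30000001 ≤ n) (hE : E * n ^ 5 ≤ 2 ^ n)
    {F : Finset (Finset (Fin n))} (hF : Sigma2 n + E ≤ #F) : E * fB n ≤ numButterflies F := by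
  by_contra! hfew
  have hsum := sum_centerWeight_le F
  have hchoose := hundred_mul_fB_le_choose_half (by omega) hE
  have hinner : IsInner F := isInner_of_sum_centerWeight_le (by omega) (by omega) (by omega)
  exact hfew.not_ge <| mul_fB_le_numButterflies_of_isInner (ℓ := (n - 1) / 2) (by omega) (by omega)
    (by omega) hinner hF

/-- Main theorem, part (b): for `1 ≤ E ≤ n/100`, every `F ⊆ 2^[n]` with
`|F| = Σ(n,2) + E` contains at least `E·f(n)` copies of the butterfly. -/
theorem supersat_butterfly_exact :
    ∃ n₀ : ℕ, ∀ n : ℕ, n₀ ≤ n → ∀ E : ℕ, 1 ≤ E → (E : ℝ) ≤ (n : ℝ) / 100 →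
      ∀ F : Finset (Finset (Fin n)), F.card = Sigma2 n + E →
      E * fB n ≤ numButterflies F := by
  refine ⟨30000001, fun n hn E _ hE F hF ↦ supersat_butterfly_exact_general hn ?_ hF.ge⟩
  have hEn : (E : ℝ) ≤ n := hE.trans (div_le_self n.cast_nonneg (by norm_num))
  exact ButterflySupersat.mul_pow_five_le_two_pow (by omega) (by exact_mod_cast hEn)
end

section
/- For every real ε ∈ (0,1) there exists n₀ such that for every n ≥ n₀ and every integer m with 1 ≤ m ≤ 2^(n^(1−ε)) the following holds: if F ⊆ 2^[n] is butterfly-free and |F \ S| ≥ m for every S ∈ Σ*(n,2), then |F| ≤ Σ(n,2) − m/4. -/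
def ButterflyFree {n : ℕ} (F : Finset (Finset (Fin n))) : Prop :=
  ∀ S ⊆ F, ¬ IsButterfly S

def levelFam (n k : ℕ) : Finset (Finset (Fin n)) :=
  Finset.univ.filter (fun S => S.card = k)

def SigmaStar (n : ℕ) : Set (Finset (Finset (Fin n))) :=
  { levelFam n (n / 2) ∪ levelFam n (n / 2 + 1),
    levelFam n ((n + 1) / 2 - 1) ∪ levelFam n ((n + 1) / 2) }

/-!
Call a member of a butterfly-free family `F` a middle member if it lies strictly between two other
members; it then has exactly one member below it and one above it. If `∅` and `univ` are not in
`F`, at most three fifths of the full chains through a middle member also meet one of these two, so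
counting full chains through the members of `F`, the middle ones with an extra weight, shows that
each middle member costs a third of a set. If there are few of them, delete them: the rest is a
2-Sperner family, which is pushed into the middle levels by replacing the largest and the smallest
sets by their shadows. Each such replacement gains four sets for every set moved, because the edge
isoperimetric inequality makes the shadow of an exponentially small family five times as large,
while a larger family gains enough by the local LYM inequality. When `n` is even three levels
remain, and Kruskal–Katona shows that the two outer ones cannot both be occupied without loss.

If `∅ ∈ F`, then no set of `F.erase ∅` is strictly contained in two others. So `F.erase ∅` is
2-Sperner and the above applies, unless it lies on two middle levels; in that case having no set
below two others costs about `n / 2` sets.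
-/

open Finset
open scoped FinsetFamily

/-! ### Edges and shadows in the cube -/

section EdgeIsoperimetry

variable {α : Type*} [DecidableEq α] {𝒜 : Finset (Finset α)} {r c : ℕ}

/-- The number of edges of the hypercube `2^α` with both endpoints in `𝒜`, each edge being counted
at its upper endpoint. -/
def cubeEdges (𝒜 : Finset (Finset α)) : ℕ :=
  ∑ A ∈ 𝒜, #{a ∈ A | A.erase a ∈ 𝒜}

theorem sum_filter_notMem_le_cubeEdges (a : α) (𝒜 : Finset (Finset α)) :
    ∑ A ∈ 𝒜 with a ∉ A, #{b ∈ A | A.erase b ∈ 𝒜} ≤ cubeEdges (𝒜.nonMemberSubfamily a) := by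
  refine sum_le_sum fun A hA ↦ card_le_card fun b hb ↦ ?_
  simp only [mem_filter, mem_nonMemberSubfamily, mem_erase] at hA hb ⊢
  exact ⟨hb.1, hb.2, fun h ↦ hA.2 h.2⟩

theorem sum_filter_mem_le_cubeEdges_add (a : α) (𝒜 : Finset (Finset α)) :
    ∑ A ∈ 𝒜 with a ∈ A, #{b ∈ A | A.erase b ∈ 𝒜} ≤
      cubeEdges (𝒜.memberSubfamily a) +
        #(𝒜.memberSubfamily a ∩ 𝒜.nonMemberSubfamily a) := by
  have erase_injOn : Set.InjOn (fun A : Finset α ↦ A.erase a) ({A ∈ 𝒜 | a ∈ A} : Finset _) :=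
    (erase_injOn' a).mono fun A hA ↦ (mem_filter.1 hA).2
  have sum_memberSubfamily (f : Finset α → ℕ) :
      ∑ B ∈ 𝒜.memberSubfamily a, f B = ∑ A ∈ 𝒜 with a ∈ A, f (A.erase a) := sum_image erase_injOn
  rw [cubeEdges, ← filter_mem_eq_inter, card_filter, ← sum_add_distrib, sum_memberSubfamily]
  refine sum_le_sum fun A hA ↦ ?_
  have haA : a ∈ A := (mem_filter.1 hA).2
  rw [← insert_erase haA, filter_insert, insert_erase haA]
  have edges_avoiding_a : {b ∈ A.erase a | A.erase b ∈ 𝒜} ⊆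
      {b ∈ A.erase a | (A.erase a).erase b ∈ 𝒜.memberSubfamily a} := by
    intro b hb
    obtain ⟨⟨hba, hbA⟩, hb𝒜⟩ : (b ≠ a ∧ b ∈ A) ∧ A.erase b ∈ 𝒜 := by
      simpa only [mem_filter, mem_erase] using hb
    have : insert a ((A.erase a).erase b) = A.erase b := by
      rw [erase_right_comm, insert_erase (mem_erase.2 ⟨hba.symm, haA⟩)]
    simp [this, hba, hbA, hb𝒜]
  have := card_le_card edges_avoiding_a
  by_cases hAa : A.erase a ∈ 𝒜 <;> simpa [hAa] using this

theorem cubeEdges_le (a : α) (𝒜 : Finset (Finset α)) :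
    cubeEdges 𝒜 ≤ cubeEdges (𝒜.memberSubfamily a) + cubeEdges (𝒜.nonMemberSubfamily a) +
      #(𝒜.memberSubfamily a ∩ 𝒜.nonMemberSubfamily a) := by
  have := sum_filter_mem_le_cubeEdges_add a 𝒜
  have := sum_filter_notMem_le_cubeEdges a 𝒜
  rw [cubeEdges, ← sum_filter_add_sum_filter_not 𝒜 (a ∈ ·)]
  omega

theorem two_pow_mul_pow_self_le {p q d : ℕ} (hp : d ≤ p) (hq : d ≤ q) :
    2 ^ d * (p ^ p * q ^ q) ≤ (p + q) ^ (p + q) := by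
  wlog hpq : p ≤ q generalizing p q
  · rw [mul_comm (p ^ p), add_comm]
    exact this hq hp (le_of_not_ge hpq)
  calc 2 ^ d * (p ^ p * q ^ q) ≤ 2 ^ p * (p ^ p * q ^ q) := by gcongr; norm_num
    _ = (2 * p) ^ p * q ^ q := by rw [mul_pow, mul_assoc]
    _ ≤ (p + q) ^ p * (p + q) ^ q := by gcongr <;> omega
    _ = (p + q) ^ (p + q) := (pow_add ..).symm

theorem two_pow_cubeEdges_le (𝒜 : Finset (Finset α)) : 2 ^ cubeEdges 𝒜 ≤ #𝒜 ^ #𝒜 := by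
  induction 𝒜 using memberFamily_induction_on with
  | empty => simp [cubeEdges]
  | singleton_empty => simp [cubeEdges]
  | @subfamily a 𝒜 ih₀ ih₁ =>
    set 𝒜₁ := 𝒜.memberSubfamily a
    set 𝒜₀ := 𝒜.nonMemberSubfamily a
    calc 2 ^ cubeEdges 𝒜 ≤ 2 ^ (cubeEdges 𝒜₁ + cubeEdges 𝒜₀ + #(𝒜₁ ∩ 𝒜₀)) :=
          Nat.pow_le_pow_right two_pos (cubeEdges_le a 𝒜)
      _ = 2 ^ #(𝒜₁ ∩ 𝒜₀) * (2 ^ cubeEdges 𝒜₁ * 2 ^ cubeEdges 𝒜₀) := by ring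
      _ ≤ 2 ^ #(𝒜₁ ∩ 𝒜₀) * (#𝒜₁ ^ #𝒜₁ * #𝒜₀ ^ #𝒜₀) := by gcongr
      _ ≤ (#𝒜₁ + #𝒜₀) ^ (#𝒜₁ + #𝒜₀) :=
          two_pow_mul_pow_self_le (card_le_card inter_subset_left) (card_le_card inter_subset_right)
      _ = #𝒜 ^ #𝒜 := by rw [card_memberSubfamily_add_card_nonMemberSubfamily]

theorem mul_card_le_cubeEdges_union_shadow (h𝒜 : (𝒜 : Set (Finset α)).Sized r) :
    r * #𝒜 ≤ cubeEdges (𝒜 ∪ ∂ 𝒜) :=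
  calc r * #𝒜 = ∑ A ∈ 𝒜, #{a ∈ A | A.erase a ∈ 𝒜 ∪ ∂ 𝒜} := by
        rw [mul_comm, ← smul_eq_mul, ← sum_const]
        refine sum_congr rfl fun A hA ↦ ?_
        rw [filter_true_of_mem fun a ha ↦ mem_union_right _ (erase_mem_shadow hA ha), h𝒜 hA]
    _ ≤ cubeEdges (𝒜 ∪ ∂ 𝒜) := sum_le_sum_of_subset subset_union_left

theorem mul_card_le_card_shadow (h𝒜 : (𝒜 : Set (Finset α)).Sized r)
    (hsmall : ((c + 1) * #𝒜) ^ (c + 1) < 2 ^ r) : c * #𝒜 ≤ #(∂ 𝒜) := by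
  by_contra! hshadow
  have hpos : 0 < #𝒜 := Nat.pos_of_mul_pos_left (hshadow.trans_le' (Nat.zero_le _))
  have hunion : #(𝒜 ∪ ∂ 𝒜) ≤ (c + 1) * #𝒜 := by
    have := card_union_le 𝒜 (∂ 𝒜)
    rw [add_one_mul]
    omega
  refine (Nat.pow_lt_pow_left hsmall hpos.ne').not_ge ?_
  calc (2 ^ r) ^ #𝒜 = 2 ^ (r * #𝒜) := (pow_mul ..).symm
    _ ≤ 2 ^ cubeEdges (𝒜 ∪ ∂ 𝒜) :=
        Nat.pow_le_pow_right two_pos (mul_card_le_cubeEdges_union_shadow h𝒜)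
    _ ≤ #(𝒜 ∪ ∂ 𝒜) ^ #(𝒜 ∪ ∂ 𝒜) := two_pow_cubeEdges_le _
    _ ≤ ((c + 1) * #𝒜) ^ #(𝒜 ∪ ∂ 𝒜) := Nat.pow_le_pow_left hunion _
    _ ≤ ((c + 1) * #𝒜) ^ ((c + 1) * #𝒜) := Nat.pow_le_pow_right (by positivity) hunion
    _ = (((c + 1) * #𝒜) ^ (c + 1)) ^ #𝒜 := pow_mul ..

end EdgeIsoperimetry

section Shadow

variable {α : Type*} [Fintype α] [DecidableEq α] {𝒜 : Finset (Finset α)} {s t r : ℕ}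

theorem card_le_card_shadow (h𝒜 : (𝒜 : Set (Finset α)).Sized r)
    (hr : Fintype.card α + 1 ≤ 2 * r) : #𝒜 ≤ #(∂ 𝒜) :=
  Nat.le_of_mul_le_mul_right
    ((local_lubell_yamamoto_meshalkin_inequality_mul h𝒜).trans
      (Nat.mul_le_mul_left _ (by omega))) (by omega)

/-- `s` is exponentially small in `n`: small enough that families of up to `4 * n * s` sets at or
above the middle of a cube of dimension `n` have shadows five times as large
(whence `24 = (5 + 1) * 4`). -/
def IsExpSmall (n s : ℕ) : Prop := (24 * n * s) ^ 6 < 2 ^ (n / 2)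

theorem IsExpSmall.mono {n : ℕ} (ht : IsExpSmall n t) (hst : s ≤ t) : IsExpSmall n s :=
  ht.trans_le' (by gcongr)

theorem card_le_mul_card_univ_of_card_shadow_eq {d : ℕ} (h𝒜 : (𝒜 : Set (Finset α)).Sized r)
    (hr : Fintype.card α + 2 ≤ 2 * r) (hd : #(∂ 𝒜) = #𝒜 + d) : #𝒜 ≤ d * Fintype.card α := by
  obtain rfl | ⟨A, hA⟩ := 𝒜.eq_empty_or_nonempty
  · simp
  have hrn : r ≤ Fintype.card α := h𝒜 hA ▸ card_le_univ A
  set q := Fintype.card α - r + 1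
  have hlym : #𝒜 * (q + 1) ≤ (#𝒜 + d) * q := by
    rw [← hd]
    exact (Nat.mul_le_mul_left _ (by omega)).trans
      (local_lubell_yamamoto_meshalkin_inequality_mul h𝒜)
  have hdq : d * q ≤ d * Fintype.card α := Nat.mul_le_mul_left _ (by omega)
  linarith

theorem IsExpSmall.card_add_le_card_shadow (hs : IsExpSmall (Fintype.card α) s)
    (h𝒜 : (𝒜 : Set (Finset α)).Sized r) (hr : Fintype.card α + 2 ≤ 2 * r) :
    #𝒜 + 4 * min #𝒜 s ≤ #(∂ 𝒜) := by
  obtain hsmall | hlarge := le_or_gt #𝒜 (4 * Fintype.card α * s)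
  · have : 5 * #𝒜 ≤ #(∂ 𝒜) := mul_card_le_card_shadow h𝒜 <|
      calc (6 * #𝒜) ^ 6 ≤ (24 * Fintype.card α * s) ^ 6 := Nat.pow_le_pow_left (by linarith) _
        _ < 2 ^ (Fintype.card α / 2) := hs
        _ ≤ 2 ^ r := Nat.pow_le_pow_right two_pos (by omega)
    omega
  · obtain ⟨d, hd⟩ := Nat.exists_eq_add_of_le (card_le_card_shadow h𝒜 (by omega))
    have hdn := hlarge.trans_le (card_le_mul_card_univ_of_card_shadow_eq h𝒜 hr hd)
    have : 4 * s < d := by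
      rw [mul_right_comm] at hdn
      exact Nat.lt_of_mul_lt_mul_right hdn
    omega

theorem IsExpSmall.card_add_le_card_upShadow (hs : IsExpSmall (Fintype.card α) s)
    (h𝒜 : (𝒜 : Set (Finset α)).Sized r) (hr : 2 * r + 2 ≤ Fintype.card α) :
    #𝒜 + 4 * min #𝒜 s ≤ #(∂⁺ 𝒜) := by
  have := hs.card_add_le_card_shadow h𝒜.compls (by omega)
  rwa [shadow_compls, card_compls, card_compls] at this

end Shadow

/-! ### Compressing 2-Sperner families into the middle levels -/

section TwoSperner

variable {α : Type*} {F G H : Finset (Finset α)}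

/-- `F` is a 2-Sperner family: it contains no chain of three sets. -/
def IsTwoSperner (F : Finset (Finset α)) : Prop :=
  ∀ A ∈ F, ∀ B ∈ F, ∀ C ∈ F, A ⊂ B → ¬ B ⊂ C

section DecidableEq

variable [DecidableEq α] {s t : ℕ}

theorem exists_ssubset_of_mem_shadow {𝒜 : Finset (Finset α)} {A : Finset α} (hA : A ∈ ∂ 𝒜) :
    ∃ B ∈ 𝒜, A ⊂ B := by
  obtain ⟨B, hB, b, hb, rfl⟩ := mem_shadow_iff.1 hA
  exact ⟨B, hB, erase_ssubset hb⟩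

theorem IsTwoSperner.not_subset_of_mem_shadow_inter_shadow (hF : IsTwoSperner F) (hGF : G ⊆ F)
    {A B : Finset α} (hA : A ∈ F) (hB : B ∈ ∂ (F ∩ ∂ G)) : ¬ A ⊆ B := by
  intro hAB
  obtain ⟨C, hC, hBC⟩ := exists_ssubset_of_mem_shadow hB
  obtain ⟨hCF, hCG⟩ := mem_inter.1 hC
  obtain ⟨D, hD, hCD⟩ := exists_ssubset_of_mem_shadow hCG
  exact hF A hA C hCF D (hGF hD) (hAB.trans_ssubset hBC) hCD

/-- Replaces the sets of size `t` in `F` by their shadow and those sets of the shadow that were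
already present by their own shadow. -/
def pushDown (t : ℕ) (F : Finset (Finset α)) : Finset (Finset α) :=
  F \ F # t ∪ (∂ (F # t) ∪ ∂ (F ∩ ∂ (F # t)))

theorem card_of_mem_shadow_slice {A : Finset α} (hA : A ∈ ∂ (F # (t + 1))) : #A = t :=
  sized_slice.shadow hA

theorem card_of_mem_shadow_inter_shadow_slice {A : Finset α}
    (hA : A ∈ ∂ (F ∩ ∂ (F # (t + 1)))) : #A + 1 = t := by
  obtain ⟨B, hB, -, hBA⟩ := mem_shadow_iff_exists_mem_card_add_one.1 hA
  exact hBA.symm.trans (card_of_mem_shadow_slice (mem_inter.1 hB).2)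

theorem mem_of_mem_pushDown {A : Finset α} (hF : ∀ B ∈ F, #B ≤ t + 1)
    (hA : A ∈ pushDown (t + 1) F) :
    A ∈ F ∧ #A ≤ t ∨ A ∈ ∂ (F # (t + 1)) ∨ A ∈ ∂ (F ∩ ∂ (F # (t + 1))) := by
  refine (mem_union.1 hA).imp (fun h ↦ ?_) mem_union.1
  obtain ⟨hAF, hAt⟩ := mem_sdiff.1 h
  have : #A ≠ t + 1 := fun h ↦ hAt (mem_slice.2 ⟨hAF, h⟩)
  have := hF A hAF
  exact ⟨hAF, by omega⟩

theorem card_le_of_mem_pushDown {A : Finset α} (hF : ∀ B ∈ F, #B ≤ t + 1)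
    (hA : A ∈ pushDown (t + 1) F) : #A ≤ t := by
  obtain ⟨-, h⟩ | h | h := mem_of_mem_pushDown hF hA
  · exact h
  · exact (card_of_mem_shadow_slice h).le
  · have := card_of_mem_shadow_inter_shadow_slice h
    omega

theorem isTwoSperner_pushDown (hF : IsTwoSperner F) (hFt : ∀ A ∈ F, #A ≤ t + 1) :
    IsTwoSperner (pushDown (t + 1) F) := by
  intro A hA B hB C hC hAB hBC
  have hABcard := card_lt_card hAB
  have hBCcard := card_lt_card hBC
  have hCt := card_le_of_mem_pushDown hFt hC
  have hAF : A ∈ F := by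
    obtain h | h | h := mem_of_mem_pushDown hFt hA
    · exact h.1
    · have := card_of_mem_shadow_slice h
      omega
    · have := card_of_mem_shadow_inter_shadow_slice h
      omega
  have hBF : B ∈ F := by
    obtain h | h | h := mem_of_mem_pushDown hFt hB
    · exact h.1
    · have := card_of_mem_shadow_slice h
      omega
    · exact absurd hAB.subset (hF.not_subset_of_mem_shadow_inter_shadow slice_subset hAF h)
  obtain h | h | h := mem_of_mem_pushDown hFt hC
  · exact hF A hAF B hBF C h.1 hAB hBC
  · obtain ⟨D, hD, hCD⟩ := exists_ssubset_of_mem_shadow h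
    exact hF A hAF B hBF D (slice_subset hD) hAB (hBC.trans hCD)
  · exact hF.not_subset_of_mem_shadow_inter_shadow slice_subset hBF h hBC.subset

theorem card_pushDown (hF : IsTwoSperner F) :
    #(pushDown (t + 1) F) + #(F # (t + 1)) + #(F ∩ ∂ (F # (t + 1))) =
      #F + #(∂ (F # (t + 1))) + #(∂ (F ∩ ∂ (F # (t + 1)))) := by
  set X := F # (t + 1)
  have hdisj : Disjoint (F \ X ∪ ∂ X) (∂ (F ∩ ∂ X)) := by
    refine disjoint_left.2 fun A hA hA' ↦ ?_
    obtain h | h := mem_union.1 hA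
    · exact hF.not_subset_of_mem_shadow_inter_shadow slice_subset (mem_sdiff.1 h).1 hA' subset_rfl
    · have := card_of_mem_shadow_slice h
      have := card_of_mem_shadow_inter_shadow_slice hA'
      omega
  have hinter : F \ X ∩ ∂ X = F ∩ ∂ X := by
    ext A
    simp only [mem_inter, mem_sdiff, and_congr_left_iff, and_iff_left_iff_imp]
    intro hA _ hAX
    have : #A = t + 1 := sized_slice hAX
    have := card_of_mem_shadow_slice hA
    omega
  have hunion := card_union_add_card_inter (F \ X) (∂ X)
  have hsdiff : #(F \ X) + #X = #F := card_sdiff_add_card_eq_card slice_subset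
  rw [hinter] at hunion
  rw [pushDown, ← union_assoc, card_union_of_disjoint hdisj]
  omega

theorem card_sdiff_le_card_sdiff_add {β : Type*} [DecidableEq β] (F G S : Finset β) :
    #(F \ S) ≤ #(F \ G) + #(G \ S) :=
  (card_le_card (sdiff_triangle F G S)).trans (card_union_le _ _)

/-- `G` is a 2-Sperner family on the levels `I` which keeps the sets of `F` on these levels and
gains four sets for each of the other sets of `F`, as long as these number at most `s`. -/
structure IsCompression (s : ℕ) (I : Set ℕ) (F G : Finset (Finset α)) : Prop where
  isTwoSperner : IsTwoSperner G
  card_mem : ∀ A ∈ G, #A ∈ I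
  mem : ∀ A ∈ F, #A ∈ I → A ∈ G
  card_add_le : #F + 4 * min #(F \ G) s ≤ #G

theorem IsTwoSperner.isCompression_self {I : Set ℕ} (hF : IsTwoSperner F)
    (hI : ∀ A ∈ F, #A ∈ I) : IsCompression s I F F where
  isTwoSperner := hF
  card_mem := hI
  mem _ hA _ := hA
  card_add_le := by simp

theorem IsCompression.trans {I J : Set ℕ} (hFG : IsCompression s I F G)
    (hGH : IsCompression s J G H) (hI : ∀ A ∈ H, #A ∈ I) : IsCompression s (I ∩ J) F H where
  isTwoSperner := hGH.isTwoSperner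
  card_mem A hA := ⟨hI A hA, hGH.card_mem A hA⟩
  mem A hA hIJ := hGH.mem A (hFG.mem A hA hIJ.1) hIJ.2
  card_add_le := by
    have := card_sdiff_le_card_sdiff_add F G H
    have := hFG.card_add_le
    have := hGH.card_add_le
    omega

end DecidableEq

variable [Fintype α] [DecidableEq α] {s t u : ℕ}

theorem card_compls_sdiff_compls (F G : Finset (Finset α)) : #(Fᶜˢ \ Gᶜˢ) = #(F \ G) := by
  rw [← card_compls (F \ G)]
  congr 1
  ext A
  simp

theorem IsTwoSperner.compls (hF : IsTwoSperner F) : IsTwoSperner Fᶜˢ :=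
  fun A hA B hB C hC hAB hBC ↦
    hF Cᶜ (mem_compls.1 hC) Bᶜ (mem_compls.1 hB) Aᶜ (mem_compls.1 hA)
      (compl_ssubset_compl.2 hBC) (compl_ssubset_compl.2 hAB)

theorem IsCompression.compls {I : Set ℕ} (h : IsCompression s I F G) :
    IsCompression s {j | Fintype.card α - j ∈ I} Fᶜˢ Gᶜˢ where
  isTwoSperner := h.isTwoSperner.compls
  card_mem A hA := by
    simpa only [card_compl, Set.mem_ofPred_eq] using h.card_mem _ (mem_compls.1 hA)
  mem A hA hI := mem_compls.2 (h.mem _ (mem_compls.1 hA) (by rwa [card_compl]))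
  card_add_le := by
    simpa only [card_compls, card_compls_sdiff_compls] using h.card_add_le

theorem IsExpSmall.isCompression_pushDown (hs : IsExpSmall (Fintype.card α) s)
    (ht : Fintype.card α + 1 ≤ 2 * t) (hF : IsTwoSperner F) (hFt : ∀ A ∈ F, #A ≤ t + 1) :
    IsCompression s (Set.Iic t) F (pushDown (t + 1) F) where
  isTwoSperner := isTwoSperner_pushDown hF hFt
  card_mem _ := card_le_of_mem_pushDown hFt
  mem A hA hAt := mem_union_left _ <| mem_sdiff.2 ⟨hA, fun h ↦ by
    have : #A = t + 1 := sized_slice h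
    rw [Set.mem_Iic] at hAt
    omega⟩
  card_add_le := by
    have hX : #(F # (t + 1)) + 4 * min #(F # (t + 1)) s ≤ #(∂ (F # (t + 1))) :=
      hs.card_add_le_card_shadow sized_slice (by omega)
    have hY : #(F ∩ ∂ (F # (t + 1))) ≤ #(∂ (F ∩ ∂ (F # (t + 1)))) :=
      card_le_card_shadow (fun A hA ↦ card_of_mem_shadow_slice (mem_inter.1 hA).2) ht
    have hremoved : #(F \ pushDown (t + 1) F) ≤ #(F # (t + 1)) := by
      exact card_le_card <| sdiff_le_comm.1 subset_union_left
    have := card_pushDown (t := t) hF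
    omega

theorem IsExpSmall.exists_isCompression_Iic (hs : IsExpSmall (Fintype.card α) s)
    (hu : Fintype.card α + 1 ≤ 2 * u) (hF : IsTwoSperner F) :
    ∃ G, IsCompression s (Set.Iic u) F G ∧ ∀ A ∈ G, A ∈ F ∨ u ≤ #A + 1 := by
  obtain ⟨d, hd⟩ : ∃ d, ∀ A ∈ F, #A ≤ u + d :=
    ⟨Fintype.card α, fun A _ ↦ (card_le_univ A).trans (Nat.le_add_left _ _)⟩
  induction d generalizing F with
  | zero => exact ⟨F, hF.isCompression_self hd, fun A hA ↦ .inl hA⟩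
  | succ d ih =>
    have hpush := hs.isCompression_pushDown (t := u + d) (by omega) hF hd
    obtain ⟨G, hG, hnew⟩ := ih hpush.isTwoSperner hpush.card_mem
    have hlevels : Set.Iic (u + d) ∩ Set.Iic u = Set.Iic u :=
      Set.inter_eq_right.2 (Set.Iic_subset_Iic.2 (Nat.le_add_right _ _))
    refine ⟨G, hlevels ▸ hpush.trans hG fun A hA ↦ ?_, fun A hA ↦ ?_⟩
    · exact (hG.card_mem A hA).trans (Nat.le_add_right _ _)
    · obtain h | h := hnew A hA
      · obtain h | h | h := mem_of_mem_pushDown (t := u + d) hd h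
        · exact .inl h.1
        · have := card_of_mem_shadow_slice h
          omega
        · have := card_of_mem_shadow_inter_shadow_slice h
          omega
      · exact .inr h

theorem IsExpSmall.exists_isCompression_Icc (hs : IsExpSmall (Fintype.card α) s)
    (hu : Fintype.card α + 1 ≤ 2 * u) (hF : IsTwoSperner F) :
    ∃ G, IsCompression s (Set.Icc (Fintype.card α - u) u) F G := by
  obtain ⟨G, hFG, -⟩ := hs.exists_isCompression_Iic hu hF
  obtain ⟨H, hGH, hnew⟩ := hs.exists_isCompression_Iic hu hFG.isTwoSperner.compls
  have hGH' := hGH.compls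
  rw [compls_compls] at hGH'
  have hlevels : Set.Iic u ∩ {j | Fintype.card α - j ∈ Set.Iic u} =
      Set.Icc (Fintype.card α - u) u := by
    ext j
    simp only [Set.mem_inter_iff, Set.mem_Iic, Set.mem_ofPred_eq, Set.mem_Icc]
    omega
  refine ⟨Hᶜˢ, hlevels ▸ hFG.trans hGH' fun A hA ↦ ?_⟩
  obtain h | h := hnew Aᶜ (mem_compls.1 hA)
  · exact hFG.card_mem A (by simpa using h)
  · rw [card_compl] at h
    have := card_le_univ A
    rw [Set.mem_Iic]
    omega

end TwoSperner

/-! ### Shadows of at most half of the middle level -/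

section KruskalKatona

theorem card_mul_le_card_shadow_mul_of_subset {α : Type*} [DecidableEq α]
    {𝒜 : Finset (Finset α)} {V : Finset α} {r : ℕ} (h𝒜 : (𝒜 : Set (Finset α)).Sized r)
    (hV : ∀ A ∈ 𝒜, A ⊆ V) : #𝒜 * r ≤ #(∂ 𝒜) * (#V - r + 1) := by
  refine card_mul_le_card_mul' (· ⊆ ·) (fun A hA ↦ ?_) (fun B hB ↦ ?_)
  · rw [← h𝒜 hA, ← card_image_of_injOn A.erase_injOn]
    refine card_le_card (image_subset_iff.2 fun a ha ↦ ?_)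
    exact (mem_bipartiteBelow _).2 ⟨erase_mem_shadow hA ha, erase_subset _ _⟩
  · obtain ⟨A, hA, hBA, hcard⟩ := mem_shadow_iff_exists_mem_card_add_one.1 hB
    have hsdiff : #(V \ B) ≤ #V - r + 1 := by
      have := h𝒜 hA
      rw [card_sdiff_of_subset (hBA.trans (hV A hA))]
      omega
    refine le_trans (card_le_card (t := (V \ B).image (insert · B)) fun C hC ↦ ?_)
      (card_image_le.trans hsdiff)
    obtain ⟨hC𝒜, hBC⟩ := (mem_bipartiteAbove _).1 hC
    obtain ⟨b, hb, rfl⟩ := exists_eq_insert_iff.2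
      ⟨hBC, hcard.symm.trans ((h𝒜 hA).trans (h𝒜 hC𝒜).symm)⟩
    exact mem_image_of_mem _ (mem_sdiff.2 ⟨hV _ hC𝒜 (mem_insert_self _ _), hb⟩)

theorem exists_isInitSeg_subset_card_eq {α : Type*} [LinearOrder α] {𝒜 : Finset (Finset α)}
    {r m : ℕ} (h𝒜 : Colex.IsInitSeg 𝒜 r) (hm : m ≤ #𝒜) :
    ∃ ℬ ⊆ 𝒜, Colex.IsInitSeg ℬ r ∧ #ℬ = m := by
  induction hm using Nat.decreasingInduction with
  | self => exact ⟨𝒜, subset_rfl, h𝒜, rfl⟩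
  | of_succ m _ ih =>
    obtain ⟨ℬ, hℬ𝒜, hℬ, hcard⟩ := ih
    have hne : ℬ.Nonempty := card_pos.1 (by omega)
    obtain ⟨M, hM, hmax⟩ := exists_max_image ℬ toColex hne
    refine ⟨ℬ.erase M, (erase_subset _ _).trans hℬ𝒜, ⟨fun A hA ↦ hℬ.1 (mem_of_mem_erase hA),
      fun A B hA hBA ↦ ?_⟩, by rw [card_erase_of_mem hM, hcard, Nat.add_sub_cancel]⟩
    have hAℬ := mem_of_mem_erase hA
    refine mem_erase.2 ⟨?_, hℬ.2 hAℬ hBA⟩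
    rintro rfl
    exact (hmax A hAℬ).not_gt hBA.1

theorem isInitSeg_powersetCard_Iio {α : Type*} [LinearOrder α] [LocallyFiniteOrderBot α] (a : α)
    (r : ℕ) : Colex.IsInitSeg (powersetCard r (Iio a)) r := by
  refine ⟨fun A hA ↦ (mem_powersetCard.1 hA).2, fun A B hA hBA ↦ mem_powersetCard.2 ⟨?_, hBA.2⟩⟩
  have hAa : ∀ x ∈ A, x < a := fun x hx ↦ mem_Iio.1 ((mem_powersetCard.1 hA).1 hx)
  exact fun x hx ↦ mem_Iio.2 (Colex.forall_lt_mono hBA.1.le hAa x hx)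

theorem card_mul_le_card_shadow_mul_of_le_choose {n r : ℕ} {𝒜 : Finset (Finset (Fin n))}
    (a : Fin n) (h𝒜 : (𝒜 : Set (Finset (Fin n))).Sized r) (hcard : #𝒜 ≤ (a : ℕ).choose r) :
    #𝒜 * r ≤ #(∂ 𝒜) * (a - r + 1) := by
  obtain ⟨ℬ, hℬ, hinit, hcardℬ⟩ := exists_isInitSeg_subset_card_eq (m := #𝒜)
    (isInitSeg_powersetCard_Iio a r) (by rwa [card_powersetCard, Fin.card_Iio])
  calc #𝒜 * r = #ℬ * r := by rw [hcardℬ]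
    _ ≤ #(∂ ℬ) * (#(Iio a) - r + 1) :=
      card_mul_le_card_shadow_mul_of_subset hinit.1 fun A hA ↦ (mem_powersetCard.1 (hℬ hA)).1
    _ ≤ #(∂ 𝒜) * (a - r + 1) := by
      rw [Fin.card_Iio]
      exact Nat.mul_le_mul_right _ (kruskal_katona h𝒜 hcardℬ.le hinit)

variable {k : ℕ} {𝒜 : Finset (Finset (Fin (2 * k + 2)))}

theorem min_card_choose_le_card_shadow
    (h𝒜 : (𝒜 : Set (Finset (Fin (2 * k + 2)))).Sized (k + 1)) :
    min #𝒜 ((2 * k + 1).choose (k + 1)) ≤ #(∂ 𝒜) := by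
  obtain ⟨ℬ, hℬ, hcard⟩ := exists_subset_card_eq (min_le_left #𝒜 ((2 * k + 1).choose (k + 1)))
  have := card_mul_le_card_shadow_mul_of_le_choose (Fin.last (2 * k + 1))
    (h𝒜.mono hℬ) (hcard.trans_le (min_le_right _ _))
  rw [Fin.val_last, show 2 * k + 1 - (k + 1) + 1 = k + 1 by omega] at this
  rw [← hcard]
  exact (Nat.le_of_mul_le_mul_right this k.succ_pos).trans (card_le_card (shadow_mono hℬ))

theorem min_card_choose_le_card_upShadow
    (h𝒜 : (𝒜 : Set (Finset (Fin (2 * k + 2)))).Sized (k + 1)) :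
    min #𝒜 ((2 * k + 1).choose (k + 1)) ≤ #(∂⁺ 𝒜) := by
  have hsized := h𝒜.compls
  rw [Fintype.card_fin, show 2 * k + 2 - (k + 1) = k + 1 by omega] at hsized
  have := min_card_choose_le_card_shadow hsized
  rwa [shadow_compls, card_compls, card_compls] at this

theorem card_add_choose_le_card_shadow_add_choose
    (h𝒜 : (𝒜 : Set (Finset (Fin (2 * k + 2)))).Sized (k + 2))
    (hcard : (2 * k + 1).choose (k + 2) < #𝒜) :
    #𝒜 + (2 * k + 2).choose (k + 1) ≤ #(∂ 𝒜) + (2 * k + 2).choose (k + 2) := by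
  set ℬ := powersetCard (k + 1) univ \ ∂ 𝒜
  have hupShadow : ∂⁺ ℬ ⊆ powersetCard (k + 2) univ \ 𝒜 := by
    intro A hA
    obtain ⟨B, hB, hBA, hAB⟩ := mem_upShadow_iff_exists_mem_card_add_one.1 hA
    obtain ⟨hBk, hB𝒜⟩ := mem_sdiff.1 hB
    refine mem_sdiff.2 ⟨mem_powersetCard_univ.2 ?_, fun hA𝒜 ↦ hB𝒜 ?_⟩
    · rw [hAB, mem_powersetCard_univ.1 hBk]
    · exact mem_shadow_iff_exists_mem_card_add_one.2 ⟨A, hA𝒜, hBA, hAB⟩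
  have hmin : min #ℬ ((2 * k + 1).choose (k + 1)) ≤ #(∂⁺ ℬ) :=
    min_card_choose_le_card_upShadow fun A hA ↦
      mem_powersetCard_univ.1 (mem_sdiff.1 hA).1
  have hlower : #ℬ + #(∂ 𝒜) = (2 * k + 2).choose (k + 1) := by
    have : ∂ 𝒜 ⊆ powersetCard (k + 1) univ := subset_powersetCard_univ_iff.2 h𝒜.shadow
    rw [card_sdiff_add_card_eq_card this, card_powersetCard, card_fin]
  have hupper : #(powersetCard (k + 2) univ \ 𝒜) + #𝒜 = (2 * k + 2).choose (k + 2) := by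
    rw [card_sdiff_add_card_eq_card (subset_powersetCard_univ_iff.2 h𝒜), card_powersetCard,
      card_fin]
  have hpascal : (2 * k + 2).choose (k + 2) =
      (2 * k + 1).choose (k + 1) + (2 * k + 1).choose (k + 2) := Nat.choose_succ_succ _ _
  have := card_le_card hupShadow
  omega

end KruskalKatona

/-! ### 2-Sperner families on three middle levels -/

section ThreeLevels

theorem IsExpSmall.four_mul_mul_le_choose {k s : ℕ} (hs : IsExpSmall (2 * k) s) :
    4 * k * s ≤ (2 * k).choose (k + 1) := by
  obtain rfl | hs0 := s.eq_zero_or_pos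
  · simp
  obtain rfl | hk0 := k.eq_zero_or_pos
  · simp
  have hlt : 48 * k * s < 2 ^ k :=
    calc 48 * k * s = 24 * (2 * k) * s := by ring
      _ ≤ (24 * (2 * k) * s) ^ 6 := Nat.le_self_pow (by norm_num) _
      _ < 2 ^ (2 * k / 2) := hs
      _ = 2 ^ k := by rw [Nat.mul_div_cancel_left k two_pos]
  have hk : 2 * (k + 1) ≤ 2 ^ k := by nlinarith
  have hchoose : (2 * k).choose (k + 1) * (k + 1) = k.centralBinom * k := by
    rw [Nat.choose_succ_right_eq, Nat.centralBinom, show 2 * k - k = k by omega]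
  have hpow : 2 ^ k * (2 * (k + 1)) ≤ (2 * k).choose (k + 1) * (2 * (k + 1)) :=
    calc 2 ^ k * (2 * (k + 1)) ≤ 2 ^ k * 2 ^ k := Nat.mul_le_mul_left _ hk
      _ = 4 ^ k := (mul_pow 2 2 k).symm
      _ ≤ 2 * k * k.centralBinom := Nat.four_pow_le_two_mul_self_mul_centralBinom k hk0
      _ = (2 * k).choose (k + 1) * (2 * (k + 1)) := by linarith
  have := Nat.le_of_mul_le_mul_right hpow (by omega)
  linarith

theorem IsExpSmall.two_mul_choose_add_le {k s : ℕ} (hs : IsExpSmall (2 * k + 2) s) :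
    2 * (2 * k + 1).choose (k + 2) + 4 * s ≤ (2 * k + 2).choose (k + 2) := by
  have hlarge : 4 * (k + 1) * s ≤ (2 * k + 2).choose (k + 2) :=
    IsExpSmall.four_mul_mul_le_choose (k := k + 1) hs
  have hratio : (2 * k + 1).choose (k + 2) * (k + 2) = (2 * k + 1).choose (k + 1) * k := by
    rw [Nat.choose_succ_right_eq, show 2 * k + 1 - (k + 1) = k by omega]
  have hpascal : (2 * k + 2).choose (k + 2) =
      (2 * k + 1).choose (k + 1) + (2 * k + 1).choose (k + 2) := Nat.choose_succ_succ _ _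
  rw [hpascal] at hlarge ⊢
  nlinarith

theorem IsTwoSperner.card_slice_add_le {α : Type*} [Fintype α] [DecidableEq α]
    {F : Finset (Finset α)} (hF : IsTwoSperner F) (k : ℕ) :
    #(F # (k + 1)) + #(∂⁺ (F # k)) + #(∂ (F # (k + 2))) ≤
      2 * (Fintype.card α).choose (k + 1) := by
  set P := F # k
  set Q := F # (k + 1)
  set R := F # (k + 2)
  have hP : ((∂⁺ P : Finset _) : Set (Finset α)).Sized (k + 1) := sized_slice.upShadow
  have hR : ((∂ R : Finset _) : Set (Finset α)).Sized (k + 1) := sized_slice.shadow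
  have hdisj : Disjoint Q (∂⁺ P ∩ ∂ R) := by
    refine disjoint_left.2 fun B hBQ hB ↦ ?_
    obtain ⟨hBP, hBR⟩ := mem_inter.1 hB
    obtain ⟨A, hA, a, ha, rfl⟩ := mem_upShadow_iff.1 hBP
    obtain ⟨C, hC, hBC⟩ := exists_ssubset_of_mem_shadow hBR
    exact hF A (slice_subset hA) _ (slice_subset hBQ) C (slice_subset hC) (ssubset_insert ha) hBC
  have hinter : #Q + #(∂⁺ P ∩ ∂ R) ≤ (Fintype.card α).choose (k + 1) := by
    rw [← card_union_of_disjoint hdisj]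
    refine Set.Sized.card_le fun A hA ↦ ?_
    obtain h | h := mem_union.1 hA
    · exact sized_slice h
    · exact hR (mem_inter.1 h).2
  have hunion : #(∂⁺ P ∪ ∂ R) ≤ (Fintype.card α).choose (k + 1) :=
    Set.Sized.card_le fun A hA ↦ (mem_union.1 hA).elim (hP ·) (hR ·)
  have := card_union_add_card_inter (∂⁺ P) (∂ R)
  omega

theorem card_slice_compls {α : Type*} [Fintype α] [DecidableEq α] (F : Finset (Finset α))
    {i j : ℕ} (hij : i + j = Fintype.card α) : #(Fᶜˢ # i) = #(F # j) := by
  rw [← card_compls (F # j)]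
  congr 1
  ext A
  have := card_le_univ A
  simp only [mem_slice, mem_compls, card_compl, and_congr_right_iff]
  omega

variable {k s : ℕ} {F : Finset (Finset (Fin (2 * k + 2)))}

theorem IsTwoSperner.card_add_le_of_card_slice_le (hs : IsExpSmall (2 * k + 2) s)
    (hF : IsTwoSperner F) (hlevels : ∀ A ∈ F, #A ∈ Set.Icc k (k + 2))
    (hslices : #(F # k) ≤ #(F # (k + 2))) :
    #F + 4 * min #(F # k) s ≤ (2 * k + 2).choose (k + 1) + (2 * k + 2).choose (k + 2) := by
  have hcard : #F ≤ #(F # k) + #(F # (k + 1)) + #(F # (k + 2)) := by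
    have hcover : F ⊆ F # k ∪ F # (k + 1) ∪ F # (k + 2) := fun A hA ↦ by
      have := Set.mem_Icc.1 (hlevels A hA)
      simp only [mem_union, mem_slice, hA, true_and]
      omega
    have := card_le_card hcover
    have := card_union_le (F # k ∪ F # (k + 1)) (F # (k + 2))
    have := card_union_le (F # k) (F # (k + 1))
    omega
  have hmiddle : #(F # (k + 1)) ≤ (2 * k + 2).choose (k + 1) := by
    simpa using Set.Sized.card_le (sized_slice (𝒜 := F) (r := k + 1))
  have := hs.two_mul_choose_add_le
  obtain hfew | hmany := le_or_gt #(F # (k + 2)) ((2 * k + 1).choose (k + 2))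
  · omega
  · have hlower : #(F # k) + 4 * min #(F # k) s ≤ #(∂⁺ (F # k)) :=
      IsExpSmall.card_add_le_card_upShadow (by simpa using hs) sized_slice (by simp)
    have hupper := card_add_choose_le_card_shadow_add_choose sized_slice hmany
    have hboth := hF.card_slice_add_le k
    rw [Fintype.card_fin] at hboth
    omega

theorem IsTwoSperner.card_add_le_of_card_mem_Icc (hs : IsExpSmall (2 * k + 2) s)
    (hF : IsTwoSperner F) (hlevels : ∀ A ∈ F, #A ∈ Set.Icc k (k + 2)) :
    #F + 4 * min (min #(F # k) #(F # (k + 2))) s ≤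
      (2 * k + 2).choose (k + 1) + (2 * k + 2).choose (k + 2) := by
  wlog hslices : #(F # k) ≤ #(F # (k + 2)) generalizing F
  · have hcompl := this hF.compls (fun A hA ↦ ?_) ?_
    · rwa [card_compls, card_slice_compls F (j := k + 2) (by simp; omega),
        card_slice_compls F (j := k) (by simp; omega), min_comm #(F # (k + 2))] at hcompl
    · have := Set.mem_Icc.1 (hlevels Aᶜ (mem_compls.1 hA))
      have := card_le_univ A
      rw [card_compl, Fintype.card_fin] at *
      rw [Set.mem_Icc]
      omega
    · rw [card_slice_compls F (j := k + 2) (by simp; omega),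
        card_slice_compls F (j := k) (by simp; omega)]
      exact le_of_not_ge hslices
  rw [min_eq_left hslices]
  exact hF.card_add_le_of_card_slice_le hs hlevels hslices

end ThreeLevels

/-! ### Stability for 2-Sperner families -/

theorem mem_levelFam {n k : ℕ} {A : Finset (Fin n)} : A ∈ levelFam n k ↔ #A = k := by
  simp only [levelFam, mem_filter_univ]

theorem card_levelFam (n k : ℕ) : #(levelFam n k) = n.choose k := by
  rw [levelFam, univ_filter_card_eq, card_powersetCard, card_univ, Fintype.card_fin]

theorem card_le_of_subset_levelFam_union {n j k : ℕ} {F : Finset (Finset (Fin n))}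
    (hF : F ⊆ levelFam n j ∪ levelFam n k) : #F ≤ n.choose j + n.choose k := by
  simpa only [card_levelFam] using (card_le_card hF).trans (card_union_le _ _)

theorem sdiff_levelFam_union_subset_slice {n i j k : ℕ} {F : Finset (Finset (Fin n))}
    (hF : ∀ A ∈ F, #A = i ∨ #A = j ∨ #A = k) :
    F \ (levelFam n j ∪ levelFam n k) ⊆ F # i := fun A hA ↦ by
  obtain ⟨hAF, hAjk⟩ := mem_sdiff.1 hA
  rw [mem_union, mem_levelFam, mem_levelFam] at hAjk
  exact mem_slice.2 ⟨hAF, (hF A hAF).resolve_right hAjk⟩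

section TwoSpernerStability

variable {k s : ℕ}

theorem IsTwoSperner.card_add_le_sigma2_of_odd {F : Finset (Finset (Fin (2 * k + 1)))}
    (hF : IsTwoSperner F) (hs : IsExpSmall (2 * k + 1) s)
    (hfar : ∀ S ∈ SigmaStar (2 * k + 1), s ≤ #(F \ S)) :
    #F + 4 * s ≤ Sigma2 (2 * k + 1) := by
  obtain ⟨G, hFG⟩ := IsExpSmall.exists_isCompression_Icc (u := k + 1)
    (by rwa [Fintype.card_fin]) (by rw [Fintype.card_fin]; omega) hF
  have hhalf : (2 * k + 1) / 2 = k := by omega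
  have hG : G ⊆ levelFam _ k ∪ levelFam _ (k + 1) := fun A hA ↦ by
    have hcard := hFG.card_mem A hA
    rw [Fintype.card_fin, Set.mem_Icc] at hcard
    rw [mem_union, mem_levelFam, mem_levelFam]
    omega
  have hsFG : s ≤ #(F \ G) := (hfar _ (Or.inl rfl)).trans
    (card_le_card (sdiff_subset_sdiff subset_rfl (by rwa [hhalf])))
  have hcard := hFG.card_add_le
  rw [min_eq_right hsFG] at hcard
  rw [Sigma2, hhalf]
  exact hcard.trans (card_le_of_subset_levelFam_union hG)

theorem IsTwoSperner.card_add_le_sigma2_of_even {F : Finset (Finset (Fin (2 * k + 2)))}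
    (hF : IsTwoSperner F) (hs : IsExpSmall (2 * k + 2) s)
    (hfar : ∀ S ∈ SigmaStar (2 * k + 2), s ≤ #(F \ S)) :
    #F + 4 * s ≤ Sigma2 (2 * k + 2) := by
  obtain ⟨G, hFG⟩ := IsExpSmall.exists_isCompression_Icc (u := k + 2)
    (by rwa [Fintype.card_fin]) (by rw [Fintype.card_fin]; omega) hF
  have hlevels : ∀ A ∈ G, #A ∈ Set.Icc k (k + 2) := fun A hA ↦ by
    simpa [Fintype.card_fin, show 2 * k + 2 - (k + 2) = k by omega] using hFG.card_mem A hA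
  have hslice {i : ℕ} {S} (hS : S ∈ SigmaStar (2 * k + 2)) (hi : G \ S ⊆ G # i) :
      s ≤ #(F \ G) + #(G # i) :=
    ((hfar S hS).trans (card_sdiff_le_card_sdiff_add F G S)).trans
      (Nat.add_le_add_left (card_le_card hi) _)
  have hlow : s ≤ #(F \ G) + #(G # k) :=
    hslice (Or.inl rfl) (sdiff_levelFam_union_subset_slice fun A hA ↦ by
      have := Set.mem_Icc.1 (hlevels A hA)
      omega)
  have hhigh : s ≤ #(F \ G) + #(G # (k + 2)) :=
    hslice (Or.inr rfl) (sdiff_levelFam_union_subset_slice fun A hA ↦ by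
      have := Set.mem_Icc.1 (hlevels A hA)
      omega)
  have hFGcard := hFG.card_add_le
  have hGcard := hFG.isTwoSperner.card_add_le_of_card_mem_Icc hs hlevels
  rw [Sigma2, show (2 * k + 2) / 2 = k + 1 by omega, show k + 1 + 1 = k + 2 from rfl]
  omega

theorem IsTwoSperner.card_add_le_sigma2 {n : ℕ} {F : Finset (Finset (Fin n))}
    (hF : IsTwoSperner F) (hn : 0 < n) (hs : IsExpSmall n s)
    (hfar : ∀ S ∈ SigmaStar n, s ≤ #(F \ S)) : #F + 4 * s ≤ Sigma2 n := by
  obtain ⟨k, rfl | rfl⟩ := Nat.even_or_odd' n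
  · obtain ⟨k, rfl⟩ := Nat.exists_eq_succ_of_ne_zero (show k ≠ 0 by omega)
    exact hF.card_add_le_sigma2_of_even hs hfar
  · exact hF.card_add_le_sigma2_of_odd hs hfar

end TwoSpernerStability

/-! ### Full chains through members strictly between two others -/

section MiddleMembers

variable {α : Type*} [DecidableEq α]

/-- The members of `F` lying strictly between two other members of `F`. Deleting them leaves a
2-Sperner family. -/
def middleMembers (F : Finset (Finset α)) : Finset (Finset α) :=
  {M ∈ F | (∃ A ∈ F, A ⊂ M) ∧ ∃ C ∈ F, M ⊂ C}

theorem mem_middleMembers {F : Finset (Finset α)} {M : Finset α} :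
    M ∈ middleMembers F ↔ M ∈ F ∧ (∃ A ∈ F, A ⊂ M) ∧ ∃ C ∈ F, M ⊂ C := mem_filter

theorem middleMembers_subset (F : Finset (Finset α)) : middleMembers F ⊆ F := filter_subset _ _

theorem isTwoSperner_sdiff_middleMembers (F : Finset (Finset α)) :
    IsTwoSperner (F \ middleMembers F) := fun A hA _ hB C hC hAB hBC ↦
  (mem_sdiff.1 hB).2 <| mem_middleMembers.2
    ⟨(mem_sdiff.1 hB).1, ⟨A, (mem_sdiff.1 hA).1, hAB⟩, C, (mem_sdiff.1 hC).1, hBC⟩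

end MiddleMembers

theorem le_choose_of_pos_of_lt {n k : ℕ} (hk : 0 < k) (hkn : k < n) : n ≤ n.choose k := by
  induction n generalizing k with
  | zero => omega
  | succ n ih =>
    obtain ⟨k, rfl⟩ := Nat.exists_eq_succ_of_ne_zero hk.ne'
    rw [Nat.choose_succ_succ']
    obtain hlt | rfl := (Nat.lt_succ_iff.1 hkn).lt_or_eq
    · exact (Nat.add_comm n 1).le.trans (Nat.add_le_add (Nat.choose_pos (by omega)) (ih hk hlt))
    · simp

theorem sum_card_filter_mem {β γ : Type*} [Fintype γ] [DecidableEq γ] (T : Finset β)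
    (g : β → Finset γ) : ∑ x, #{b ∈ T | x ∈ g b} = ∑ b ∈ T, #(g b) := by
  simpa only [bipartiteAbove, bipartiteBelow, filter_mem_eq_inter, univ_inter] using
    sum_card_bipartiteAbove_eq_sum_card_bipartiteBelow (s := univ) (t := T) (fun x b ↦ x ∈ g b)

section Chains

open Numbering
open scoped Nat

variable {α : Type*} [Fintype α] [DecidableEq α] {A M C : Finset α} {F : Finset (Finset α)}

theorem card_prefixed_inter_prefixed_le (hAM : A ⊆ M) :
    #(prefixed A ∩ prefixed M) ≤ (#A)! * (#M - #A)! * (Fintype.card α - #M)! := by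
  set A' : Finset M := A.subtype (· ∈ M) with hA'
  have hA'card : #A' = #A := by
    rw [hA', card_subtype, filter_true_of_mem fun x hx ↦ hAM hx]
  have hcard : #(prefixed A' ×ˢ (univ : Finset (Numbering ↑(Mᶜ)))) =
      (#A)! * (#M - #A)! * (Fintype.card α - #M)! := by
    rw [card_product, card_prefixed, hA'card, card_univ, Fintype.card_numbering, Fintype.card_coe,
      Fintype.card_coe, card_compl]
  rw [← hcard]
  refine card_le_card_of_surjOn (fun p ↦ ((prefixedEquiv M).symm p).1) fun f hf ↦ ?_
  obtain ⟨hfA, hfM⟩ := mem_inter.1 hf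
  refine ⟨prefixedEquiv M ⟨f, hfM⟩, mem_coe.2 (mem_product.2 ⟨mem_prefixed.2 fun x ↦ ?_,
    mem_univ _⟩), by simp only [Equiv.symm_apply_apply]⟩
  rw [mem_subtype, hA'card]
  exact mem_prefixed.1 hfA x

theorem card_mul_card_prefixed_inter_le (hA : A.Nonempty) (hAM : A ⊂ M) :
    #M * #(prefixed A ∩ prefixed M) ≤ #(prefixed M) := by
  have hlt := card_lt_card hAM
  calc #M * #(prefixed A ∩ prefixed M)
      ≤ (#M).choose #A * ((#A)! * (#M - #A)! * (Fintype.card α - #M)!) :=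
        Nat.mul_le_mul (le_choose_of_pos_of_lt hA.card_pos hlt)
          (card_prefixed_inter_prefixed_le hAM.subset)
    _ = #(prefixed M) := by
        rw [card_prefixed, ← Nat.choose_mul_factorial_mul_factorial hlt.le]
        ring

theorem card_compl_mul_card_prefixed_inter_le (hMC : M ⊂ C) (hC : C ≠ univ) :
    #Mᶜ * #(prefixed M ∩ prefixed C) ≤ #(prefixed M) := by
  have hltC := card_lt_card hMC
  have hltα := card_lt_card (ssubset_univ_iff.2 hC)
  rw [card_univ] at hltα
  have hchoose := Nat.choose_mul_factorial_mul_factorial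
    (show #C - #M ≤ Fintype.card α - #M by omega)
  rw [show Fintype.card α - #M - (#C - #M) = Fintype.card α - #C by omega] at hchoose
  calc #Mᶜ * #(prefixed M ∩ prefixed C)
      ≤ (Fintype.card α - #M).choose (#C - #M) *
          ((#M)! * (#C - #M)! * (Fintype.card α - #C)!) := by
        rw [card_compl]
        exact Nat.mul_le_mul (le_choose_of_pos_of_lt (by omega) (by omega))
          (card_prefixed_inter_prefixed_le hMC.subset)
    _ = #(prefixed M) := by
        rw [card_prefixed, ← hchoose]
        ring

theorem card_filter_prefixed_le_two {f : Numbering α}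
    (hf : ∀ M ∈ middleMembers F, f ∉ prefixed M) : #{S ∈ F | f ∈ prefixed S} ≤ 2 := by
  set T := {S ∈ F | f ∈ prefixed S}
  by_contra! hcard
  have hne : T.Nonempty := card_pos.1 (by omega)
  obtain ⟨L, hL, hLmin⟩ := exists_min_image T card hne
  obtain ⟨U, hU, hUmax⟩ := exists_max_image T card hne
  obtain ⟨S, hS, hSLU⟩ := exists_mem_notMem_of_card_lt_card (card_le_two.trans_lt hcard)
  simp only [mem_insert, mem_singleton, not_or] at hSLU
  have hssubset {X Y : Finset α} (hX : X ∈ T) (hY : Y ∈ T) (hXY : #X ≤ #Y) (hne : X ≠ Y) : X ⊂ Y :=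
    ((mem_prefixed.1 (mem_filter.1 hX).2).subset_of_card_le_card
      (mem_prefixed.1 (mem_filter.1 hY).2) hXY).ssubset_of_ne hne
  exact hf S (mem_middleMembers.2 ⟨(mem_filter.1 hS).1,
    ⟨L, (mem_filter.1 hL).1, hssubset hL hS (hLmin S hS) (Ne.symm hSLU.1)⟩,
    U, (mem_filter.1 hU).1, hssubset hS hU (hUmax S hS) hSLU.2⟩) (mem_filter.1 hS).2

theorem card_filter_prefixed_add_le (F : Finset (Finset α)) (f : Numbering α) :
    #{S ∈ F | f ∈ prefixed S} + #{M ∈ middleMembers F | f ∈ prefixed M} ≤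
      2 + ∑ M ∈ middleMembers F, #{S ∈ F.erase M | f ∈ prefixed M ∩ prefixed S} := by
  set T := {S ∈ F | f ∈ prefixed S}
  set Q := {M ∈ middleMembers F | f ∈ prefixed M}
  have hQT : Q ⊆ T := filter_subset_filter _ (middleMembers_subset F)
  have hsum : #Q * (#T - 1) ≤
      ∑ M ∈ middleMembers F, #{S ∈ F.erase M | f ∈ prefixed M ∩ prefixed S} := by
    refine le_trans ?_ (sum_le_sum_of_subset (filter_subset (f ∈ prefixed ·) _))
    refine card_nsmul_le_sum Q _ _ fun M hM ↦ ?_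
    rw [← card_erase_of_mem (hQT hM)]
    refine card_le_card fun S hS ↦ ?_
    obtain ⟨hSM, hST⟩ := mem_erase.1 hS
    exact mem_filter.2 ⟨mem_erase.2 ⟨hSM, (mem_filter.1 hST).1⟩,
      mem_inter.2 ⟨(mem_filter.1 hM).2, (mem_filter.1 hST).2⟩⟩
  have hcard := card_le_card hQT
  obtain hQ0 | hQpos := Q.eq_empty_or_nonempty
  · have hT2 : #T ≤ 2 := card_filter_prefixed_le_two fun M hM hfM ↦
      notMem_empty M (hQ0 ▸ mem_filter.2 ⟨hM, hfM⟩)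
    rw [hQ0, card_empty]
    omega
  · have hQ1 := hQpos.card_pos
    obtain ⟨t, ht⟩ := Nat.exists_eq_add_of_le' (hQ1.trans_le hcard)
    obtain ⟨q, hq⟩ := Nat.exists_eq_add_of_le' hQ1
    rw [ht, hq, Nat.add_sub_cancel] at hsum
    rw [ht, hq] at hcard ⊢
    have hqt : q ≤ q * t := (Nat.le_mul_self q).trans (Nat.mul_le_mul_left q (by omega))
    linarith

theorem sum_card_prefixed_add_le (F : Finset (Finset α)) :
    ∑ S ∈ F, #(prefixed S) + ∑ M ∈ middleMembers F, #(prefixed M) ≤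
      2 * (Fintype.card α)! +
        ∑ M ∈ middleMembers F, ∑ S ∈ F.erase M, #(prefixed M ∩ prefixed S) := by
  have hsum := sum_le_sum fun f (_ : f ∈ univ) ↦ card_filter_prefixed_add_le F f
  simp only [sum_add_distrib] at hsum
  rw [sum_card_filter_mem F, sum_card_filter_mem (middleMembers F), sum_comm] at hsum
  simpa only [sum_card_filter_mem, sum_const, card_univ, Fintype.card_numbering, smul_eq_mul,
    mul_comm 2] using hsum

theorem sum_erase_card_prefixed_inter_le (hA : ∀ S ∈ F, S ⊂ M → S = A)
    (hC : ∀ S ∈ F, M ⊂ S → S = C) (hAC : A ≠ C) :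
    ∑ S ∈ F.erase M, #(prefixed M ∩ prefixed S) ≤
      #(prefixed A ∩ prefixed M) + #(prefixed M ∩ prefixed C) := by
  rw [inter_comm (prefixed A), ← sum_pair (f := fun S ↦ #(prefixed M ∩ prefixed S)) hAC]
  refine sum_le_sum_of_ne_zero fun S hS hinter ↦ ?_
  obtain ⟨hne, hSF⟩ := mem_erase.1 hS
  rw [mem_insert, mem_singleton]
  by_contra! hSAC
  refine hinter (card_eq_zero.2 (disjoint_iff_inter_eq_empty.1
    (disjoint_prefixed_prefixed (fun hMS ↦ ?_) fun hSM ↦ ?_)))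
  · exact hSAC.2 (hC S hSF (hMS.ssubset_of_ne hne.symm))
  · exact hSAC.1 (hA S hSF (hSM.ssubset_of_ne hne))

end Chains

/-! ### Butterfly-free families have few middle members -/

section Butterfly

open Numbering
open scoped Nat

variable {n : ℕ} {F : Finset (Finset (Fin n))} {A B C D M : Finset (Fin n)}

theorem ButterflyFree.eq_or_eq (hF : ButterflyFree F) (hA : A ∈ F) (hB : B ∈ F) (hC : C ∈ F)
    (hD : D ∈ F) (hAC : A ⊂ C) (hAD : A ⊂ D) (hBC : B ⊂ C) (hBD : B ⊂ D) : A = B ∨ C = D := by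
  by_contra! hne
  refine hF {A, B, C, D} ?_ ⟨A, B, C, D, rfl, hne.1, hne.2, hAC, hAD, hBC, hBD⟩
  simp only [insert_subset_iff, singleton_subset_iff]
  exact ⟨hA, hB, hC, hD⟩

theorem ButterflyFree.existsUnique_ssubset (hF : ButterflyFree F) (hM : M ∈ middleMembers F) :
    ∃! A, A ∈ F ∧ A ⊂ M := by
  obtain ⟨hMF, ⟨A, hA, hAM⟩, C, hC, hMC⟩ := mem_middleMembers.1 hM
  refine ⟨A, ⟨hA, hAM⟩, fun B ⟨hB, hBM⟩ ↦ ?_⟩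
  exact (hF.eq_or_eq hB hA hMF hC hBM (hBM.trans hMC) hAM (hAM.trans hMC)).resolve_right hMC.ne

theorem ButterflyFree.existsUnique_ssuperset (hF : ButterflyFree F) (hM : M ∈ middleMembers F) :
    ∃! C, C ∈ F ∧ M ⊂ C := by
  obtain ⟨hMF, ⟨A, hA, hAM⟩, C, hC, hMC⟩ := mem_middleMembers.1 hM
  refine ⟨C, ⟨hC, hMC⟩, fun D ⟨hD, hMD⟩ ↦ ?_⟩
  exact (hF.eq_or_eq hA hMF hD hC (hAM.trans hMD) (hAM.trans hMC) hMD hMC).resolve_left hAM.ne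

theorem ButterflyFree.sum_card_prefixed_inter_le (hF : ButterflyFree F) (hn : 20 ≤ n)
    (hempty : ∅ ∉ F) (huniv : univ ∉ F) (hM : M ∈ middleMembers F) :
    5 * ∑ S ∈ F.erase M, #(prefixed M ∩ prefixed S) ≤ 3 * #(prefixed M) := by
  obtain ⟨A, ⟨hA, hAM⟩, hAuniq⟩ := hF.existsUnique_ssubset hM
  obtain ⟨C, ⟨hC, hMC⟩, hCuniq⟩ := hF.existsUnique_ssuperset hM
  have hAne : A.Nonempty := nonempty_iff_ne_empty.2 (ne_of_mem_of_not_mem hA hempty)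
  have hCne : C ≠ univ := ne_of_mem_of_not_mem hC huniv
  have hsum := sum_erase_card_prefixed_inter_le (fun S hS hSM ↦ hAuniq S ⟨hS, hSM⟩)
    (fun S hS hMS ↦ hCuniq S ⟨hS, hMS⟩) (hAM.trans hMC).ne
  have hlow := card_mul_card_prefixed_inter_le hAne hAM
  have hhigh := card_compl_mul_card_prefixed_inter_le hMC hCne
  have hMcard : 2 ≤ #M := Nat.lt_of_le_of_lt hAne.card_pos (card_lt_card hAM)
  have hMccard : 2 ≤ #Mᶜ :=
    Nat.lt_of_le_of_lt (card_pos.2 (nonempty_iff_ne_empty.2 ((compl_eq_empty_iff C).not.2 hCne)))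
      (card_lt_card (compl_ssubset_compl.2 hMC))
  have hadd : #M + #Mᶜ = n := by rw [card_add_card_compl, Fintype.card_fin]
  obtain h10 | h10 : 10 ≤ #M ∨ 10 ≤ #Mᶜ := by omega
  · have := Nat.mul_le_mul_right #(prefixed A ∩ prefixed M) h10
    have := Nat.mul_le_mul_right #(prefixed M ∩ prefixed C) hMccard
    omega
  · have := Nat.mul_le_mul_right #(prefixed A ∩ prefixed M) hMcard
    have := Nat.mul_le_mul_right #(prefixed M ∩ prefixed C) h10
    omega

theorem ButterflyFree.sum_card_prefixed_le (hF : ButterflyFree F) (hn : 20 ≤ n)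
    (hempty : ∅ ∉ F) (huniv : univ ∉ F) :
    5 * ∑ S ∈ F, #(prefixed S) + 2 * ∑ M ∈ middleMembers F, #(prefixed M) ≤ 10 * n ! := by
  have hchains := sum_card_prefixed_add_le F
  have hinter : ∑ M ∈ middleMembers F, 5 * ∑ S ∈ F.erase M, #(prefixed M ∩ prefixed S) ≤
      ∑ M ∈ middleMembers F, 3 * #(prefixed M) :=
    sum_le_sum fun M hM ↦ hF.sum_card_prefixed_inter_le hn hempty huniv hM
  rw [← mul_sum, ← mul_sum] at hinter
  simp only [Fintype.card_fin] at hchains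
  omega

theorem choose_le_choose_of_le_half {a b : ℕ} (hab : a ≤ b) (hb : b ≤ n / 2) :
    n.choose a ≤ n.choose b := by
  induction b, hab using Nat.le_induction with
  | base => rfl
  | succ b _ ih => exact (ih (by omega)).trans (Nat.choose_le_succ_of_lt_half_left (by omega))

theorem choose_le_choose_half_add_one {j : ℕ} (hj : j ≠ n / 2) :
    n.choose j ≤ n.choose (n / 2 + 1) := by
  obtain ⟨k, rfl | rfl⟩ := Nat.even_or_odd' n
  · obtain hlt | hle := lt_or_ge (2 * k) j
    · rw [Nat.choose_eq_zero_of_lt hlt]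
      exact Nat.zero_le _
    rw [Nat.choose_symm_of_eq_add (show 2 * k = 2 * k / 2 + 1 + (k - 1) by omega)]
    obtain hjk | hkj : j ≤ k - 1 ∨ 2 * k - j ≤ k - 1 := by omega
    · exact choose_le_choose_of_le_half hjk (by omega)
    · rw [← Nat.choose_symm hle]
      exact choose_le_choose_of_le_half hkj (by omega)
  · rw [Nat.choose_symm_of_eq_add (show 2 * k + 1 = (2 * k + 1) / 2 + 1 + (2 * k + 1) / 2 by omega)]
    exact Nat.choose_le_middle _ _

theorem five_mul_choose_half_le (hn : 10 ≤ n) :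
    5 * n.choose (n / 2) ≤ 6 * n.choose (n / 2 + 1) := by
  refine Nat.le_of_mul_le_mul_right ?_ (Nat.succ_pos (n / 2))
  calc 5 * n.choose (n / 2) * (n / 2 + 1)
      = n.choose (n / 2) * (5 * (n / 2 + 1)) := by ring
    _ ≤ n.choose (n / 2) * (6 * (n - n / 2)) := Nat.mul_le_mul_left _ (by omega)
    _ = 6 * (n.choose (n / 2 + 1) * (n / 2 + 1)) := by rw [Nat.choose_succ_right_eq]; ring
    _ = 6 * n.choose (n / 2 + 1) * (n / 2 + 1) := by ring

theorem card_mul_factorial_le {α : Type*} [Fintype α] [DecidableEq α] {F : Finset (Finset α)}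
    {p : ℕ} (hp : ∀ S ∈ F, (Fintype.card α).choose #S ≤ p) :
    #F * (Fintype.card α)! ≤ p * ∑ S ∈ F, #(prefixed S) := by
  rw [mul_sum]
  refine card_nsmul_le_sum F _ _ fun S hS ↦ ?_
  rw [← Nat.choose_mul_factorial_mul_factorial S.card_le_univ, mul_assoc, ← card_prefixed]
  exact Nat.mul_le_mul_right _ (hp S hS)

theorem ButterflyFree.card_slice_mul_add_le (hF : ButterflyFree F) (hn : 20 ≤ n)
    (hempty : ∅ ∉ F) (huniv : univ ∉ F) :
    5 * #(F # (n / 2)) * n.choose (n / 2 + 1) +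
        5 * #(F \ F # (n / 2)) * n.choose (n / 2) +
        2 * #(middleMembers F) * n.choose (n / 2 + 1) ≤
      10 * n.choose (n / 2) * n.choose (n / 2 + 1) := by
  have hchains := hF.sum_card_prefixed_le hn hempty huniv
  have hmiddle := card_mul_factorial_le (F := F # (n / 2)) fun S _ ↦ Nat.choose_le_middle #S _
  have hother := card_mul_factorial_le (F := F \ F # (n / 2)) (p := n.choose (n / 2 + 1))
    fun S hS ↦ by
      rw [Fintype.card_fin]
      refine choose_le_choose_half_add_one fun hcard ↦ ?_
      exact (mem_sdiff.1 hS).2 (mem_slice.2 ⟨(mem_sdiff.1 hS).1, hcard⟩)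
  have hinner := card_mul_factorial_le (F := middleMembers F) fun S _ ↦ Nat.choose_le_middle #S _
  rw [Fintype.card_fin] at hmiddle hother hinner
  rw [← sum_sdiff (slice_subset (𝒜 := F) (r := n / 2))] at hchains
  refine Nat.le_of_mul_le_mul_right ?_ n.factorial_pos
  have := Nat.mul_le_mul_left (5 * n.choose (n / 2 + 1)) hmiddle
  have := Nat.mul_le_mul_left (5 * n.choose (n / 2)) hother
  have := Nat.mul_le_mul_left (2 * n.choose (n / 2 + 1)) hinner
  have := Nat.mul_le_mul_left (n.choose (n / 2) * n.choose (n / 2 + 1)) hchains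
  linarith

theorem ButterflyFree.three_mul_card_add_le (hF : ButterflyFree F) (hn : 20 ≤ n)
    (hempty : ∅ ∉ F) (huniv : univ ∉ F) :
    3 * #F + #(middleMembers F) ≤ 3 * Sigma2 n := by
  have hlevels := hF.card_slice_mul_add_le hn hempty huniv
  have hslice : #(F # (n / 2)) ≤ n.choose (n / 2) := by
    simpa only [Fintype.card_fin] using sized_slice.card_le (𝒜 := F # (n / 2))
  have hcard : #(F \ F # (n / 2)) + #(F # (n / 2)) = #F :=
    card_sdiff_add_card_eq_card slice_subset
  have hmid : n.choose (n / 2 + 1) ≤ n.choose (n / 2) := Nat.choose_le_middle _ _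
  have hratio : 5 * n.choose (n / 2) ≤ 6 * n.choose (n / 2 + 1) :=
    five_mul_choose_half_le (by omega)
  have hpos : 0 < 5 * n.choose (n / 2) := Nat.mul_pos (by norm_num) (Nat.choose_pos (by omega))
  rw [Sigma2, ← hcard]
  refine Nat.le_of_mul_le_mul_left ?_ hpos
  zify at *
  have hexchange := mul_nonneg (sub_nonneg.2 hslice) (sub_nonneg.2 hmid)
  have hweight := mul_le_mul_of_nonneg_left hratio (Nat.cast_nonneg (α := ℤ) #(middleMembers F))
  linarith

end Butterfly

/-! ### Butterfly-free families containing the empty or the full set -/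

section Extremes

variable {n : ℕ} {F G S : Finset (Finset (Fin n))}

theorem compls_levelFam {k : ℕ} (hk : k ≤ n) : (levelFam n k)ᶜˢ = levelFam n (n - k) := by
  ext A
  have := card_add_card_compl A
  rw [Fintype.card_fin] at this
  rw [mem_compls, mem_levelFam, mem_levelFam]
  omega

theorem compls_mem_sigmaStar (hn : 0 < n) (hS : S ∈ SigmaStar n) : Sᶜˢ ∈ SigmaStar n := by
  obtain rfl | rfl := hS
  · rw [compls_union, compls_levelFam (by omega), compls_levelFam (by omega), union_comm]
    refine Or.inr ?_
    rw [show n - (n / 2 + 1) = (n + 1) / 2 - 1 by omega, show n - n / 2 = (n + 1) / 2 by omega]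
    rfl
  · rw [compls_union, compls_levelFam (by omega), compls_levelFam (by omega), union_comm]
    refine Or.inl ?_
    rw [show n - ((n + 1) / 2 - 1) = n / 2 + 1 by omega, show n - (n + 1) / 2 = n / 2 by omega]

theorem exists_eq_levelFam_union_of_mem_sigmaStar (hn : 0 < n) (hS : S ∈ SigmaStar n) :
    ∃ j, n ≤ 2 * j + 2 ∧ 2 * j ≤ n ∧ S = levelFam n j ∪ levelFam n (j + 1) ∧
      n.choose j + n.choose (j + 1) = Sigma2 n := by
  obtain rfl | rfl := hS
  · exact ⟨n / 2, by omega, by omega, rfl, rfl⟩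
  · refine ⟨(n + 1) / 2 - 1, by omega, by omega, ?_, ?_⟩
    · rw [Nat.sub_add_cancel (by omega)]
    · rw [Sigma2, add_comm]
      congr 1 <;> exact Nat.choose_symm_of_eq_add (by omega)

theorem ButterflyFree.compls (hF : ButterflyFree F) : ButterflyFree Fᶜˢ := by
  rintro _ hsub ⟨A, B, C, D, rfl, hAB, hCD, hAC, hAD, hBC, hBD⟩
  simp only [insert_subset_iff, singleton_subset_iff, mem_compls] at hsub
  obtain ⟨hA, hB, hC, hD⟩ := hsub
  obtain h | h := hF.eq_or_eq hC hD hA hB (compl_ssubset_compl.2 hAC) (compl_ssubset_compl.2 hBC)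
    (compl_ssubset_compl.2 hAD) (compl_ssubset_compl.2 hBD)
  · exact hCD (compl_injective h)
  · exact hAB (compl_injective h)

theorem card_add_sub_le_of_subset_levelFam_union {j : ℕ} (hj : 0 < j) (hjn : j < n)
    (hG : G ⊆ levelFam n j ∪ levelFam n (j + 1))
    (huniq : ∀ A ∈ G, ∀ C ∈ G, ∀ D ∈ G, A ⊂ C → A ⊂ D → C = D) :
    #G + (n - j) ≤ n.choose j + n.choose (j + 1) + 1 := by
  by_cases hlow : ∃ A ∈ G, #A = j
  · obtain ⟨A, hA, rfl⟩ := hlow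
    set U := Aᶜ.image (insert · A) with hU
    have hUcard : #U = n - #A := by
      rw [hU, card_image_of_injOn (fun a ha b _ hab ↦ (insert_inj (mem_compl.1 ha)).1 hab),
        card_compl, Fintype.card_fin]
    have hUlevel : U ⊆ levelFam n #A ∪ levelFam n (#A + 1) := image_subset_iff.2 fun a ha ↦
      mem_union_right _ (mem_levelFam.2 (card_insert_of_notMem (mem_compl.1 ha)))
    have hinter : #(G ∩ U) ≤ 1 := card_le_one.2 fun C hC D hD ↦ by
      obtain ⟨hCG, hCU⟩ := mem_inter.1 hC
      obtain ⟨hDG, hDU⟩ := mem_inter.1 hD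
      obtain ⟨c, hc, rfl⟩ := mem_image.1 hCU
      obtain ⟨d, hd, rfl⟩ := mem_image.1 hDU
      exact huniq A hA _ hCG _ hDG (ssubset_insert (mem_compl.1 hc))
        (ssubset_insert (mem_compl.1 hd))
    have hunion := card_le_of_subset_levelFam_union (union_subset hG hUlevel)
    have := card_union_add_card_inter G U
    omega
  · have hGlevel : G ⊆ levelFam n (j + 1) := fun A hA ↦ (mem_union.1 (hG hA)).resolve_left
      fun hAj ↦ hlow ⟨A, hA, mem_levelFam.1 hAj⟩
    have hcard := card_le_card hGlevel
    rw [card_levelFam] at hcard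
    have := le_choose_of_pos_of_lt hj hjn
    omega

theorem ButterflyFree.eq_of_ssubset_of_ssubset (hF : ButterflyFree F) (hempty : ∅ ∈ F)
    {A C D : Finset (Fin n)} (hA : A ∈ F.erase ∅) (hC : C ∈ F.erase ∅) (hD : D ∈ F.erase ∅)
    (hAC : A ⊂ C) (hAD : A ⊂ D) : C = D := by
  have hpos {B : Finset (Fin n)} (hB : B ∈ F.erase ∅) : ∅ ⊂ B :=
    empty_ssubset.2 (nonempty_iff_ne_empty.2 (ne_of_mem_erase hB))
  exact (hF.eq_or_eq hempty (mem_of_mem_erase hA) (mem_of_mem_erase hC) (mem_of_mem_erase hD)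
    (hpos hC) (hpos hD) hAC hAD).resolve_left (hpos hA).ne

theorem ButterflyFree.isTwoSperner_erase_empty (hF : ButterflyFree F) (hempty : ∅ ∈ F) :
    IsTwoSperner (F.erase ∅) := fun _ hA _ hB _ hC hAB hBC ↦
  hBC.ne (hF.eq_of_ssubset_of_ssubset hempty hA hB hC hAB (hAB.trans hBC))

variable {m : ℕ}

theorem IsExpSmall.twenty_le (hm : IsExpSmall n m) (hn : 0 < n) (hm_pos : 1 ≤ m) : 20 ≤ n := by
  by_contra! hlt
  refine (lt_irrefl (24 ^ 6)) ?_
  calc 24 ^ 6 ≤ (24 * n * m) ^ 6 := Nat.pow_le_pow_left (by nlinarith) 6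
    _ < 2 ^ (n / 2) := hm
    _ ≤ 2 ^ 9 := Nat.pow_le_pow_right (by norm_num) (by omega)
    _ ≤ 24 ^ 6 := by norm_num

theorem ButterflyFree.four_mul_card_add_le_of_empty_mem (hF : ButterflyFree F) (hempty : ∅ ∈ F)
    (hn : 0 < n) (hm_pos : 1 ≤ m) (hm : IsExpSmall n m) (hfar : ∀ S ∈ SigmaStar n, m ≤ #(F \ S)) :
    4 * #F + m ≤ 4 * Sigma2 n := by
  have hcard : #(F.erase ∅) + 1 = #F := card_erase_add_one hempty
  have hfar' : ∀ S ∈ SigmaStar n, m ≤ #(F.erase ∅ \ S) + 1 := fun S hS ↦ by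
    have := (hfar S hS).trans (card_sdiff_le_card_sdiff_add F (F.erase ∅) S)
    rwa [sdiff_erase_self hempty, card_singleton, add_comm] at this
  by_cases hall : ∀ S ∈ SigmaStar n, 1 ≤ #(F.erase ∅ \ S)
  · have := (hF.isTwoSperner_erase_empty hempty).card_add_le_sigma2 hn
      (hm.mono (s := max 1 (m - 1)) (by omega)) fun S hS ↦ by
        have := hall S hS
        have := hfar' S hS
        omega
    omega
  · push Not at hall
    obtain ⟨S, hS, hlt⟩ := hall
    have hsub : F.erase ∅ ⊆ S := sdiff_eq_empty_iff_subset.1 (card_eq_zero.1 (by omega))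
    have := hfar' S hS
    have := hm.twenty_le hn hm_pos
    obtain ⟨j, hjlow, hjhigh, rfl, hchoose⟩ := exists_eq_levelFam_union_of_mem_sigmaStar hn hS
    have := card_add_sub_le_of_subset_levelFam_union (by omega) (by omega) hsub
      fun A hA C hC D hD ↦ hF.eq_of_ssubset_of_ssubset hempty hA hC hD
    omega

theorem ButterflyFree.four_mul_card_add_le_of_univ_mem (hF : ButterflyFree F) (huniv : univ ∈ F)
    (hn : 0 < n) (hm_pos : 1 ≤ m) (hm : IsExpSmall n m) (hfar : ∀ S ∈ SigmaStar n, m ≤ #(F \ S)) :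
    4 * #F + m ≤ 4 * Sigma2 n := by
  rw [← card_compls F]
  refine hF.compls.four_mul_card_add_le_of_empty_mem ?_ hn hm_pos hm fun S hS ↦ ?_
  · rwa [mem_compls, compl_empty]
  · rw [← compls_compls S, card_compls_sdiff_compls]
    exact hfar _ (compls_mem_sigmaStar hn hS)

theorem ButterflyFree.four_mul_card_add_le_of_notMem (hF : ButterflyFree F) (hempty : ∅ ∉ F)
    (huniv : univ ∉ F) (hn : 20 ≤ n) (hm : IsExpSmall n m)
    (hfar : ∀ S ∈ SigmaStar n, m ≤ #(F \ S)) : 4 * #F + m ≤ 4 * Sigma2 n := by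
  obtain hmany | hfew := le_or_gt (3 * m) (4 * #(middleMembers F))
  · have := hF.three_mul_card_add_le hn hempty huniv
    omega
  · have hcard := card_sdiff_add_card_eq_card (middleMembers_subset F)
    have := (isTwoSperner_sdiff_middleMembers F).card_add_le_sigma2 (by omega)
      (hm.mono (Nat.sub_le m #(middleMembers F))) fun S hS ↦ by
        have htri := card_sdiff_le_card_sdiff_add F (F \ middleMembers F) S
        rw [Finset.sdiff_sdiff_eq_self (middleMembers_subset F)] at htri
        have := hfar S hS
        omega
    omega

theorem ButterflyFree.four_mul_card_add_le (hF : ButterflyFree F) (hn : 0 < n) (hm_pos : 1 ≤ m)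
    (hm : IsExpSmall n m) (hfar : ∀ S ∈ SigmaStar n, m ≤ #(F \ S)) :
    4 * #F + m ≤ 4 * Sigma2 n := by
  by_cases hempty : ∅ ∈ F
  · exact hF.four_mul_card_add_le_of_empty_mem hempty hn hm_pos hm hfar
  by_cases huniv : univ ∈ F
  · exact hF.four_mul_card_add_le_of_univ_mem huniv hn hm_pos hm hfar
  · exact hF.four_mul_card_add_le_of_notMem hempty huniv (hm.twenty_le hn hm_pos) hm hfar

end Extremes

/-! ### Asymptotics -/

section Asymptotics

open Filter

theorem eventually_isExpSmall {c : ℝ} (hc : c < 1 / 12) :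
    ∀ᶠ n : ℕ in atTop, ∀ m : ℕ, (m : ℝ) ≤ 2 ^ (c * n) → IsExpSmall n m := by
  have hbase : (1 : ℝ) < 2 ^ (1 / 2 - 6 * c) := Real.one_lt_rpow one_lt_two (by linarith)
  have hpoly : ∀ᶠ n : ℕ in atTop, (n : ℝ) ^ 6 / (2 ^ (1 / 2 - 6 * c)) ^ n < 1 / (2 * 24 ^ 6) :=
    (tendsto_pow_const_div_const_pow_of_one_lt 6 hbase).eventually_lt_const (by norm_num)
  filter_upwards [hpoly] with n hn m hm
  have hn6 : (24 * n : ℝ) ^ 6 < 2 ^ ((1 / 2 - 6 * c) * n - 1) := by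
    rw [← Real.rpow_mul_natCast zero_le_two, div_lt_iff₀ (by positivity)] at hn
    rw [Real.rpow_sub_one two_ne_zero, mul_pow]
    linarith
  have hm6 : (m : ℝ) ^ 6 ≤ 2 ^ (6 * c * n) := by
    calc (m : ℝ) ^ 6 ≤ (2 ^ (c * n)) ^ 6 := by gcongr
      _ = 2 ^ (6 * c * n) := by
        rw [← Real.rpow_mul_natCast zero_le_two]
        congr 1
        push_cast
        ring
  have hfloor : (n : ℝ) / 2 - 1 ≤ (n / 2 : ℕ) := by
    have : (n : ℝ) ≤ 2 * (n / 2 : ℕ) + 1 := by exact_mod_cast (by omega : n ≤ 2 * (n / 2) + 1)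
    linarith
  have hreal : (24 * n * m : ℝ) ^ 6 < 2 ^ (n / 2) := by
    calc (24 * n * m : ℝ) ^ 6 = (24 * n) ^ 6 * m ^ 6 := mul_pow _ _ _
      _ ≤ (24 * n) ^ 6 * 2 ^ (6 * c * n) := by gcongr
      _ < 2 ^ ((1 / 2 - 6 * c) * n - 1) * 2 ^ (6 * c * n) := by gcongr
      _ = 2 ^ ((n : ℝ) / 2 - 1) := by
        rw [← Real.rpow_add two_pos]
        ring_nf
      _ ≤ 2 ^ ((n / 2 : ℕ) : ℝ) := Real.rpow_le_rpow_of_exponent_le one_le_two hfloor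
      _ = 2 ^ (n / 2) := Real.rpow_natCast _ _
  rw [IsExpSmall]
  exact_mod_cast hreal

theorem eventually_rpow_one_sub_le {ε c : ℝ} (hε : 0 < ε) (hc : 0 < c) :
    ∀ᶠ n : ℕ in atTop, (n : ℝ) ^ (1 - ε) ≤ c * n := by
  have hlarge : ∀ᶠ n : ℕ in atTop, c⁻¹ ≤ (n : ℝ) ^ ε :=
    ((tendsto_rpow_atTop hε).comp tendsto_natCast_atTop_atTop).eventually_ge_atTop _
  filter_upwards [hlarge, eventually_gt_atTop 0] with n hn hpos
  have hpos' : (0 : ℝ) < n := Nat.cast_pos.2 hpos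
  rw [Real.rpow_sub hpos', Real.rpow_one, div_le_iff₀ (Real.rpow_pos_of_pos hpos' ε)]
  calc (n : ℝ) = c * n * c⁻¹ := by field_simp
    _ ≤ c * n * n ^ ε := by gcongr

theorem butterfly_stability_general {c : ℝ} (hc : c < 1 / 12) :
    ∀ᶠ n : ℕ in atTop, ∀ m : ℕ, 1 ≤ m → (m : ℝ) ≤ 2 ^ (c * n) →
      ∀ F : Finset (Finset (Fin n)), ButterflyFree F → (∀ S ∈ SigmaStar n, m ≤ #(F \ S)) →
        (#F : ℝ) ≤ Sigma2 n - m / 4 := by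
  filter_upwards [eventually_isExpSmall hc, eventually_gt_atTop 0] with n hsmall hn m hm_pos hm F
    hF hfar
  have hcard : (4 * #F + m : ℝ) ≤ 4 * Sigma2 n := by
    exact_mod_cast hF.four_mul_card_add_le hn hm_pos (hsmall m hm) hfar
  linarith

end Asymptotics

/-- Stability of maximum butterfly-free families: if `F` is butterfly-free and differs from
every family of `Σ*(n,2)` in at least `m` sets, then `|F| ≤ Σ(n,2) − m/4`, provided
`1 ≤ m ≤ 2^(n^(1-ε))`. -/
theorem butterfly_stability (ε : ℝ) (hε : 0 < ε ∧ ε < 1) :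
    ∃ n₀ : ℕ, ∀ n : ℕ, n₀ ≤ n → ∀ m : ℕ, 1 ≤ m →
      (m : ℝ) ≤ (2 : ℝ) ^ ((n : ℝ) ^ (1 - ε)) →
      ∀ F : Finset (Finset (Fin n)), ButterflyFree F →
      (∀ S ∈ SigmaStar n, m ≤ (F \ S).card) →
      (F.card : ℝ) ≤ (Sigma2 n : ℝ) - m / 4 := by
  refine Filter.eventually_atTop.1 ?_
  filter_upwards [butterfly_stability_general (c := 1 / 13) (by norm_num),
    eventually_rpow_one_sub_le hε.1 (c := 1 / 13) (by norm_num)] with n hstab hexp m hm_pos hm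
  exact hstab m hm_pos (hm.trans (Real.rpow_le_rpow_of_exponent_le one_le_two hexp))
end

section
/- There exists n₀ such that for every odd n ≥ n₀ and every positive integer m the following holds: if F ⊆ 2^[n] is 2-Sperner and the number of members F ∈ F with |F| ∉ {⌊n/2⌋, ⌈n/2⌉} is at least m, then |F| ≤ Σ(n,2) − 1.9·m/n. -/
/-- A family is 2-Sperner if it contains no chain of three of its members. -/
def TwoSperner {n : ℕ} (F : Finset (Finset (Fin n))) : Prop :=
  ∀ A ∈ F, ∀ B ∈ F, ∀ C ∈ F, ¬ (A ⊂ B ∧ B ⊂ C)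

/-!
The non-minimal members of a 2-Sperner family form an antichain, as do the minimal ones, so the
Lubell–Yamamoto–Meshalkin inequality gives `∑ A ∈ F, 1 / C(n, |A|) ≤ 2`. After multiplication by
the middle binomial coefficient, which for odd `n` is `Σ(n,2) / 2`, every member contributes at
least `1` to the left-hand side, and a member outside the two middle layers at least
`1 + 4 / (n - 1)`.
-/

section Choose

variable {n j : ℕ}

-- The factor `n / 2 + (n % 2 + 1)` is `⌈n / 2⌉ + 1`, split to display its excess over `⌊n / 2⌋`.
theorem choose_mul_le_choose_half_mul_of_lt_half (hj : j < n / 2) :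
    n.choose j * (n / 2 + (n % 2 + 1)) ≤ n.choose (n / 2) * (n / 2) :=
  calc n.choose j * (n / 2 + (n % 2 + 1))
      ≤ n.choose j * (n - j) := by gcongr; omega
    _ = n.choose (j + 1) * (j + 1) := (Nat.choose_succ_right_eq n j).symm
    _ ≤ n.choose (n / 2) * (n / 2) := by
      gcongr
      · exact Nat.choose_le_middle (j + 1) n
      · exact hj

theorem choose_mul_le_choose_half_mul_of_ne (hfloor : j ≠ n / 2) (hceil : j ≠ (n + 1) / 2) :
    n.choose j * (n / 2 + (n % 2 + 1)) ≤ n.choose (n / 2) * (n / 2) := by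
  obtain hjn | hjn := lt_or_ge n j
  · simp [Nat.choose_eq_zero_of_lt hjn]
  obtain hlt | hgt := hfloor.lt_or_gt
  · exact choose_mul_le_choose_half_mul_of_lt_half hlt
  · rw [← Nat.choose_symm hjn]
    exact choose_mul_le_choose_half_mul_of_lt_half (by omega)

theorem Sigma2_eq_two_mul_choose_half_of_odd (hn : Odd n) :
    Sigma2 n = 2 * n.choose (n / 2) := by
  have hsymm : n.choose (n / 2 + 1) = n.choose (n / 2) :=
    Nat.choose_symm_of_eq_add (by have := Nat.odd_iff.mp hn; omega)
  rw [Sigma2, hsymm, two_mul]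

end Choose

section SumInvChoose

variable (𝕜 : Type*) [Field 𝕜] [LinearOrder 𝕜] [IsStrictOrderedRing 𝕜]

theorem half_add_ite_le_half_mul_choose_half_mul_inv_choose {n j : ℕ} (hj : j ≤ n) :
    ((n / 2 : ℕ) : 𝕜) + (if j ≠ n / 2 ∧ j ≠ (n + 1) / 2 then ((n % 2 + 1 : ℕ) : 𝕜) else 0) ≤
      (n / 2 : ℕ) * n.choose (n / 2) * (n.choose j : 𝕜)⁻¹ := by
  have hpos : (0 : 𝕜) < n.choose j := by exact_mod_cast Nat.choose_pos hj
  rw [← div_eq_mul_inv, le_div_iff₀ hpos, mul_comm, mul_comm ((n / 2 : ℕ) : 𝕜)]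
  split_ifs with houter
  · exact_mod_cast choose_mul_le_choose_half_mul_of_ne houter.1 houter.2
  · rw [add_zero]
    gcongr
    exact Nat.choose_le_middle j n

theorem half_mul_card_add_card_outer_le_sum_inv_choose {α : Type*} {n : ℕ}
    {F : Finset (Finset α)} (hF : ∀ A ∈ F, A.card ≤ n) :
    ((n / 2 : ℕ) : 𝕜) * F.card +
        (n % 2 + 1 : ℕ) * (F.filter fun A ↦ A.card ≠ n / 2 ∧ A.card ≠ (n + 1) / 2).card ≤
      (n / 2 : ℕ) * n.choose (n / 2) * ∑ A ∈ F, (n.choose A.card : 𝕜)⁻¹ := by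
  have hsum := Finset.sum_le_sum fun A hA ↦
    half_add_ite_le_half_mul_choose_half_mul_inv_choose 𝕜 (hF A hA)
  rw [← Finset.mul_sum, Finset.sum_add_distrib, ← Finset.sum_filter] at hsum
  simpa only [Finset.sum_const, nsmul_eq_mul, mul_comm] using hsum

end SumInvChoose

namespace TwoSperner

variable {n : ℕ} {F : Finset (Finset (Fin n))}

theorem isAntichain_not_minimal (hF : TwoSperner F) :
    IsAntichain (· ⊆ ·) {A | A ∈ F ∧ ¬ Minimal (· ∈ F) A} := by
  rintro A ⟨hA, hAmin⟩ B ⟨hB, -⟩ hne hAB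
  obtain ⟨C, hCA, hC⟩ := (not_minimal_iff_exists_lt hA).mp hAmin
  exact hF C hC A hA B hB ⟨hCA, hAB.ssubset_of_ne hne⟩

theorem sum_inv_choose_le_two (𝕜 : Type*) [Field 𝕜] [LinearOrder 𝕜] [IsStrictOrderedRing 𝕜]
    (hF : TwoSperner F) : ∑ A ∈ F, (n.choose A.card : 𝕜)⁻¹ ≤ 2 := by
  classical
  have lym (G : Finset (Finset (Fin n))) (hG : IsAntichain (· ⊆ ·) (G : Set (Finset (Fin n)))) :
      ∑ A ∈ G, (n.choose A.card : 𝕜)⁻¹ ≤ 1 := by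
    simpa using Finset.lubell_yamamoto_meshalkin_inequality_sum_inv_choose (𝕜 := 𝕜) hG
  have hmin := lym (F.filter (Minimal (· ∈ F))) <|
    (setOfPred_minimal_antichain (· ∈ F)).subset fun A hA ↦ (Finset.mem_filter.mp hA).2
  have hnonmin := lym (F.filter (¬ Minimal (· ∈ F) ·)) <|
    hF.isAntichain_not_minimal.subset fun A hA ↦ Finset.mem_filter.mp hA
  rw [← Finset.sum_filter_add_sum_filter_not F (Minimal (· ∈ F)), ← one_add_one_eq_two]
  exact add_le_add hmin hnonmin

end TwoSperner

theorem two_sperner_stab_odd_outside_general {n : ℕ} (hn : 1 < n) (hodd : Odd n)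
    {F : Finset (Finset (Fin n))} (hF : TwoSperner F) :
    (F.card : ℝ) ≤ Sigma2 n -
      4 * (F.filter fun A ↦ A.card ≠ n / 2 ∧ A.card ≠ (n + 1) / 2).card / ((n : ℝ) - 1) := by
  have hweight := half_mul_card_add_card_outer_le_sum_inv_choose ℝ (F := F)
    fun A _ ↦ card_finset_fin_le A
  have hlym := hF.sum_inv_choose_le_two ℝ
  have hhalf : ((n / 2 : ℕ) : ℝ) = (n - 1) / 2 := by
    obtain ⟨k, rfl⟩ := hodd
    rw [show (2 * k + 1) / 2 = k by omega]
    push_cast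
    ring
  have hpos : (0 : ℝ) < n - 1 := sub_pos.mpr (by exact_mod_cast hn)
  have hbound := hweight.trans (mul_le_mul_of_nonneg_left hlym (by positivity))
  rw [Nat.odd_iff.mp hodd, hhalf] at hbound
  rw [Sigma2_eq_two_mul_choose_half_of_odd hodd, le_sub_iff_add_le, ← le_sub_iff_add_le',
    div_le_iff₀ hpos]
  push_cast at hbound ⊢
  linarith

/-- For odd `n`: if `F` is 2-Sperner and at least `m` of its members have size different
from `⌊n/2⌋` and `⌈n/2⌉`, then `|F| ≤ Σ(n,2) − 1.9·m/n`. -/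
theorem two_sperner_stab_odd_outside :
    ∃ n₀ : ℕ, ∀ n : ℕ, n₀ ≤ n → Odd n → ∀ m : ℕ, 1 ≤ m →
      ∀ F : Finset (Finset (Fin n)), TwoSperner F →
      m ≤ (F.filter (fun A => A.card ≠ n / 2 ∧ A.card ≠ (n + 1) / 2)).card →
      (F.card : ℝ) ≤ (Sigma2 n : ℝ) - 1.9 * m / n := by
  refine ⟨2, fun n hn hodd m _ F hF hm ↦ (two_sperner_stab_odd_outside_general hn hodd hF).trans ?_⟩
  have hpos : (0 : ℝ) < n - 1 := sub_pos.mpr (by exact_mod_cast hn)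
  gcongr <;> norm_num
end
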